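/- There is a constant C (depending on n, Ω, χ, ψ) such that for every bounded Lipschitz continuous f : ℝⁿ → ℝ the following holds: for every x ∈ ℝⁿ the principal-value limit Tf(x) = lim_{ε→0⁺} ∫_{{y : |x−y|>ε}} H(x,y) f(y) dy exists, and ‖Tf‖_{bmo} ≤ C ‖f‖_{bmo}. -/

import Mathlib

open MeasureTheory Metric Set Filter Topology

/-- The local BMO norm
`‖g‖_{bmo} = sup_{0 < r ≤ 1} ⨍_{B(x,r)} |g − g_{B(x,r)}| + sup_{r > 1} ⨍_{B(x,r)} |g|`. -/
noncomputable def bmoNorm (n : ℕ) (g : EuclideanSpace ℝ (Fin n) → ℝ) : ℝ :=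
  (⨆ p : {p : EuclideanSpace ℝ (Fin n) × ℝ // 0 < p.2 ∧ p.2 ≤ 1},
    ⨍ y in Metric.ball p.1.1 p.1.2, |g y - ⨍ z in Metric.ball p.1.1 p.1.2, g z|) +
  ⨆ p : {p : EuclideanSpace ℝ (Fin n) × ℝ // 1 < p.2},
    ⨍ y in Metric.ball p.1.1 p.1.2, |g y|

/-!
For `0 < s ≤ 1` let `k_s(x, y) = χ(x) χ(y) ψ(y + (x - y) / s) s^{-(n + 1)}` be the contribution of
the scale `s` to `H`. On the support of `χ(x) χ(y)` it lives on `‖x - y‖ ≲ s`, and since `ψ` has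
integral zero, integrating `k_s` in either variable gives `O(1)` instead of `O(1 / s)`.

* Integrating first in space and then in scale gives an absolutely convergent expression. The
  truncation `‖x - y‖ > ε` differs from it by a boundary term which, as `ε → 0`, becomes
  multiplication by a Lipschitz function supported in a ball.
* The pieces `K_j = ∫ k_s ds` over `2⁻ʲ⁻¹ < s ≤ 2⁻ʲ` are Lipschitz at scale `2⁻ʲ` and have integrals
  of size `2⁻ʲ` in each variable, so `K_i` and `K_j` are almost orthogonal: by the Cotlar–Stein
  argument the sums `∑ K_j` are bounded on `L²` uniformly in their length.
* On a ball of radius `r ∼ 2⁻ᴶ`, subtract from `f` its mean on a comparable ball and localise: the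
  `L²` bound and the John–Nirenberg inequality control the oscillation near the ball. Away from it
  only the smooth pieces `j ≤ J` survive, whose oscillation is summed using the means of `f` on
  dyadic balls, which grow at most linearly in the number of scales.
-/

open scoped BoundedContinuousFunction

universe u v

section CotlarStein

theorem sum_mul_le_mul_of_sum_le {ι : Type v} [Fintype ι] {c y : ι → ℝ} {M x : ℝ}
    (hc : ∀ i, 0 ≤ c i) (hM : ∑ i, c i ≤ M) (hx : 0 ≤ x) (hy : ∀ i, y i ≤ x) :
    ∑ i, c i * y i ≤ M * x :=
  calc ∑ i, c i * y i ≤ ∑ i, c i * x := by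
        gcongr with i _
        exacts [hc i, hy i]
    _ = (∑ i, c i) * x := (Finset.sum_mul _ _ _).symm
    _ ≤ M * x := by gcongr

/-- A decomposition of `T` into finitely many terms, each controlled in two ways: by
`‖y * term w‖ ≤ ‖y‖ * weight w` for every `y`, and by the norms `‖a j * term w‖`. The numbers
`majorant j w` dominate the geometric mean of the two controls, and their sums are at most `r`.
For the powers of `(∑ b i) * (∑ a i)` this is the bookkeeping of the Cotlar–Stein argument. -/
structure CotlarDecomposition {A : Type u} [SeminormedRing A] {ι : Type v}
    (a : ι → A) (κ : ℝ) (T : A) (r : ℝ) where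
  Index : Type v
  [fintypeIndex : Fintype Index]
  term : Index → A
  weight : Index → ℝ
  majorant : ι → Index → ℝ
  sum_term : ∑ w, term w = T
  norm_mul_term_le : ∀ y w, ‖y * term w‖ ≤ ‖y‖ * weight w
  weight_nonneg : ∀ w, 0 ≤ weight w
  majorant_nonneg : ∀ j w, 0 ≤ majorant j w
  mul_norm_le_majorant_sq : ∀ j w, κ * weight w * ‖a j * term w‖ ≤ majorant j w ^ 2
  sum_majorant_le : ∀ j, ∑ w, majorant j w ≤ r

namespace CotlarDecomposition

attribute [instance] fintypeIndex

variable {A : Type u} [SeminormedRing A] {ι : Type v} {a b : ι → A} {κ M r : ℝ} {T : A}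

/-- The decomposition of the empty product. -/
def one (ha : ∀ i, ‖a i‖ ≤ κ) (hκ : 0 ≤ κ) : CotlarDecomposition a κ 1 κ where
  Index := PUnit
  term _ := 1
  weight _ := 1
  majorant _ _ := κ
  sum_term := by simp
  norm_mul_term_le y _ := by simp
  weight_nonneg _ := zero_le_one
  majorant_nonneg _ _ := hκ
  mul_norm_le_majorant_sq j _ := by
    simpa [sq] using mul_le_mul_of_nonneg_left (ha j) hκ
  sum_majorant_le _ := by simp

/-- Multiplying a decomposed element on the left by `(∑ b i) * (∑ a i)`: a term becomes
`b i * a k * term w`, which is estimated both through `‖b i * a k‖` and, after multiplication by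
`a j`, through `‖a j * b i‖`. -/
def sumMulSum [Fintype ι] (D : CotlarDecomposition a κ T r) (hr : 0 ≤ r) (hκ : 0 ≤ κ)
    {c : ι → ι → ℝ} (hc : ∀ i j, 0 ≤ c i j)
    (hba : ∀ i j, ‖b i * a j‖ ≤ c i j ^ 2) (hab : ∀ i j, ‖a i * b j‖ ≤ c i j ^ 2)
    (hM : ∀ i, ∑ j, c i j ≤ M) (hM0 : 0 ≤ M) :
    CotlarDecomposition a κ ((∑ i, b i) * (∑ i, a i) * T) (M ^ 2 * r) where
  Index := (ι × ι) × D.Index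
  term w := b w.1.1 * a w.1.2 * D.term w.2
  weight w := c w.1.1 w.1.2 ^ 2 * D.weight w.2
  majorant j w := c j w.1.1 * (c w.1.1 w.1.2 * D.majorant w.1.2 w.2)
  sum_term := by
    calc ∑ w : (ι × ι) × D.Index, b w.1.1 * a w.1.2 * D.term w.2
        = ∑ i, ∑ j, b i * a j * ∑ w, D.term w := by
          simp only [Fintype.sum_prod_type, Finset.mul_sum]
      _ = (∑ i, b i) * (∑ i, a i) * T := by
          rw [Finset.sum_mul_sum]
          simp only [Finset.sum_mul, D.sum_term]
  norm_mul_term_le y w := by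
    rw [← mul_assoc, ← mul_assoc]
    refine (D.norm_mul_term_le _ _).trans ?_
    rw [mul_assoc y, ← mul_assoc ‖y‖]
    gcongr
    · exact D.weight_nonneg _
    · exact (norm_mul_le _ _).trans (by gcongr; exact hba _ _)
  weight_nonneg w := mul_nonneg (sq_nonneg _) (D.weight_nonneg _)
  majorant_nonneg j w := mul_nonneg (hc _ _) (mul_nonneg (hc _ _) (D.majorant_nonneg _ _))
  mul_norm_le_majorant_sq := by
    rintro j ⟨⟨i, k⟩, w⟩
    have hnorm : ‖a j * (b i * a k * D.term w)‖ ≤ c j i ^ 2 * ‖a k * D.term w‖ := by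
      rw [mul_assoc, ← mul_assoc (a j)]
      exact (norm_mul_le _ _).trans (by gcongr; exact hab j i)
    have hweight := D.weight_nonneg w
    calc κ * (c i k ^ 2 * D.weight w) * ‖a j * (b i * a k * D.term w)‖
        ≤ κ * (c i k ^ 2 * D.weight w) * (c j i ^ 2 * ‖a k * D.term w‖) := by gcongr
      _ = c j i ^ 2 * (c i k ^ 2 * (κ * D.weight w * ‖a k * D.term w‖)) := by ring
      _ ≤ c j i ^ 2 * (c i k ^ 2 * D.majorant k w ^ 2) := by
          gcongr; exact D.mul_norm_le_majorant_sq k w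
      _ = (c j i * (c i k * D.majorant k w)) ^ 2 := by ring
  sum_majorant_le j := by
    simp only [Fintype.sum_prod_type, ← Finset.mul_sum]
    rw [sq, mul_assoc]
    exact sum_mul_le_mul_of_sum_le (hc j) (hM j) (by positivity)
      fun i ↦ sum_mul_le_mul_of_sum_le (hc i) (hM i) hr D.sum_majorant_le

theorem nonempty_sum_mul_sum_pow [Fintype ι] (ha : ∀ i, ‖a i‖ ≤ κ) (hκ : 0 ≤ κ)
    {c : ι → ι → ℝ} (hc : ∀ i j, 0 ≤ c i j)
    (hba : ∀ i j, ‖b i * a j‖ ≤ c i j ^ 2) (hab : ∀ i j, ‖a i * b j‖ ≤ c i j ^ 2)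
    (hM : ∀ i, ∑ j, c i j ≤ M) (hM0 : 0 ≤ M) (m : ℕ) :
    Nonempty (CotlarDecomposition a κ (((∑ i, b i) * ∑ i, a i) ^ m) ((M ^ 2) ^ m * κ)) := by
  induction m with
  | zero => simpa using ⟨one ha hκ⟩
  | succ m ih =>
    obtain ⟨D⟩ := ih
    rw [pow_succ', pow_succ', mul_assoc (M ^ 2)]
    exact ⟨D.sumMulSum (by positivity) hκ hc hba hab hM hM0⟩

theorem norm_mul_le (D : CotlarDecomposition a κ T r) (ha : ∀ i, ‖a i‖ ≤ κ) (j : ι) :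
    ‖a j * T‖ ≤ r := by
  rw [← D.sum_term, Finset.mul_sum]
  refine (norm_sum_le _ _).trans ((Finset.sum_le_sum fun w _ ↦ ?_).trans (D.sum_majorant_le j))
  refine (pow_le_pow_iff_left₀ (norm_nonneg _) (D.majorant_nonneg j w) two_ne_zero).1 ?_
  calc ‖a j * D.term w‖ ^ 2 ≤ ‖a j‖ * D.weight w * ‖a j * D.term w‖ := by
        rw [sq]; gcongr; exact D.norm_mul_term_le _ _
    _ ≤ κ * D.weight w * ‖a j * D.term w‖ := by
        gcongr
        exacts [D.weight_nonneg w, ha j]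
    _ ≤ D.majorant j w ^ 2 := D.mul_norm_le_majorant_sq j w

end CotlarDecomposition

theorem exists_norm_sum_mul_sum_pow_le {A : Type u} [SeminormedRing A] {ι : Type v} [Fintype ι]
    {a b : ι → A} {c : ι → ι → ℝ} {M : ℝ} (hc : ∀ i j, 0 ≤ c i j)
    (hba : ∀ i j, ‖b i * a j‖ ≤ c i j ^ 2) (hab : ∀ i j, ‖a i * b j‖ ≤ c i j ^ 2)
    (hM : ∀ i, ∑ j, c i j ≤ M) (hM0 : 0 ≤ M) :
    ∃ G, 0 ≤ G ∧ ∀ m : ℕ, ‖((∑ i, b i) * ∑ i, a i) ^ (m + 1)‖ ≤ G * (M ^ 2) ^ m := by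
  set κ := ∑ i, ‖a i‖
  have hκ : 0 ≤ κ := by positivity
  have ha i : ‖a i‖ ≤ κ :=
    Finset.single_le_sum (f := fun i ↦ ‖a i‖) (fun i _ ↦ norm_nonneg _) (Finset.mem_univ i)
  refine ⟨‖∑ i, b i‖ * ∑ _i : ι, κ, by positivity, fun m ↦ ?_⟩
  set P := (∑ i, b i) * ∑ i, a i
  obtain ⟨decomposition⟩ :=
    CotlarDecomposition.nonempty_sum_mul_sum_pow ha hκ hc hba hab hM hM0 m
  calc ‖P ^ (m + 1)‖ = ‖(∑ i, b i) * ∑ j, a j * P ^ m‖ := by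
        rw [pow_succ', ← Finset.sum_mul, ← mul_assoc]
    _ ≤ ‖∑ i, b i‖ * ‖∑ j, a j * P ^ m‖ := norm_mul_le _ _
    _ ≤ ‖∑ i, b i‖ * ∑ _j : ι, (M ^ 2) ^ m * κ := by
        gcongr
        exact (norm_sum_le _ _).trans (Finset.sum_le_sum fun j _ ↦ decomposition.norm_mul_le ha j)
    _ = ‖∑ i, b i‖ * (∑ _i : ι, κ) * (M ^ 2) ^ m := by rw [← Finset.mul_sum]; ring

theorem apply_one_le_of_log_convex {μ : ℕ → ℝ} {C ρ : ℝ} (hμ : ∀ m, 0 ≤ μ m)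
    (hconvex : ∀ m, μ (m + 1) ^ 2 ≤ μ m * μ (m + 2)) (hρ : 0 ≤ ρ)
    (hgrowth : ∀ m, μ (m + 1) ≤ C * ρ ^ m) : μ 1 ≤ ρ * μ 0 := by
  by_contra! hcon
  have hμ0 : 0 < μ 0 := by
    refine (hμ 0).lt_of_ne fun h ↦ ?_
    have := hconvex 0
    rw [← h] at this hcon
    simp only [zero_add, zero_mul, mul_zero] at this hcon
    nlinarith
  set r := μ 1 / μ 0
  have hρr : ρ < r := (lt_div_iff₀ hμ0).2 hcon
  have hr0 : 0 < r := hρ.trans_lt hρr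
  have hratio (m : ℕ) : 0 < μ m ∧ r * μ m ≤ μ (m + 1) := by
    induction m with
    | zero => exact ⟨hμ0, (div_mul_cancel₀ _ hμ0.ne').le⟩
    | succ m ih =>
      refine ⟨(mul_pos hr0 ih.1).trans_le ih.2, le_of_mul_le_mul_left ?_ ih.1⟩
      have := hconvex m
      nlinarith [hμ (m + 1)]
  have hgeom (m : ℕ) : μ 0 * r ^ m ≤ μ m := by
    induction m with
    | zero => simp
    | succ m ih => rw [pow_succ]; nlinarith [(hratio m).2]
  have hlim : Tendsto (fun m : ℕ ↦ C * (ρ / r) ^ m) atTop (𝓝 (C * 0)) :=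
    (tendsto_pow_atTop_nhds_zero_of_lt_one (by positivity) (by rwa [div_lt_one hr0])).const_mul _
  have hle : μ 0 * r ≤ C * 0 := by
    refine ge_of_tendsto' hlim fun m ↦ ?_
    rw [div_pow, ← mul_div_assoc C, le_div_iff₀ (by positivity)]
    calc μ 0 * r * r ^ m = μ 0 * r ^ (m + 1) := by ring
      _ ≤ C * ρ ^ m := (hgeom (m + 1)).trans (hgrowth m)
  linarith [mul_pos hμ0 hr0]

variable {F : Type*} [SeminormedAddCommGroup F] [NormedSpace ℝ F]

/-- Krein's lemma: if `S` and `S'` are adjoint for a bounded positive form, the growth of the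
powers of `S' * S` in the ambient norm bounds `S` in the seminorm of the form. -/
theorem apply_apply_le_of_norm_pow_le (B : F →ₗ[ℝ] F →ₗ[ℝ] ℝ) (hsymm : ∀ f g, B f g = B g f)
    (hpos : ∀ f, 0 ≤ B f f) {D : ℝ} (hD : ∀ f g, B f g ≤ D * ‖f‖ * ‖g‖) (hD0 : 0 ≤ D)
    {S S' : F →L[ℝ] F} (hadj : ∀ f g, B (S f) g = B f (S' g)) {G ρ : ℝ} (hρ : 0 ≤ ρ)
    (hgrowth : ∀ m : ℕ, ‖(S' * S) ^ (m + 1)‖ ≤ G * ρ ^ m) (f : F) :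
    B (S f) (S f) ≤ ρ * B f f := by
  set P := S' * S
  have hsymmP f g : B (P f) g = B f (P g) := by
    rw [mul_apply_eq_comp, mul_apply_eq_comp, hsymm, ← hadj, hsymm, hadj]
  set μ : ℕ → ℝ := fun m ↦ B ((P ^ m) f) f with hμ
  have hB (k l : ℕ) : B ((P ^ k) f) ((P ^ l) f) = μ (k + l) := by
    induction l generalizing k with
    | zero => simp [hμ]
    | succ l ih =>
      rw [pow_succ' P l, mul_apply_eq_comp, ← hsymmP, ← mul_apply_eq_comp,
        ← pow_succ', ih, add_right_comm, add_assoc]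
  have hBS (k l : ℕ) : B (S ((P ^ k) f)) (S ((P ^ l) f)) = μ (k + l + 1) := by
    rw [hadj, ← mul_apply_eq_comp S', ← mul_apply_eq_comp,
      ← pow_succ', hB, add_assoc]
  have cauchy_schwarz f g : B f g ^ 2 ≤ B f f * B g g := by
    have := LinearMap.BilinForm.apply_mul_apply_le_of_forall_zero_le B hpos f g
    rwa [hsymm g f, ← sq] at this
  have hnonneg (m : ℕ) : 0 ≤ μ m := by
    rcases Nat.even_or_odd' m with ⟨k, rfl | rfl⟩
    · rw [two_mul, ← hB]; exact hpos _
    · rw [two_mul, ← hBS]; exact hpos _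
  have hconvex (m : ℕ) : μ (m + 1) ^ 2 ≤ μ m * μ (m + 2) := by
    rcases Nat.even_or_odd' m with ⟨k, rfl | rfl⟩
    · convert cauchy_schwarz ((P ^ k) f) ((P ^ (k + 1)) f) using 2 <;> simp only [hB] <;> ring_nf
    · convert cauchy_schwarz (S ((P ^ k) f)) (S ((P ^ (k + 1)) f)) using 2 <;>
        simp only [hBS] <;> ring_nf
  have hbound (m : ℕ) : μ (m + 1) ≤ (D * G * ‖f‖ ^ 2) * ρ ^ m :=
    calc μ (m + 1) ≤ D * ‖(P ^ (m + 1)) f‖ * ‖f‖ := hD _ _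
      _ ≤ D * (G * ρ ^ m * ‖f‖) * ‖f‖ := by
        gcongr; exact (P ^ (m + 1)).le_of_opNorm_le (hgrowth m) f
      _ = (D * G * ‖f‖ ^ 2) * ρ ^ m := by ring
  have hle := apply_one_le_of_log_convex hnonneg hconvex hρ hbound
  rwa [← hBS 0 0, ← hB 0 0, pow_zero, one_apply_eq_self] at hle

/-- The Cotlar–Stein lemma with the almost orthogonality measured in a norm unrelated to `B`. -/
theorem apply_sum_sum_le_of_almost_orthogonal {ι : Type v} [Fintype ι]
    (B : F →ₗ[ℝ] F →ₗ[ℝ] ℝ) (hsymm : ∀ f g, B f g = B g f) (hpos : ∀ f, 0 ≤ B f f)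
    {D : ℝ} (hD : ∀ f g, B f g ≤ D * ‖f‖ * ‖g‖) (hD0 : 0 ≤ D)
    {a b : ι → F →L[ℝ] F} (hadj : ∀ i f g, B (a i f) g = B f (b i g))
    {c : ι → ι → ℝ} (hc : ∀ i j, 0 ≤ c i j)
    (hba : ∀ i j, ‖b i * a j‖ ≤ c i j ^ 2) (hab : ∀ i j, ‖a i * b j‖ ≤ c i j ^ 2)
    {M : ℝ} (hM : ∀ i, ∑ j, c i j ≤ M) (hM0 : 0 ≤ M) (f : F) :
    B ((∑ i, a i) f) ((∑ i, a i) f) ≤ M ^ 2 * B f f := by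
  obtain ⟨G, -, hG⟩ := exists_norm_sum_mul_sum_pow_le hc hba hab hM hM0
  refine apply_apply_le_of_norm_pow_le B hsymm hpos hD hD0 (S' := ∑ i, b i) (fun f g ↦ ?_)
    (sq_nonneg M) hG f
  simp only [sum_apply, map_sum, LinearMap.sum_apply, hadj]

end CotlarStein

open scoped Pointwise

section SetAverage

variable {X : Type*} [MeasurableSpace X] {μ : Measure X} {s : Set X} {f : X → ℝ}

theorem setIntegral_sub_const (hs : μ s ≠ ⊤) (hf : IntegrableOn f s μ) (m : ℝ) :
    ∫ x in s, (f x - m) ∂μ = μ.real s * (⨍ x in s, f x ∂μ - m) := by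
  rw [integral_sub hf (integrableOn_const hs), setIntegral_const, mul_sub, smul_eq_mul,
    ← measure_smul_setAverage f hs, smul_eq_mul]

theorem measureReal_mul_abs_setAverage_sub_le (hs : μ s ≠ ⊤) (hf : IntegrableOn f s μ) (m : ℝ) :
    μ.real s * |⨍ x in s, f x ∂μ - m| ≤ ∫ x in s, |f x - m| ∂μ := by
  rw [← abs_of_nonneg (measureReal_nonneg (μ := μ) (s := s)), ← abs_mul,
    ← setIntegral_sub_const hs hf]
  exact abs_integral_le_integral_abs

theorem setIntegral_abs_sub_setAverage_le (hs : μ s ≠ ⊤) (hf : IntegrableOn f s μ) (m : ℝ) :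
    ∫ x in s, |f x - ⨍ y in s, f y ∂μ| ∂μ ≤ 2 * ∫ x in s, |f x - m| ∂μ := by
  have hconst (c : ℝ) : IntegrableOn (fun _ ↦ c) s μ := integrableOn_const hs
  have habs (c : ℝ) : IntegrableOn (fun x ↦ |f x - c|) s μ := (hf.sub (hconst c)).abs
  calc ∫ x in s, |f x - ⨍ y in s, f y ∂μ| ∂μ
      ≤ ∫ x in s, (|f x - m| + |⨍ y in s, f y ∂μ - m|) ∂μ := by
        refine integral_mono (habs _) ((habs _).add (hconst _)) fun x ↦ ?_
        simpa only [abs_sub_comm m] using abs_sub_le (f x) m (⨍ y in s, f y ∂μ)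
    _ = (∫ x in s, |f x - m| ∂μ) + μ.real s * |⨍ y in s, f y ∂μ - m| := by
        rw [integral_add (habs _) (hconst _), setIntegral_const, smul_eq_mul]
    _ ≤ 2 * ∫ x in s, |f x - m| ∂μ := by
        linarith [measureReal_mul_abs_setAverage_sub_le hs hf m]

theorem setIntegral_sub_sq_eq (hs : μ s ≠ ⊤) (hf : IntegrableOn f s μ)
    (hf_sq : IntegrableOn (fun x ↦ f x ^ 2) s μ) (m : ℝ) :
    ∫ x in s, (f x - m) ^ 2 ∂μ =
      (∫ x in s, (f x - ⨍ y in s, f y ∂μ) ^ 2 ∂μ) + μ.real s * (⨍ x in s, f x ∂μ - m) ^ 2 := by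
  have expand (c : ℝ) : ∫ x in s, (f x - c) ^ 2 ∂μ =
      (∫ x in s, f x ^ 2 ∂μ) - 2 * c * (μ.real s * ⨍ x in s, f x ∂μ) + μ.real s * c ^ 2 := by
    have hsq x : (f x - c) ^ 2 = f x ^ 2 - 2 * c * f x + c ^ 2 := by ring
    have hsub : IntegrableOn (fun x ↦ f x ^ 2 - 2 * c * f x) s μ := hf_sq.sub (hf.const_mul _)
    simp only [hsq]
    rw [integral_add hsub (integrableOn_const hs),
      integral_sub hf_sq (hf.const_mul _), integral_const_mul, setIntegral_const,
      ← measure_smul_setAverage f hs, smul_eq_mul, smul_eq_mul]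
  rw [expand, expand]
  ring

theorem setIntegral_sub_setAverage_sq_le_of_abs_le (hs : μ s ≠ ⊤) (hf : IntegrableOn f s μ) {M : ℝ}
    (hM : ∀ x, |f x| ≤ M) :
    ∫ x in s, (f x - ⨍ y in s, f y ∂μ) ^ 2 ∂μ ≤ M ^ 2 * μ.real s := by
  have hle x : f x ^ 2 ≤ M ^ 2 := by rw [← sq_abs]; gcongr; exact hM x
  have hconst : IntegrableOn (fun _ ↦ M ^ 2) s μ := integrableOn_const hs
  have hf_sq : IntegrableOn (fun x ↦ f x ^ 2) s μ :=
    hconst.mono' (hf.aestronglyMeasurable.pow 2) (.of_forall fun x ↦ by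
      rw [Real.norm_of_nonneg (sq_nonneg _)]; exact hle x)
  have hvar := setIntegral_sub_sq_eq hs hf hf_sq 0
  simp only [sub_zero] at hvar
  calc ∫ x in s, (f x - ⨍ y in s, f y ∂μ) ^ 2 ∂μ ≤ ∫ x in s, f x ^ 2 ∂μ := by
        rw [hvar]; exact le_add_of_nonneg_right (by positivity)
    _ ≤ ∫ _ in s, M ^ 2 ∂μ := integral_mono hf_sq hconst hle
    _ = M ^ 2 * μ.real s := by rw [setIntegral_const, smul_eq_mul, mul_comm]

theorem setIntegral_sub_sq_le_mul_of_lt (hs : μ s ≠ ⊤) (hf : IntegrableOn f s μ)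
    (hf_sq : IntegrableOn (fun x ↦ f x ^ 2) s μ) {m l β V : ℝ} (hl : 0 < l) (hV : 0 ≤ V)
    (hlow : l * μ.real s < ∫ x in s, |f x - m| ∂μ)
    (hup : ∫ x in s, |f x - m| ∂μ ≤ β * l * μ.real s)
    (hvar : ∫ x in s, (f x - ⨍ y in s, f y ∂μ) ^ 2 ∂μ ≤ V * μ.real s) :
    ∫ x in s, (f x - m) ^ 2 ∂μ ≤ (V + (β * l) ^ 2) / l * ∫ x in s, |f x - m| ∂μ := by
  set I := ∫ x in s, |f x - m| ∂μ
  have hpos : 0 < μ.real s := by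
    refine measureReal_nonneg.lt_of_ne fun h ↦ ?_
    rw [← h, mul_zero] at hlow hup
    exact (hlow.trans_le hup).false
  have hmean : |⨍ x in s, f x ∂μ - m| ≤ β * l := by
    refine le_of_mul_le_mul_left ?_ hpos
    linarith [measureReal_mul_abs_setAverage_sub_le hs hf m]
  have hmean_sq : (⨍ x in s, f x ∂μ - m) ^ 2 ≤ (β * l) ^ 2 := by
    rw [← sq_abs]; gcongr
  calc ∫ x in s, (f x - m) ^ 2 ∂μ
      ≤ V * μ.real s + μ.real s * (β * l) ^ 2 := by
        rw [setIntegral_sub_sq_eq hs hf hf_sq]; gcongr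
    _ = (V + (β * l) ^ 2) * μ.real s := by ring
    _ ≤ (V + (β * l) ^ 2) * (I / l) := by
        gcongr; rw [le_div_iff₀ hl]; linarith
    _ = (V + (β * l) ^ 2) / l * I := by ring

theorem setIntegral_sub_sq_le_of_forall_abs_sub_le (hs : μ s ≠ ⊤) (hs_meas : MeasurableSet s)
    (hf : IntegrableOn f s μ) {m l : ℝ} (hosc : ∀ x ∈ s, ∀ y ∈ s, |f x - f y| ≤ l)
    (hup : ∫ x in s, |f x - m| ∂μ ≤ l * μ.real s) :
    ∫ x in s, (f x - m) ^ 2 ∂μ ≤ 4 * l ^ 2 * μ.real s := by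
  rcases (measureReal_nonneg (μ := μ) (s := s)).eq_or_lt with hzero | hpos
  · have : μ s = 0 := (measureReal_eq_zero_iff hs).1 hzero.symm
    simp [setIntegral_measure_zero _ this, ← hzero]
  have hle : ∀ x ∈ s, (f x - m) ^ 2 ≤ 4 * l ^ 2 := fun x hx ↦ by
    have hmean : μ.real s * (|f x - m| - l) ≤ ∫ y in s, |f y - m| ∂μ := by
      rw [← smul_eq_mul, ← setIntegral_const]
      refine setIntegral_mono_on (integrableOn_const hs)
        (hf.sub (integrableOn_const hs)).abs hs_meas fun y hy ↦ ?_
      linarith [hosc x hx y hy, abs_sub_le (f x) (f y) m]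
    have hpoint : |f x - m| - l ≤ l := le_of_mul_le_mul_left (by linarith) hpos
    rw [← sq_abs]
    nlinarith [abs_nonneg (f x - m)]
  calc ∫ x in s, (f x - m) ^ 2 ∂μ ≤ ∫ x in s, 4 * l ^ 2 ∂μ :=
        integral_mono_of_nonneg (.of_forall fun x ↦ sq_nonneg _) (integrableOn_const hs)
          ((ae_restrict_iff' hs_meas).2 (.of_forall hle))
    _ = 4 * l ^ 2 * μ.real s := by rw [setIntegral_const, smul_eq_mul, mul_comm]

theorem setIntegral_sub_sq_le_of_subset {t : Set X} (hst : s ⊆ t) (ht : μ t ≠ ⊤)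
    (hf : IntegrableOn f t μ) (hf_sq : IntegrableOn (fun x ↦ f x ^ 2) t μ) {m q α V : ℝ}
    (hm : ∫ x in s, |f x - m| ∂μ ≤ α * μ.real s)
    (hq : ∫ x in t, (f x - q) ^ 2 ∂μ ≤ V * μ.real s) :
    ∫ x in s, (f x - m) ^ 2 ∂μ ≤ (V + α ^ 2) * μ.real s := by
  have hs : μ s ≠ ⊤ := measure_ne_top_of_subset hst ht
  have hfs := hf.mono_set hst
  have hvar := setIntegral_sub_sq_eq hs hfs (hf_sq.mono_set hst)
  rcases (measureReal_nonneg (μ := μ) (s := s)).eq_or_lt with hzero | hpos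
  · have : μ s = 0 := (measureReal_eq_zero_iff hs).1 hzero.symm
    simp [setIntegral_measure_zero _ this, ← hzero]
  have hmean : |⨍ x in s, f x ∂μ - m| ≤ α := le_of_mul_le_mul_left
    (((measureReal_mul_abs_setAverage_sub_le hs hfs m).trans hm).trans_eq (mul_comm _ _)) hpos
  have hmean_sq : (⨍ x in s, f x ∂μ - m) ^ 2 ≤ α ^ 2 := by rw [← sq_abs]; gcongr
  have hsq : IntegrableOn (fun x ↦ (f x - q) ^ 2) t μ := by
    have hexpand x : (f x - q) ^ 2 = f x ^ 2 - 2 * q * f x + q ^ 2 := by ring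
    simp only [hexpand]
    exact (hf_sq.sub (hf.const_mul _)).add (integrableOn_const ht)
  calc ∫ x in s, (f x - m) ^ 2 ∂μ
      = (∫ x in s, (f x - ⨍ y in s, f y ∂μ) ^ 2 ∂μ) +
          μ.real s * (⨍ x in s, f x ∂μ - m) ^ 2 := hvar m
    _ ≤ (∫ x in s, (f x - q) ^ 2 ∂μ) + μ.real s * α ^ 2 := by
        gcongr ?_ + μ.real s * ?_
        exact (le_add_of_nonneg_right (by positivity)).trans_eq (hvar q).symm
    _ ≤ V * μ.real s + μ.real s * α ^ 2 := by
        gcongr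
        exact (setIntegral_mono_set hsq (.of_forall fun _ ↦ sq_nonneg _) hst.eventuallyLE).trans hq
    _ = (V + α ^ 2) * μ.real s := by ring

end SetAverage

section LinearCube

variable {E : Type*} [NormedAddCommGroup E] [NormedSpace ℝ E] {k : ℕ}
  (L : E ≃L[ℝ] (Fin k → ℝ)) (c : Fin k → ℝ) {h : ℝ}

/-- The half-open cube with corner `c` and side `h` in the coordinates `L`. -/
def linearCube (h : ℝ) : Set E := {x | ∀ i, L x i ∈ Ico (c i) (c i + h)}

/-- The corner of the dyadic child of a cube of corner `c` and side `h` indexed by `e`. -/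
noncomputable def childCorner (h : ℝ) (e : Fin k → Bool) : Fin k → ℝ :=
  fun i ↦ c i + if e i then h / 2 else 0

theorem linearCube_eq_preimage (h : ℝ) :
    linearCube L c h = L ⁻¹' univ.pi fun i ↦ Ico (c i) (c i + h) := by
  ext x; simp [linearCube]

theorem norm_sub_le_of_mem_linearCube (hh : 0 ≤ h) {x y : E} (hx : x ∈ linearCube L c h)
    (hy : y ∈ linearCube L c h) : ‖x - y‖ ≤ ‖(L.symm : (Fin k → ℝ) →L[ℝ] E)‖ * h := by
  have hcoord : ‖L (x - y)‖ ≤ h := by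
    refine (pi_norm_le_iff_of_nonneg hh).2 fun i ↦ ?_
    obtain ⟨hx₁, hx₂⟩ := hx i
    obtain ⟨hy₁, hy₂⟩ := hy i
    rw [map_sub, Pi.sub_apply, Real.norm_eq_abs, abs_le]
    constructor <;> linarith
  simpa using (L.symm : (Fin k → ℝ) →L[ℝ] E).le_of_opNorm_le_of_le le_rfl hcoord

theorem symm_mem_linearCube (hh : 0 < h) : L.symm c ∈ linearCube L c h := fun i ↦ by
  simpa using hh

theorem linearCube_subset_ball (hh : 0 < h) :
    linearCube L c h ⊆ ball (L.symm c) ((‖(L.symm : (Fin k → ℝ) →L[ℝ] E)‖ + 1) * h) := fun x hx ↦ by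
  rw [mem_ball, dist_eq_norm]
  linarith [norm_sub_le_of_mem_linearCube L c hh.le hx (symm_mem_linearCube L c hh)]

theorem ball_subset_linearCube (x : E) {r : ℝ} (hr : 0 < r) :
    ball x r ⊆ linearCube L (fun i ↦ L x i - (‖(L : E →L[ℝ] (Fin k → ℝ))‖ + 1) * r)
      (2 * (‖(L : E →L[ℝ] (Fin k → ℝ))‖ + 1) * r) := fun y hy i ↦ by
  rw [mem_ball, dist_eq_norm] at hy
  have hcoord : |L y i - L x i| ≤ ‖(L : E →L[ℝ] (Fin k → ℝ))‖ * r := by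
    rw [← Real.norm_eq_abs, ← Pi.sub_apply, ← map_sub]
    exact (norm_le_pi_norm _ i).trans ((L : E →L[ℝ] (Fin k → ℝ)).le_of_opNorm_le_of_le le_rfl hy.le)
  obtain ⟨h₁, h₂⟩ := abs_le.1 hcoord
  constructor <;> linarith

theorem iUnion_linearCube_childCorner (h : ℝ) :
    ⋃ e, linearCube L (childCorner c h e) (h / 2) = linearCube L c h := by
  ext x
  simp only [mem_iUnion]
  refine ⟨fun ⟨e, he⟩ i ↦ ?_, fun hx ↦ ⟨fun i ↦ decide (c i + h / 2 ≤ L x i), fun i ↦ ?_⟩⟩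
  · obtain ⟨h₁, h₂⟩ := he i
    simp only [childCorner] at h₁ h₂
    split_ifs at h₁ h₂ <;> constructor <;> linarith
  · obtain ⟨h₁, h₂⟩ := hx i
    simp only [childCorner, decide_eq_true_eq]
    split_ifs <;> constructor <;> linarith

theorem pairwise_disjoint_linearCube_childCorner (h : ℝ) :
    Pairwise (Function.onFun Disjoint fun e ↦ linearCube L (childCorner c h e) (h / 2)) := by
  intro e e' hne
  refine Set.disjoint_left.2 fun x hx hx' ↦ hne (funext fun i ↦ ?_)
  obtain ⟨h₁, h₂⟩ := hx i
  obtain ⟨h₃, h₄⟩ := hx' i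
  simp only [childCorner] at h₁ h₂ h₃ h₄
  cases he : e i <;> cases he' : e' i <;> simp only [he, he', if_true, Bool.false_eq_true,
    if_false] at h₁ h₂ h₃ h₄ ⊢ <;> linarith

variable [MeasureSpace E]

theorem measurableSet_linearCube [BorelSpace E] (h : ℝ) : MeasurableSet (linearCube L c h) := by
  rw [linearCube_eq_preimage]
  exact L.continuous.measurable (.univ_pi fun i ↦ measurableSet_Ico)

theorem setIntegral_linearCube_eq_sum [BorelSpace E] {F : E → ℝ}
    (hF : IntegrableOn F (linearCube L c h)) :
    ∫ x in linearCube L c h, F x =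
      ∑ e, ∫ x in linearCube L (childCorner c h e) (h / 2), F x := by
  rw [← iUnion_linearCube_childCorner] at hF ⊢
  exact integral_iUnion_fintype (fun e ↦ measurableSet_linearCube L _ _)
    (pairwise_disjoint_linearCube_childCorner L c h)
    fun e ↦ hF.mono_set (subset_iUnion_of_subset e Subset.rfl)

theorem measure_linearCube_ne_top [ProperSpace E] [IsFiniteMeasureOnCompacts (volume : Measure E)]
    (hh : 0 < h) : volume (linearCube L c h) ≠ ⊤ :=
  ((isBounded_ball.subset (linearCube_subset_ball L c hh)).measure_lt_top).ne

variable [FiniteDimensional ℝ E] [BorelSpace E] [(volume : Measure E).IsAddHaarMeasure]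

theorem measureReal_linearCube (hh : 0 < h) :
    volume.real (linearCube L c h) =
      h ^ Module.finrank ℝ E * volume.real (linearCube L (0 : Fin k → ℝ) 1) := by
  have hscale : linearCube L c h = (L.symm c + ·) '' (h • linearCube L (0 : Fin k → ℝ) 1) := by
    ext x
    rw [image_add_left, mem_preimage, mem_smul_set_iff_inv_smul_mem₀ hh.ne']
    refine forall_congr' fun i ↦ ?_
    simp only [map_smul, map_add, map_neg, ContinuousLinearEquiv.apply_symm_apply, Pi.smul_apply,
      Pi.add_apply, Pi.neg_apply, Pi.zero_apply, smul_eq_mul, mem_Ico, inv_mul_eq_div,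
      le_div_iff₀ hh, div_lt_iff₀ hh]
    constructor <;> rintro ⟨h₁, h₂⟩ <;> constructor <;> linarith
  rw [measureReal_def, hscale, image_add_left, measure_preimage_add, Measure.addHaar_smul_of_nonneg
    _ hh.le, ENNReal.toReal_mul, ENNReal.toReal_ofReal (by positivity), measureReal_def]

theorem measureReal_linearCube_half (hh : 0 < h) (c' : Fin k → ℝ) :
    volume.real (linearCube L c h) =
      2 ^ Module.finrank ℝ E * volume.real (linearCube L c' (h / 2)) := by
  rw [measureReal_linearCube L c hh, measureReal_linearCube L c' (half_pos hh), ← mul_assoc,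
    ← mul_pow, mul_div_cancel₀ _ two_ne_zero]

end LinearCube

theorem integrableOn_of_continuous_of_isBounded {X : Type*} [MetricSpace X] [ProperSpace X]
    [MeasurableSpace X] [OpensMeasurableSpace X] {μ : Measure X} [IsFiniteMeasureOnCompacts μ]
    {F : X → ℝ} (hF : Continuous F) {s : Set X} (hs : Bornology.IsBounded s) :
    IntegrableOn F s μ :=
  (hF.continuousOn.integrableOn_compact hs.isCompact_closure).mono_set subset_closure

section JohnNirenberg

variable {E : Type*} [NormedAddCommGroup E] [NormedSpace ℝ E] [FiniteDimensional ℝ E]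
  [MeasureSpace E] [BorelSpace E] [(volume : Measure E).IsAddHaarMeasure] {k : ℕ}
  (L : E ≃L[ℝ] (Fin k → ℝ)) {f : E → ℝ}

local notation "d" => Module.finrank ℝ E
local notation "ω" => volume.real (ball (0 : E) 1)

theorem integrableOn_linearCube {F : E → ℝ} (hF : Continuous F) (c : Fin k → ℝ) {h : ℝ}
    (hh : 0 < h) : IntegrableOn F (linearCube L c h) :=
  integrableOn_of_continuous_of_isBounded hF (isBounded_ball.subset (linearCube_subset_ball L c hh))

/-- One round of the Calderón–Zygmund stopping-time argument, stopped after `N` bisections: the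
cubes on which the oscillation exceeds `l` are estimated by the a priori bound `V`. -/
theorem setIntegral_linearCube_sub_sq_le (hf : Continuous f) {l V : ℝ} (hl : 0 < l) (hV0 : 0 ≤ V)
    (hV : ∀ c h, 0 < h → ∫ x in linearCube L c h, (f x - ⨍ y in linearCube L c h, f y) ^ 2 ≤
      V * volume.real (linearCube L c h)) (N : ℕ) (c : Fin k → ℝ) {h m : ℝ} (hh : 0 < h)
    (hsmall : ∀ x y, ‖x - y‖ ≤ ‖(L.symm : (Fin k → ℝ) →L[ℝ] E)‖ * (h / 2 ^ N) → |f x - f y| ≤ l)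
    (hosc : ∫ x in linearCube L c h, |f x - m| ≤ l * volume.real (linearCube L c h)) :
    ∫ x in linearCube L c h, (f x - m) ^ 2 ≤ 4 * l ^ 2 * volume.real (linearCube L c h) +
      (V + (2 ^ d * l) ^ 2) / l * ∫ x in linearCube L c h, |f x - m| := by
  have : 0 ≤ (V + (2 ^ d * l) ^ 2) / l := by positivity
  induction N generalizing c h with
  | zero =>
    refine (setIntegral_sub_sq_le_of_forall_abs_sub_le (measure_linearCube_ne_top L c hh)
      (measurableSet_linearCube L c h) (integrableOn_linearCube L hf c hh) (fun x hx y hy ↦ ?_)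
      hosc).trans (le_add_of_nonneg_right (by positivity))
    exact hsmall x y (by simpa using norm_sub_le_of_mem_linearCube L c hh.le hx hy)
  | succ N ih =>
    have hh₂ := half_pos hh
    have hsum {F : E → ℝ} (hF : Continuous F) := setIntegral_linearCube_eq_sum L c
      (integrableOn_linearCube L hF c hh)
    have habs : Continuous fun x ↦ |f x - m| := by fun_prop
    have hvol : volume.real (linearCube L c h) =
        ∑ e, volume.real (linearCube L (childCorner c h e) (h / 2)) := by
      simpa using hsum (F := fun _ ↦ 1) continuous_const
    rw [hsum (F := fun x ↦ (f x - m) ^ 2) (by fun_prop), hsum habs, hvol, Finset.mul_sum,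
      Finset.mul_sum, ← Finset.sum_add_distrib]
    refine Finset.sum_le_sum fun e _ ↦ ?_
    set Q := linearCube L (childCorner c h e) (h / 2)
    by_cases hgood : ∫ x in Q, |f x - m| ≤ l * volume.real Q
    · refine ih _ hh₂ (fun x y hxy ↦ hsmall x y ?_) hgood
      rwa [pow_succ', ← div_div]
    have hup : ∫ x in Q, |f x - m| ≤ 2 ^ d * l * volume.real Q := by
      rw [mul_right_comm, ← measureReal_linearCube_half L c hh, mul_comm _ l]
      refine le_trans ?_ hosc
      rw [hsum habs]
      exact Finset.single_le_sum (f := fun e ↦ ∫ x in linearCube L (childCorner c h e) (h / 2),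
        |f x - m|) (fun e _ ↦ integral_nonneg fun x ↦ abs_nonneg _) (Finset.mem_univ e)
    exact (setIntegral_sub_sq_le_mul_of_lt (measure_linearCube_ne_top L _ hh₂)
      (integrableOn_linearCube L hf _ hh₂) (integrableOn_linearCube L (by fun_prop) _ hh₂) hl hV0
      (not_le.1 hgood) hup (hV _ _ hh₂)).trans (le_add_of_nonneg_left (by positivity))

theorem setIntegral_linearCube_sub_setAverage_sq_le_half (hf : UniformContinuous f) {V a : ℝ}
    (ha : 0 < a) (hV0 : 0 ≤ V)
    (hosc : ∀ c h, 0 < h → ∫ x in linearCube L c h, |f x - ⨍ y in linearCube L c h, f y| ≤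
      a * volume.real (linearCube L c h))
    (hV : ∀ c h, 0 < h → ∫ x in linearCube L c h, (f x - ⨍ y in linearCube L c h, f y) ^ 2 ≤
      V * volume.real (linearCube L c h)) (c : Fin k → ℝ) {h : ℝ} (hh : 0 < h) :
    ∫ x in linearCube L c h, (f x - ⨍ y in linearCube L c h, f y) ^ 2 ≤
      ((8 + 4 ^ d) * (2 * a) ^ 2 + V) / 2 * volume.real (linearCube L c h) := by
  obtain ⟨δ, hδ, hfδ⟩ := Metric.uniformContinuous_iff.1 hf (2 * a) (by positivity)
  obtain ⟨N, hN⟩ : ∃ N : ℕ, ‖(L.symm : (Fin k → ℝ) →L[ℝ] E)‖ * (h / 2 ^ N) < δ := by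
    have hlim := (tendsto_pow_atTop_nhds_zero_of_lt_one (r := (1 / 2 : ℝ)) (by norm_num)
      (by norm_num)).const_mul (‖(L.symm : (Fin k → ℝ) →L[ℝ] E)‖ * h)
    rw [mul_zero] at hlim
    refine (hlim.eventually (gt_mem_nhds hδ)).exists.imp fun N hN ↦ ?_
    rwa [one_div, inv_pow, ← div_eq_mul_inv, mul_div_assoc] at hN
  have hbase := hosc c h hh
  set Q := linearCube L c h
  have : 0 ≤ volume.real Q := measureReal_nonneg
  calc ∫ x in Q, (f x - ⨍ y in Q, f y) ^ 2
      ≤ 4 * (2 * a) ^ 2 * volume.real Q + (V + (2 ^ d * (2 * a)) ^ 2) / (2 * a) *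
          ∫ x in Q, |f x - ⨍ y in Q, f y| :=
        setIntegral_linearCube_sub_sq_le L hf.continuous (by positivity) hV0 hV N c hh
          (fun x y hxy ↦ (hfδ (by rw [dist_eq_norm]; exact hxy.trans_lt hN)).le)
          (hbase.trans (by gcongr; linarith))
    _ ≤ 4 * (2 * a) ^ 2 * volume.real Q + (V + (2 ^ d * (2 * a)) ^ 2) / (2 * a) *
          (a * volume.real Q) := by gcongr
    _ = ((8 + 4 ^ d) * (2 * a) ^ 2 + V) / 2 * volume.real Q := by
        have : (2 ^ d : ℝ) ^ 2 = 4 ^ d := by rw [← pow_mul, mul_comm, pow_mul]; norm_num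
        rw [mul_pow, mul_pow, this]
        field_simp
        ring

theorem setIntegral_linearCube_sub_setAverage_sq_le (hf : UniformContinuous f) {M a : ℝ}
    (hM : ∀ x, |f x| ≤ M) (ha : 0 < a)
    (hosc : ∀ c h, 0 < h → ∫ x in linearCube L c h, |f x - ⨍ y in linearCube L c h, f y| ≤
      a * volume.real (linearCube L c h)) (c : Fin k → ℝ) {h : ℝ} (hh : 0 < h) :
    ∫ x in linearCube L c h, (f x - ⨍ y in linearCube L c h, f y) ^ 2 ≤
      (8 + 4 ^ d) * (2 * a) ^ 2 * volume.real (linearCube L c h) := by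
  set T := (8 + 4 ^ d) * (2 * a) ^ 2 with hT
  have hT0 : 0 ≤ T := by positivity
  have iterate (j : ℕ) : ∀ c h, 0 < h →
      ∫ x in linearCube L c h, (f x - ⨍ y in linearCube L c h, f y) ^ 2 ≤
        (T + M ^ 2 * (1 / 2) ^ j) * volume.real (linearCube L c h) := by
    induction j with
    | zero =>
      intro c h hh
      refine (setIntegral_sub_setAverage_sq_le_of_abs_le (measure_linearCube_ne_top L c hh)
        (integrableOn_linearCube L hf.continuous c hh) hM).trans
          (mul_le_mul_of_nonneg_right ?_ measureReal_nonneg)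
      simpa using hT0
    | succ j ih =>
      intro c h hh
      refine (setIntegral_linearCube_sub_setAverage_sq_le_half L hf ha (by positivity) hosc ih c
        hh).trans_eq ?_
      rw [← hT]
      ring
  have hlim : Tendsto (fun j : ℕ ↦ (T + M ^ 2 * (1 / 2) ^ j) * volume.real (linearCube L c h))
      atTop (𝓝 ((T + M ^ 2 * 0) * volume.real (linearCube L c h))) :=
    (((tendsto_pow_atTop_nhds_zero_of_lt_one (by norm_num) (by norm_num)).const_mul _).const_add
      _).mul_const _
  simpa using ge_of_tendsto' hlim fun j ↦ iterate j c h hh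

/-- The mean oscillation of `f` on every ball of radius `r` is at most `a`, up to the volume of the
unit ball: we normalise by `r ^ d` and allow any centre in place of the average. -/
def MeanOscillationLE (f : E → ℝ) (a : ℝ) : Prop :=
  ∀ x r, 0 < r → ∃ m, ∫ y in ball x r, |f y - m| ≤ a * r ^ d

theorem measureReal_ball_eq_pow_mul (x : E) {r : ℝ} (hr : 0 < r) :
    volume.real (ball x r) = r ^ d * ω := by
  rw [measureReal_def, Measure.addHaar_ball_of_pos _ _ hr, ENNReal.toReal_mul,
    ENNReal.toReal_ofReal (by positivity), measureReal_def]

omit [BorelSpace E] in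
theorem measureReal_unitBall_pos : 0 < ω :=
  ENNReal.toReal_pos (measure_ball_pos _ _ one_pos).ne' measure_ball_lt_top.ne

theorem measureReal_linearCube_unit_pos : 0 < volume.real (linearCube L (0 : Fin k → ℝ) 1) := by
  set A := 2 * (‖(L : E →L[ℝ] (Fin k → ℝ))‖ + 1)
  have hsub := ball_subset_linearCube L 0 one_pos
  rw [mul_one] at hsub
  have hle := measureReal_mono hsub (measure_linearCube_ne_top L _ (by positivity))
  rw [measureReal_linearCube L _ (by positivity)] at hle
  exact pos_of_mul_pos_right (measureReal_unitBall_pos.trans_le hle) (by positivity)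

theorem MeanOscillationLE.setIntegral_linearCube_le (hf : Continuous f) {a : ℝ}
    (hosc : MeanOscillationLE f a) (c : Fin k → ℝ) {h : ℝ} (hh : 0 < h) :
    ∫ x in linearCube L c h, |f x - ⨍ y in linearCube L c h, f y| ≤
      2 * (‖(L.symm : (Fin k → ℝ) →L[ℝ] E)‖ + 1) ^ d /
        volume.real (linearCube L (0 : Fin k → ℝ) 1) * a * volume.real (linearCube L c h) := by
  set A := ‖(L.symm : (Fin k → ℝ) →L[ℝ] E)‖ + 1
  obtain ⟨m, hm⟩ := hosc (L.symm c) (A * h) (by positivity)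
  calc ∫ x in linearCube L c h, |f x - ⨍ y in linearCube L c h, f y|
      ≤ 2 * ∫ x in linearCube L c h, |f x - m| :=
        setIntegral_abs_sub_setAverage_le (measure_linearCube_ne_top L c hh)
          (integrableOn_linearCube L hf c hh) m
    _ ≤ 2 * (a * (A * h) ^ d) := by
        gcongr
        exact (setIntegral_mono_set (integrableOn_of_continuous_of_isBounded (by fun_prop)
          isBounded_ball) (.of_forall fun y ↦ abs_nonneg _)
          (linearCube_subset_ball L c hh).eventuallyLE).trans hm
    _ = 2 * A ^ d / volume.real (linearCube L (0 : Fin k → ℝ) 1) * a *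
          volume.real (linearCube L c h) := by
        have := (measureReal_linearCube_unit_pos L).ne'
        rw [measureReal_linearCube L c hh, mul_pow]
        field_simp

/-- The John–Nirenberg inequality in its mean square form. -/
theorem MeanOscillationLE.exists_setIntegral_ball_sub_sq_le :
    ∃ C, 0 ≤ C ∧ ∀ (f : E → ℝ) (M a : ℝ), UniformContinuous f → (∀ x, |f x| ≤ M) → 0 < a →
      MeanOscillationLE f a → ∀ x r m, 0 < r → ∫ y in ball x r, |f y - m| ≤ a * r ^ d →
        ∫ y in ball x r, (f y - m) ^ 2 ≤ C * a ^ 2 * r ^ d := by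
  obtain L : E ≃L[ℝ] (Fin d → ℝ) := ContinuousLinearEquiv.ofFinrankEq (by simp)
  have hω : 0 < ω := measureReal_unitBall_pos
  have hκ := measureReal_linearCube_unit_pos L
  set β := 2 * (‖(L.symm : (Fin d → ℝ) →L[ℝ] E)‖ + 1) ^ d /
    volume.real (linearCube L (0 : Fin d → ℝ) 1)
  set A := 2 * (‖(L : E →L[ℝ] (Fin d → ℝ))‖ + 1)
  set U := A ^ d * volume.real (linearCube L (0 : Fin d → ℝ) 1) / ω
  refine ⟨((8 + 4 ^ d) * (2 * β) ^ 2 * U + 1 / ω ^ 2) * ω,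
    by positivity, fun f M a hf hM ha hosc x r m hr hm ↦ ?_⟩
  set c : Fin d → ℝ := fun i ↦ L x i - (‖(L : E →L[ℝ] (Fin d → ℝ))‖ + 1) * r
  have hAr : 0 < A * r := by positivity
  have hvol : volume.real (linearCube L c (A * r)) = U * volume.real (ball x r) := by
    rw [measureReal_linearCube L c hAr, measureReal_ball_eq_pow_mul x hr, mul_pow]
    simp only [U]
    field_simp
  have hsq := setIntegral_linearCube_sub_setAverage_sq_le L hf hM (a := β * a) (by positivity)
    (fun c h hh ↦ hosc.setIntegral_linearCube_le L hf.continuous c hh) c hAr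
  rw [hvol, ← mul_assoc] at hsq
  have hm' : ∫ y in ball x r, |f y - m| ≤ a / ω * volume.real (ball x r) := by
    rw [measureReal_ball_eq_pow_mul x hr]
    exact hm.trans_eq (by field_simp)
  refine (setIntegral_sub_sq_le_of_subset (ball_subset_linearCube L x hr)
    (measure_linearCube_ne_top L c hAr) (integrableOn_linearCube L hf.continuous c hAr)
    (integrableOn_linearCube L (hf.continuous.pow 2) c hAr) hm' hsq).trans_eq ?_
  rw [measureReal_ball_eq_pow_mul x hr]
  field_simp

end JohnNirenberg

section CompactlySupportedKernels

open scoped BoundedContinuousFunction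

theorem integrable_of_continuous_of_eq_zero_of_le_norm {X : Type*} [NormedAddCommGroup X]
    [ProperSpace X] [MeasurableSpace X] [BorelSpace X] {μ : Measure X}
    [IsFiniteMeasureOnCompacts μ] {F : X → ℝ} (hF : Continuous F)
    {R : ℝ} (hR : ∀ y, R ≤ ‖y‖ → F y = 0) : Integrable F μ := by
  refine hF.integrable_of_hasCompactSupport (.intro (isCompact_closedBall 0 R) fun x hx ↦ hR x ?_)
  rw [mem_closedBall_zero_iff, not_le] at hx
  exact hx.le

variable {E : Type*} [NormedAddCommGroup E] [NormedSpace ℝ E] [FiniteDimensional ℝ E]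
  [MeasureSpace E] [BorelSpace E] [(volume : Measure E).IsAddHaarMeasure]

local notation "d" => Module.finrank ℝ E
local notation "ω" => volume.real (ball (0 : E) 1)

theorem abs_integral_le_of_eq_zero_off_ball {F : E → ℝ} {M r : ℝ} (hr : 0 < r) (x : E)
    (hM : ∀ y, |F y| ≤ M) (hF : ∀ y, r ≤ ‖x - y‖ → F y = 0) :
    |∫ y, F y| ≤ M * (r ^ d * ω) := by
  rw [← setIntegral_eq_integral_of_forall_compl_eq_zero (s := ball x r),
    ← measureReal_ball_eq_pow_mul x hr]
  · exact norm_setIntegral_le_of_norm_le_const (f := F) measure_ball_lt_top fun y _ ↦ hM y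
  · intro y hy
    refine hF y ?_
    rwa [mem_ball', dist_eq_norm, not_lt] at hy

/-- A bounded Lipschitz integral kernel, with explicit bound `b`, Lipschitz constant `l` for the
`ℓ¹` metric on pairs, and support in the square of the ball of radius `R` about the origin. -/
structure IsLipschitzKernel {E : Type*} [NormedAddCommGroup E] (k : E → E → ℝ) (b l R : ℝ) :
    Prop where
  bound_nonneg : 0 ≤ b
  lip_nonneg : 0 ≤ l
  one_le_radius : 1 ≤ R
  abs_le : ∀ x y, |k x y| ≤ b
  abs_sub_le : ∀ x y x' y', |k x y - k x' y'| ≤ l * (‖x - x'‖ + ‖y - y'‖)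
  eq_zero_left : ∀ x y, R ≤ ‖x‖ → k x y = 0
  eq_zero_right : ∀ x y, R ≤ ‖y‖ → k x y = 0

namespace IsLipschitzKernel

section NoMeasure

variable {E : Type*} [NormedAddCommGroup E] {k : E → E → ℝ} {b l R : ℝ}

theorem swap (h : IsLipschitzKernel k b l R) : IsLipschitzKernel (fun x y ↦ k y x) b l R where
  bound_nonneg := h.bound_nonneg
  lip_nonneg := h.lip_nonneg
  one_le_radius := h.one_le_radius
  abs_le x y := h.abs_le y x
  abs_sub_le x y x' y' := by rw [add_comm]; exact h.abs_sub_le _ _ _ _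
  eq_zero_left x y hx := h.eq_zero_right y x hx
  eq_zero_right x y hy := h.eq_zero_left y x hy

theorem radius_pos (h : IsLipschitzKernel k b l R) : 0 < R := one_pos.trans_le h.one_le_radius

theorem continuous (h : IsLipschitzKernel k b l R) : Continuous fun p : E × E ↦ k p.1 p.2 := by
  refine (LipschitzWith.of_dist_le_mul (K := (2 * l).toNNReal) fun p q ↦ ?_).continuous
  have hl := h.lip_nonneg
  have hfst : ‖p.1 - q.1‖ ≤ dist p q := by rw [← dist_eq_norm]; exact le_max_left _ _
  have hsnd : ‖p.2 - q.2‖ ≤ dist p q := by rw [← dist_eq_norm]; exact le_max_right _ _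
  calc dist (k p.1 p.2) (k q.1 q.2) ≤ l * (‖p.1 - q.1‖ + ‖p.2 - q.2‖) := h.abs_sub_le _ _ _ _
    _ ≤ l * (dist p q + dist p q) := by gcongr
    _ = (2 * l).toNNReal * dist p q := by rw [Real.coe_toNNReal _ (by positivity)]; ring

theorem continuous_right (h : IsLipschitzKernel k b l R) (x : E) : Continuous (k x) :=
  h.continuous.comp (by fun_prop : Continuous fun y ↦ (x, y))

theorem continuous_left (h : IsLipschitzKernel k b l R) (y : E) : Continuous fun x ↦ k x y :=
  h.swap.continuous_right y

end NoMeasure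

variable {k k' : E → E → ℝ} {b l b' l' R : ℝ} {f : E → ℝ} {M : ℝ}

theorem integrable_mul (h : IsLipschitzKernel k b l R) (x : E) (hf : Continuous f) :
    Integrable fun y ↦ k x y * f y :=
  integrable_of_continuous_of_eq_zero_of_le_norm (R := R)
    (by have := h.continuous_right x; fun_prop) fun y hy ↦ by rw [h.eq_zero_right x y hy, zero_mul]

theorem abs_integral_mul_le (h : IsLipschitzKernel k b l R) (x : E) (hf : ∀ y, |f y| ≤ M) :
    |∫ y, k x y * f y| ≤ b * M * (R ^ d * ω) := by
  refine abs_integral_le_of_eq_zero_off_ball h.radius_pos 0 (fun y ↦ ?_) fun y hy ↦ ?_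
  · rw [abs_mul]
    exact mul_le_mul (h.abs_le _ _) (hf y) (abs_nonneg _) h.bound_nonneg
  · rw [h.eq_zero_right x y (by rwa [zero_sub, norm_neg] at hy), zero_mul]

theorem abs_integral_mul_sub_le (h : IsLipschitzKernel k b l R) (x x' : E) (hc : Continuous f)
    (hf : ∀ y, |f y| ≤ M) :
    |(∫ y, k x y * f y) - ∫ y, k x' y * f y| ≤ l * ‖x - x'‖ * M * (R ^ d * ω) := by
  rw [← integral_sub (h.integrable_mul x hc) (h.integrable_mul x' hc)]
  refine abs_integral_le_of_eq_zero_off_ball h.radius_pos 0 (fun y ↦ ?_) fun y hy ↦ ?_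
  · rw [← sub_mul, abs_mul]
    refine mul_le_mul ?_ (hf y) (abs_nonneg _) (mul_nonneg h.lip_nonneg (norm_nonneg _))
    simpa only [sub_self, norm_zero, add_zero] using h.abs_sub_le x y x' y
  · have hy' : R ≤ ‖y‖ := by rwa [zero_sub, norm_neg] at hy
    rw [h.eq_zero_right x y hy', h.eq_zero_right x' y hy', zero_mul, sub_zero]

theorem continuous_integral_mul (h : IsLipschitzKernel k b l R) (hc : Continuous f)
    (hf : ∀ y, |f y| ≤ M) : Continuous fun x ↦ ∫ y, k x y * f y := by
  have : 0 ≤ M := (abs_nonneg _).trans (hf 0)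
  have := h.lip_nonneg
  have := h.radius_pos
  refine (LipschitzWith.of_dist_le_mul (K := (l * M * (R ^ d * ω)).toNNReal)
    fun x x' ↦ ?_).continuous
  rw [Real.dist_eq, Real.coe_toNNReal _ (by positivity), dist_eq_norm]
  exact (h.abs_integral_mul_sub_le x x' hc hf).trans_eq (by ring)

/-- The integral operator `f ↦ ∫ k(·, y) f(y) dy` on bounded continuous functions. -/
noncomputable def toCLM (h : IsLipschitzKernel k b l R) : (E →ᵇ ℝ) →L[ℝ] (E →ᵇ ℝ) :=
  LinearMap.mkContinuous
    { toFun f := BoundedContinuousFunction.ofNormedAddCommGroup (fun x ↦ ∫ y, k x y * f y)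
        (h.continuous_integral_mul f.continuous f.norm_coe_le_norm) (b * ‖f‖ * (R ^ d * ω))
        (h.abs_integral_mul_le · f.norm_coe_le_norm)
      map_add' f g := by
        ext x
        simp only [BoundedContinuousFunction.coe_ofNormedAddCommGroup,
          BoundedContinuousFunction.coe_add, Pi.add_apply, mul_add]
        exact integral_add (h.integrable_mul x f.continuous) (h.integrable_mul x g.continuous)
      map_smul' c f := by
        ext x
        simp only [BoundedContinuousFunction.coe_ofNormedAddCommGroup,
          BoundedContinuousFunction.coe_smul, smul_eq_mul, RingHom.id_apply, mul_left_comm _ c,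
          integral_const_mul] }
    (b * (R ^ d * ω)) fun f ↦ by
      have := h.bound_nonneg
      have := h.radius_pos
      refine (BoundedContinuousFunction.norm_le (by positivity)).2 fun x ↦ ?_
      exact (h.abs_integral_mul_le x f.norm_coe_le_norm).trans_eq (by ring)

theorem toCLM_apply (h : IsLipschitzKernel k b l R) (f : E →ᵇ ℝ) (x : E) :
    h.toCLM f x = ∫ y, k x y * f y := rfl

theorem integrable_prod_mul (h : IsLipschitzKernel k b l R) {g : E → ℝ} (hf : Continuous f)
    (hg : Continuous g) :
    Integrable (Function.uncurry fun x y ↦ k x y * f y * g x) (volume.prod volume) := by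
  refine integrable_of_continuous_of_eq_zero_of_le_norm (R := R) ?_ fun p hp ↦ ?_
  · exact (h.continuous.mul (hf.comp continuous_snd)).mul (hg.comp continuous_fst)
  · have hk : k p.1 p.2 = 0 := (le_max_iff.1 hp).elim (h.eq_zero_left _ _) (h.eq_zero_right _ _)
    simp only [Function.uncurry_def, hk, zero_mul]

theorem integral_integral_mul_comm (h : IsLipschitzKernel k b l R) {g : E → ℝ} (hf : Continuous f)
    (hg : Continuous g) :
    ∫ x, (∫ y, k x y * f y) * g x = ∫ y, (∫ x, k x y * g x) * f y := by
  simp_rw [← integral_mul_const]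
  rw [integral_integral_swap (h.integrable_prod_mul hf hg)]
  simp_rw [mul_right_comm]

/-- Expand the second kernel about the centre `y` of its support: the difference of the values of
the first kernel gains its Lipschitz constant, and the remaining term the mean of the second. -/
theorem abs_integral_mul_le_of_eq_zero (h : IsLipschitzKernel k b l R)
    (h' : IsLipschitzKernel k' b' l' R) {r m : ℝ} (hr : 0 < r)
    (hk' : ∀ z y, r ≤ ‖z - y‖ → k' z y = 0) (hm : ∀ y, |∫ z, k' z y| ≤ m) (x y : E) :
    |∫ z, k z x * k' z y| ≤ l * r * b' * (r ^ d * ω) + b * m := by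
  have hl := h.lip_nonneg
  have hk'y : Integrable fun z ↦ k' z y :=
    integrable_of_continuous_of_eq_zero_of_le_norm (h'.continuous_left y)
      fun z ↦ h'.eq_zero_left z y
  have hkk' : Integrable fun z ↦ k z x * k' z y := by
    simpa only [mul_comm] using h'.swap.integrable_mul y (h.continuous_left x)
  have hsplit : ∫ z, k z x * k' z y =
      (∫ z, (k z x - k y x) * k' z y) + k y x * ∫ z, k' z y := by
    simp_rw [sub_mul]
    rw [integral_sub hkk' (hk'y.const_mul _), integral_const_mul, sub_add_cancel]
  have hdiff : |∫ z, (k z x - k y x) * k' z y| ≤ l * r * b' * (r ^ d * ω) := by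
    refine abs_integral_le_of_eq_zero_off_ball hr y (fun z ↦ ?_) fun z hz ↦ ?_
    · rcases le_or_gt r ‖z - y‖ with hz | hz
      · have := h'.bound_nonneg
        rw [hk' z y hz, mul_zero, abs_zero]
        positivity
      · rw [abs_mul]
        refine mul_le_mul ?_ (h'.abs_le _ _) (abs_nonneg _) (by positivity)
        calc |k z x - k y x| ≤ l * (‖z - y‖ + ‖x - x‖) := h.abs_sub_le _ _ _ _
          _ ≤ l * r := by rw [sub_self, norm_zero, add_zero]; gcongr
    · rw [hk' z y (by rwa [norm_sub_rev]), mul_zero]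
  have hmean : |k y x * ∫ z, k' z y| ≤ b * m := by
    rw [abs_mul]
    exact mul_le_mul (h.abs_le _ _) (hm y) (abs_nonneg _) h.bound_nonneg
  rw [hsplit]
  exact (abs_add_le _ _).trans (add_le_add hdiff hmean)

end IsLipschitzKernel

/-- A family of kernels adapted to the dyadic scales `2⁻ʲ`, all supported in a fixed ball, whose
integrals in each variable decay: the hypotheses of the Cotlar–Stein argument. -/
structure IsDyadicKernelFamily {E : Type*} [NormedAddCommGroup E] [NormedSpace ℝ E]
    [MeasureSpace E] (K : ℕ → E → E → ℝ) (C R : ℝ) : Prop where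
  nonneg : 0 ≤ C
  isLipschitzKernel : ∀ j, IsLipschitzKernel (K j)
    (C * (2 ^ j) ^ Module.finrank ℝ E) (C * (2 ^ j) ^ (Module.finrank ℝ E + 1)) R
  eq_zero_of_le : ∀ j x y, 2 * R * (1 / 2) ^ j ≤ ‖x - y‖ → K j x y = 0
  abs_integral_right_le : ∀ j x, |∫ y, K j x y| ≤ C * (1 / 2) ^ j
  abs_integral_left_le : ∀ j y, |∫ x, K j x y| ≤ C * (1 / 2) ^ j

theorem two_pow_mul_half_pow (j : ℕ) : (2 : ℝ) ^ j * (1 / 2) ^ j = 1 := by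
  rw [← mul_pow, mul_one_div_cancel two_ne_zero, one_pow]

namespace IsDyadicKernelFamily

section Basic

variable {E : Type*} [NormedAddCommGroup E] [NormedSpace ℝ E] [MeasureSpace E]
  {K : ℕ → E → E → ℝ} {C R : ℝ}

theorem swap (h : IsDyadicKernelFamily K C R) : IsDyadicKernelFamily (fun j x y ↦ K j y x) C R where
  nonneg := h.nonneg
  isLipschitzKernel j := (h.isLipschitzKernel j).swap
  eq_zero_of_le j x y hx := h.eq_zero_of_le j y x (by rwa [norm_sub_rev])
  abs_integral_right_le := h.abs_integral_left_le
  abs_integral_left_le := h.abs_integral_right_le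

theorem one_le_radius (h : IsDyadicKernelFamily K C R) : 1 ≤ R :=
  (h.isLipschitzKernel 0).one_le_radius

theorem integral_mul_eq_zero_of_le (h : IsDyadicKernelFamily K C R) (i j : ℕ) (x y : E)
    (hxy : 4 * R * (1 / 2) ^ min i j ≤ ‖x - y‖) : ∫ z, K i z x * K j z y = 0 := by
  have hR := h.one_le_radius
  refine integral_eq_zero_of_ae (.of_forall fun z ↦ ?_)
  by_contra hne
  obtain ⟨hi, hj⟩ := mul_ne_zero_iff.1 hne
  have hzx : ‖z - x‖ < 2 * R * (1 / 2) ^ i := by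
    contrapose! hi
    exact h.eq_zero_of_le _ _ _ hi
  have hzy : ‖z - y‖ < 2 * R * (1 / 2) ^ j := by
    contrapose! hj
    exact h.eq_zero_of_le _ _ _ hj
  refine hxy.not_gt ?_
  calc ‖x - y‖ ≤ ‖z - x‖ + ‖z - y‖ := by
        rw [norm_sub_rev z x]
        exact norm_sub_le_norm_sub_add_norm_sub x z y
    _ < 2 * R * (1 / 2) ^ i + 2 * R * (1 / 2) ^ j := add_lt_add hzx hzy
    _ ≤ 2 * R * (1 / 2) ^ min i j + 2 * R * (1 / 2) ^ min i j := by
        gcongr ?_ * ?_ + ?_ * ?_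
        · exact pow_le_pow_of_le_one (by norm_num) (by norm_num) (min_le_left _ _)
        · exact pow_le_pow_of_le_one (by norm_num) (by norm_num) (min_le_right _ _)
    _ = 4 * R * (1 / 2) ^ min i j := by ring

end Basic

variable {K : ℕ → E → E → ℝ} {C R : ℝ}

theorem abs_integral_mul_le_of_le (h : IsDyadicKernelFamily K C R) {i j : ℕ} (hij : i ≤ j)
    (x y : E) : |∫ z, K i z x * K j z y| ≤
      C ^ 2 * ((2 * R) ^ (d + 1) * ω + 1) * (2 ^ i) ^ d * (1 / 2) ^ (j - i) := by
  have hR := h.one_le_radius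
  obtain ⟨m, rfl⟩ := Nat.exists_eq_add_of_le hij
  rw [Nat.add_sub_cancel_left]
  calc _ ≤ C * (2 ^ i) ^ (d + 1) * (2 * R * (1 / 2) ^ (i + m)) * (C * (2 ^ (i + m)) ^ d) *
          ((2 * R * (1 / 2) ^ (i + m)) ^ d * ω) + C * (2 ^ i) ^ d * (C * (1 / 2) ^ (i + m)) :=
        (h.isLipschitzKernel i).abs_integral_mul_le_of_eq_zero (h.isLipschitzKernel (i + m))
          (by positivity) (h.eq_zero_of_le _) (h.abs_integral_left_le _) x y
    _ = C ^ 2 * ((2 * R) ^ (d + 1) * ω) * (2 ^ i) ^ d * (1 / 2) ^ m * (2 ^ i * (1 / 2) ^ i) *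
          (2 ^ (i + m) * (1 / 2) ^ (i + m)) ^ d +
          C ^ 2 * (2 ^ i) ^ d * (1 / 2) ^ m * (1 / 2) ^ i := by
        rw [pow_add (1 / 2 : ℝ) i m]; ring
    _ ≤ C ^ 2 * ((2 * R) ^ (d + 1) * ω) * (2 ^ i) ^ d * (1 / 2) ^ m * 1 * 1 ^ d +
          C ^ 2 * (2 ^ i) ^ d * (1 / 2) ^ m * 1 := by
        rw [two_pow_mul_half_pow, two_pow_mul_half_pow]
        gcongr
        exact pow_le_one₀ (by norm_num) (by norm_num)
    _ = _ := by ring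

theorem abs_integral_mul_le (h : IsDyadicKernelFamily K C R) (i j : ℕ) (x y : E) :
    |∫ z, K i z x * K j z y| ≤ C ^ 2 * ((2 * R) ^ (d + 1) * ω + 1) * (2 ^ min i j) ^ d *
      (1 / 2) ^ ((i - j) + (j - i)) := by
  rcases le_total i j with hij | hij
  · rw [min_eq_left hij, Nat.sub_eq_zero_of_le hij, zero_add]
    exact h.abs_integral_mul_le_of_le hij x y
  · rw [min_eq_right hij, Nat.sub_eq_zero_of_le hij, add_zero]
    simp_rw [mul_comm (K i _ x)]
    exact h.abs_integral_mul_le_of_le hij y x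

theorem abs_integral_mul_integral_le (h : IsDyadicKernelFamily K C R) (i j : ℕ) (f : E →ᵇ ℝ)
    (x : E) : |∫ z, K i z x * ∫ y, K j z y * f y| ≤
      C ^ 2 * ((2 * R) ^ (d + 1) * ω + 1) * ((4 * R) ^ d * ω) * (1 / 2) ^ ((i - j) + (j - i)) *
        ‖f‖ := by
  have := h.one_le_radius
  have hswap : ∫ z, K i z x * ∫ y, K j z y * f y = ∫ y, (∫ z, K i z x * K j z y) * f y := by
    have hcomm := (h.isLipschitzKernel j).integral_integral_mul_comm f.continuous
      ((h.isLipschitzKernel i).continuous_left x)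
    simp_rw [mul_comm (K i _ x)]
    exact hcomm
  rw [hswap]
  calc _ ≤ C ^ 2 * ((2 * R) ^ (d + 1) * ω + 1) * (2 ^ min i j) ^ d *
          (1 / 2) ^ ((i - j) + (j - i)) * ‖f‖ * ((4 * R * (1 / 2) ^ min i j) ^ d * ω) := by
        refine abs_integral_le_of_eq_zero_off_ball (by positivity) x (fun y ↦ ?_) fun y hy ↦ ?_
        · rw [abs_mul]
          exact mul_le_mul (h.abs_integral_mul_le i j x y) (f.norm_coe_le_norm y) (abs_nonneg _)
            (by positivity)
        · rw [h.integral_mul_eq_zero_of_le i j x y hy, zero_mul]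
    _ = C ^ 2 * ((2 * R) ^ (d + 1) * ω + 1) * ((4 * R) ^ d * ω) * (1 / 2) ^ ((i - j) + (j - i)) *
          ‖f‖ * (2 ^ min i j * (1 / 2) ^ min i j) ^ d := by ring
    _ = _ := by rw [two_pow_mul_half_pow, one_pow, mul_one]

end IsDyadicKernelFamily

theorem sum_geometric_dist_le {q : ℝ} (hq0 : 0 ≤ q) (hq1 : q < 1) (S : Finset ℕ) (i : ℕ) :
    ∑ j ∈ S, q ^ ((i - j) + (j - i)) ≤ 2 * (1 - q)⁻¹ := by
  have sum_le (A : Finset ℕ) (g : ℕ → ℕ) (hg : InjOn g A) : ∑ j ∈ A, q ^ g j ≤ (1 - q)⁻¹ := by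
    rw [← Finset.sum_image (f := fun m ↦ q ^ m) hg, ← tsum_geometric_of_lt_one hq0 hq1]
    exact (summable_geometric_of_lt_one hq0 hq1).sum_le_tsum _ fun m _ ↦ by positivity
  rw [← Finset.sum_filter_add_sum_filter_not S (· ≤ i), two_mul]
  refine add_le_add (sum_le _ _ ?_) (sum_le _ _ ?_) <;>
  · intro a ha b hb hab
    simp only [Finset.coe_filter, mem_ofPred_eq, not_le] at ha hb hab
    lia

theorem sum_sqrt_mul_geometric_le {A q : ℝ} (hq0 : 0 ≤ q) (hq1 : q < 1) (S : Finset ℕ) (i : ℕ) :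
    ∑ j : S, √A * q ^ ((i - j) + (j - i)) ≤ √A * (2 * (1 - q)⁻¹) := by
  rw [← Finset.mul_sum, Finset.sum_coe_sort S fun j ↦ q ^ ((i - j) + (j - i))]
  gcongr
  exact sum_geometric_dist_le hq0 hq1 S i

/-- The `L²` inner product over a set of bounded continuous functions. -/
noncomputable def setIntegralBilin {X : Type*} [TopologicalSpace X] [MeasurableSpace X]
    [OpensMeasurableSpace X] (μ : Measure X) (s : Set X) [IsFiniteMeasure (μ.restrict s)] :
    (X →ᵇ ℝ) →ₗ[ℝ] (X →ᵇ ℝ) →ₗ[ℝ] ℝ :=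
  have hint (f g : X →ᵇ ℝ) : IntegrableOn (fun x ↦ f x * g x) s μ := (f * g).integrable _
  LinearMap.mk₂ ℝ (fun f g ↦ ∫ x in s, f x * g x ∂μ)
    (fun f f' g ↦ by
      simp only [BoundedContinuousFunction.coe_add, Pi.add_apply, add_mul]
      exact integral_add (hint f g) (hint f' g))
    (fun c f g ↦ by
      simp only [BoundedContinuousFunction.coe_smul, smul_eq_mul, mul_assoc]
      exact integral_const_mul _ _)
    (fun f g g' ↦ by
      simp only [BoundedContinuousFunction.coe_add, Pi.add_apply, mul_add]
      exact integral_add (hint f g) (hint f g'))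
    (fun c f g ↦ by
      simp only [BoundedContinuousFunction.coe_smul, smul_eq_mul, mul_left_comm _ c]
      exact integral_const_mul _ _)

section SetIntegralBilin

variable {X : Type*} [TopologicalSpace X] [MeasurableSpace X] [OpensMeasurableSpace X]
  {μ : Measure X} {s : Set X} [IsFiniteMeasure (μ.restrict s)]

theorem setIntegralBilin_apply (f g : X →ᵇ ℝ) :
    setIntegralBilin μ s f g = ∫ x in s, f x * g x ∂μ := rfl

theorem setIntegralBilin_le (hs : μ s < ⊤) (f g : X →ᵇ ℝ) :
    setIntegralBilin μ s f g ≤ μ.real s * ‖f‖ * ‖g‖ := by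
  rw [setIntegralBilin_apply, mul_assoc, mul_comm]
  refine (le_abs_self _).trans (norm_setIntegral_le_of_norm_le_const (C := ‖f‖ * ‖g‖)
    (f := fun x ↦ f x * g x) hs fun x _ ↦ ?_)
  rw [norm_mul]
  gcongr <;> exact BoundedContinuousFunction.norm_coe_le_norm _ _

end SetIntegralBilin

namespace IsDyadicKernelFamily

variable {K : ℕ → E → E → ℝ} {C R : ℝ}

theorem norm_swap_toCLM_mul_toCLM_le (h : IsDyadicKernelFamily K C R) (i j : ℕ) :
    ‖(h.isLipschitzKernel i).swap.toCLM * (h.isLipschitzKernel j).toCLM‖ ≤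
      C ^ 2 * ((2 * R) ^ (d + 1) * ω + 1) * ((4 * R) ^ d * ω) * (1 / 2) ^ ((i - j) + (j - i)) := by
  have := h.one_le_radius
  refine ContinuousLinearMap.opNorm_le_bound _ (by positivity) fun f ↦ ?_
  exact (BoundedContinuousFunction.norm_le (by positivity)).2 (h.abs_integral_mul_integral_le i j f)

theorem setIntegralBilin_toCLM_left (h : IsDyadicKernelFamily K C R) (j : ℕ)
    [IsFiniteMeasure ((volume : Measure E).restrict (ball 0 R))] (f g : E →ᵇ ℝ) :
    setIntegralBilin volume (ball 0 R) ((h.isLipschitzKernel j).toCLM f) g =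
      setIntegralBilin volume (ball 0 R) f ((h.isLipschitzKernel j).swap.toCLM g) := by
  have hker := h.isLipschitzKernel j
  have setIntegral_ball {F : E → ℝ} (hF : ∀ x, R ≤ ‖x‖ → F x = 0) :
      ∫ x in ball 0 R, F x = ∫ x, F x :=
    setIntegral_eq_integral_of_forall_compl_eq_zero fun x hx ↦
      hF x (by rwa [mem_ball_zero_iff, not_lt] at hx)
  simp only [setIntegralBilin_apply, IsLipschitzKernel.toCLM_apply]
  rw [setIntegral_ball fun x hx ↦ ?_, setIntegral_ball fun x hx ↦ ?_,
    hker.integral_integral_mul_comm f.continuous g.continuous]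
  · simp_rw [mul_comm (f _)]
  · simp only [hker.eq_zero_right _ x hx, zero_mul, integral_zero, mul_zero]
  · simp only [hker.eq_zero_left x _ hx, zero_mul, integral_zero]

theorem exists_setIntegral_sum_sq_le (h : IsDyadicKernelFamily K C R) :
    ∃ M : ℝ, 0 ≤ M ∧ ∀ (S : Finset ℕ) (f : E →ᵇ ℝ),
      ∫ x in ball 0 R, (∑ j ∈ S, ∫ y, K j x y * f y) ^ 2 ≤ M * ∫ x in ball 0 R, f x ^ 2 := by
  have := h.one_le_radius
  have : IsFiniteMeasure ((volume : Measure E).restrict (ball 0 R)) :=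
    ⟨by rw [Measure.restrict_apply_univ]; exact measure_ball_lt_top⟩
  set A : ℝ := C ^ 2 * ((2 * R) ^ (d + 1) * ω + 1) * ((4 * R) ^ d * ω)
  have hA : 0 ≤ A := by positivity
  have hq0 : 0 ≤ √(1 / 2 : ℝ) := Real.sqrt_nonneg _
  have hq1 : √(1 / 2 : ℝ) < 1 := by rw [Real.sqrt_lt' one_pos]; norm_num
  have hM : 0 ≤ √A * (2 * (1 - √(1 / 2 : ℝ))⁻¹) := by
    have : 0 ≤ (1 - √(1 / 2 : ℝ))⁻¹ := inv_nonneg.2 (by linarith)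
    positivity
  refine ⟨(√A * (2 * (1 - √(1 / 2 : ℝ))⁻¹)) ^ 2, sq_nonneg _, fun S f ↦ ?_⟩
  have hsq (i j : S) : (√A * √(1 / 2 : ℝ) ^ ((i : ℕ) - j + (j - i))) ^ 2 =
      A * (1 / 2) ^ ((i : ℕ) - j + (j - i)) := by
    rw [mul_pow, Real.sq_sqrt hA, ← pow_mul, mul_comm _ 2, pow_mul, Real.sq_sqrt (by norm_num)]
  have hcotlar := apply_sum_sum_le_of_almost_orthogonal (ι := S)
    (setIntegralBilin volume (ball (0 : E) R))
    (fun f g ↦ by simp only [setIntegralBilin_apply, mul_comm])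
    (fun f ↦ integral_nonneg fun x ↦ mul_self_nonneg _)
    (setIntegralBilin_le measure_ball_lt_top) measureReal_nonneg
    (fun i ↦ h.setIntegralBilin_toCLM_left i) (fun i j ↦ by positivity)
    (fun i j ↦ (h.norm_swap_toCLM_mul_toCLM_le i j).trans_eq (hsq i j).symm)
    (fun i j ↦ (h.swap.norm_swap_toCLM_mul_toCLM_le i j).trans_eq (hsq i j).symm)
    (fun i ↦ sum_sqrt_mul_geometric_le hq0 hq1 S i) hM f
  simp only [setIntegralBilin_apply, sum_apply, BoundedContinuousFunction.coe_sum,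
    Finset.sum_apply, IsLipschitzKernel.toCLM_apply, ← sq] at hcotlar
  convert hcotlar using 3 with x
  rw [← Finset.sum_coe_sort]

end IsDyadicKernelFamily

end CompactlySupportedKernels

section LipschitzBumps

variable {E : Type*} [NormedAddCommGroup E]

theorem continuous_of_abs_sub_le_mul {g : E → ℝ} {K : ℝ} (h : ∀ x y, |g x - g y| ≤ K * ‖x - y‖) :
    Continuous g :=
  LipschitzWith.continuous <| .of_dist_le' fun x y ↦ by
    rw [Real.dist_eq, dist_eq_norm]
    exact h x y

/-- A Lipschitz function supported in the ball of radius `R` about the origin, with one constant `L`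
serving both as bound and as Lipschitz constant. -/
structure IsLipschitzBump (g : E → ℝ) (L R : ℝ) : Prop where
  nonneg : 0 ≤ L
  abs_le : ∀ x, |g x| ≤ L
  abs_sub_le : ∀ x y, |g x - g y| ≤ L * ‖x - y‖
  eq_zero_of_le : ∀ x, R ≤ ‖x‖ → g x = 0

namespace IsLipschitzBump

variable {g f : E → ℝ} {L R M K : ℝ}

theorem continuous (h : IsLipschitzBump g L R) : Continuous g :=
  continuous_of_abs_sub_le_mul h.abs_sub_le

theorem mono {L' R' : ℝ} (h : IsLipschitzBump g L R) (hL : L ≤ L') (hR : R ≤ R') :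
    IsLipschitzBump g L' R' where
  nonneg := h.nonneg.trans hL
  abs_le x := (h.abs_le x).trans hL
  abs_sub_le x y := (h.abs_sub_le x y).trans (by gcongr)
  eq_zero_of_le x hx := h.eq_zero_of_le x (hR.trans hx)

theorem mul (h : IsLipschitzBump g L R) (hM : ∀ x, |f x| ≤ M) (hK₀ : 0 ≤ K)
    (hK : ∀ x y, |f x - f y| ≤ K * ‖x - y‖) :
    IsLipschitzBump (fun x ↦ g x * f x) (L * (M + K)) R := by
  have hL := h.nonneg
  have hM₀ : 0 ≤ M := (abs_nonneg _).trans (hM 0)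
  refine ⟨by positivity, fun x ↦ ?_, fun x y ↦ ?_,
    fun x hx ↦ by rw [h.eq_zero_of_le x hx, zero_mul]⟩
  · calc |g x * f x| = |g x| * |f x| := abs_mul _ _
      _ ≤ L * (M + K) := by
        gcongr
        exacts [h.abs_le x, (hM x).trans (le_add_of_nonneg_right hK₀)]
  · calc |g x * f x - g y * f y| = |(g x - g y) * f x + g y * (f x - f y)| := by ring_nf
      _ ≤ |g x - g y| * |f x| + |g y| * |f x - f y| := by
        simpa only [abs_mul] using abs_add_le ((g x - g y) * f x) (g y * (f x - f y))
      _ ≤ L * ‖x - y‖ * M + L * (K * ‖x - y‖) := by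
        gcongr
        exacts [h.abs_sub_le x y, hM x, h.abs_le y, hK x y]
      _ = L * (M + K) * ‖x - y‖ := by ring

theorem apply_add_inv_smul_eq_zero [NormedSpace ℝ E] (h : IsLipschitzBump g L R) {z v : E} {s : ℝ}
    (hs : 0 < s) (hz : ‖z‖ < R) (hv : 2 * R * s ≤ ‖v‖) : g (z + s⁻¹ • v) = 0 := by
  apply h.eq_zero_of_le
  have hv' : 2 * R ≤ ‖s⁻¹ • v‖ := by
    rwa [norm_smul, norm_inv, Real.norm_of_nonneg hs.le, ← div_eq_inv_mul, le_div_iff₀ hs]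
  have := norm_sub_le_norm_add (s⁻¹ • v) z
  rw [add_comm (s⁻¹ • v)] at this
  linarith

end IsLipschitzBump

theorem exists_isLipschitzBump_of_lipschitzWith {g : E → ℝ} {K : NNReal}
    (hg : LipschitzWith K g) (hgc : HasCompactSupport g) : ∃ L R, IsLipschitzBump g L R := by
  obtain ⟨C, hC⟩ := hgc.exists_bound_of_continuous hg.continuous
  obtain ⟨r, hr⟩ := hgc.isBounded.subset_ball 0
  refine ⟨max C K, r, K.2.trans (le_max_right _ _), fun x ↦ (hC x).trans (le_max_left _ _),
    fun x y ↦ ?_, fun x hx ↦ image_eq_zero_of_notMem_tsupport fun hxt ↦ ?_⟩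
  · rw [← Real.dist_eq, ← dist_eq_norm]
    refine (hg.dist_le_mul x y).trans ?_
    gcongr
    exact le_max_right _ _
  · exact (mem_ball_zero_iff.1 (hr hxt)).not_ge hx

end LipschitzBumps

section ScaleKernel

variable {E : Type*} [NormedAddCommGroup E] [NormedSpace ℝ E]

local notation "d" => Module.finrank ℝ E

/-- The contribution `χ(x) χ(y) ψ(y + (x - y) / s) s^{-(d + 1)}` of the scale `s` to the singular
kernel. -/
noncomputable def kernelDensity (χ ψ : E → ℝ) (x y : E) (s : ℝ) : ℝ :=
  χ x * χ y * ψ (y + s⁻¹ • (x - y)) * (s ^ (d + 1))⁻¹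

/-- The part of the singular kernel contributed by the scales `2⁻ʲ⁻¹ < s ≤ 2⁻ʲ`. -/
noncomputable def dyadicPiece (χ ψ : E → ℝ) (j : ℕ) (x y : E) : ℝ :=
  ∫ s in Ioc ((1 / 2 : ℝ) ^ (j + 1)) ((1 / 2) ^ j), kernelDensity χ ψ x y s

/-- `g(y) ψ(y + (x - y) / s)` with the multiple `g(x) ψ(x + (x - y) / s)` of a function of `y` of
integral zero subtracted. The difference is small because both factors are Lipschitz. -/
noncomputable def centeredIntegrand (ψ g : E → ℝ) (x : E) (s : ℝ) (y : E) : ℝ :=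
  g y * ψ (y + s⁻¹ • (x - y)) - g x * ψ (x + s⁻¹ • (x - y))

theorem centeredIntegrand_self (ψ g : E → ℝ) (x : E) (s : ℝ) : centeredIntegrand ψ g x s x = 0 :=
  sub_self _

theorem abs_mul_mul_sub_mul_mul_le {a b c a' b' c' L : ℝ} (ha' : |a'| ≤ L) (hb : |b| ≤ L)
    (hb' : |b'| ≤ L) (hc : |c| ≤ L) :
    |a * b * c - a' * b' * c'| ≤ L ^ 2 * (|a - a'| + |b - b'| + |c - c'|) := by
  have hL : 0 ≤ L := (abs_nonneg b).trans hb
  calc |a * b * c - a' * b' * c'|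
      = |(a - a') * b * c + a' * (b - b') * c + a' * b' * (c - c')| := by ring_nf
    _ ≤ |a - a'| * |b| * |c| + |a'| * |b - b'| * |c| + |a'| * |b'| * |c - c'| := by
      simpa only [abs_mul] using
        abs_add_three ((a - a') * b * c) (a' * (b - b') * c) (a' * b' * (c - c'))
    _ ≤ |a - a'| * L * L + L * |b - b'| * L + L * L * |c - c'| := by gcongr
    _ = L ^ 2 * (|a - a'| + |b - b'| + |c - c'|) := by ring

theorem norm_dilate_sub_dilate_le {s : ℝ} (hs : 0 < s) (hs₁ : s ≤ 1) (x y x' y' : E) :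
    ‖y + s⁻¹ • (x - y) - (y' + s⁻¹ • (x' - y'))‖ ≤ s⁻¹ * (‖x - x'‖ + ‖y - y'‖) := by
  have hinv : 1 ≤ s⁻¹ := (one_le_inv₀ hs).2 hs₁
  calc ‖y + s⁻¹ • (x - y) - (y' + s⁻¹ • (x' - y'))‖
      = ‖s⁻¹ • (x - x') - (s⁻¹ - 1) • (y - y')‖ := by congr 1; module
    _ ≤ s⁻¹ * ‖x - x'‖ + (s⁻¹ - 1) * ‖y - y'‖ := by
      refine (norm_sub_le _ _).trans_eq ?_
      rw [norm_smul, norm_smul, Real.norm_of_nonneg (by linarith),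
        Real.norm_of_nonneg (sub_nonneg.2 hinv)]
    _ ≤ s⁻¹ * (‖x - x'‖ + ‖y - y'‖) := by linarith [norm_nonneg (y - y')]

theorem inv_pow_succ_mul_mul_pow {s : ℝ} (hs : s ≠ 0) (a : ℝ) (k : ℕ) :
    (s ^ (k + 1))⁻¹ * (a * s * (a * s) ^ k) = a ^ (k + 1) := by
  rw [← pow_succ', mul_pow, mul_left_comm, inv_mul_cancel₀ (pow_ne_zero _ hs), mul_one]

theorem continuousOn_kernelDensity {χ ψ : E → ℝ} (hχ : Continuous χ) (hψ : Continuous ψ) :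
    ContinuousOn (fun p : (E × E) × ℝ ↦ kernelDensity χ ψ p.1.1 p.1.2 p.2) (univ ×ˢ Ioi 0) := by
  have hinv : ContinuousOn (fun p : (E × E) × ℝ ↦ p.2⁻¹) (univ ×ˢ Ioi 0) :=
    continuousOn_snd.inv₀ fun p hp ↦ ne_of_gt hp.2
  have hpow : ContinuousOn (fun p : (E × E) × ℝ ↦ (p.2 ^ (d + 1))⁻¹) (univ ×ˢ Ioi 0) :=
    (continuousOn_snd.pow _).inv₀ fun p hp ↦ pow_ne_zero _ (ne_of_gt hp.2)
  refine ContinuousOn.mul (ContinuousOn.mul (by fun_prop) (hψ.comp_continuousOn' ?_)) hpow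
  exact ContinuousOn.add (by fun_prop) (hinv.smul (by fun_prop))

theorem continuousOn_kernelDensity_left {χ ψ : E → ℝ} (hχ : Continuous χ) (hψ : Continuous ψ)
    (y : E) :
    ContinuousOn (Function.uncurry fun x s ↦ kernelDensity χ ψ x y s) (univ ×ˢ Ioi 0) :=
  (continuousOn_kernelDensity hχ hψ).comp (f := fun p : E × ℝ ↦ ((p.1, y), p.2)) (by fun_prop)
    fun _ hp ↦ ⟨mem_univ _, hp.2⟩

theorem continuousOn_kernelDensity_mul {χ ψ f : E → ℝ} (hχ : Continuous χ) (hψ : Continuous ψ)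
    (hf : Continuous f) (x : E) :
    ContinuousOn (Function.uncurry fun y s ↦ kernelDensity χ ψ x y s * f y) (univ ×ˢ Ioi 0) :=
  ((continuousOn_kernelDensity hχ hψ).comp (f := fun p : E × ℝ ↦ ((x, p.1), p.2)) (by fun_prop)
    fun _ hp ↦ ⟨mem_univ _, hp.2⟩).mul (by fun_prop)

theorem continuousOn_centeredIntegrand {ψ g : E → ℝ} (hψ : Continuous ψ) (hg : Continuous g)
    (x : E) :
    ContinuousOn (Function.uncurry (centeredIntegrand ψ g x)) (Ioi 0 ×ˢ univ) := by
  have hinv : ContinuousOn (fun p : ℝ × E ↦ p.1⁻¹) (Ioi 0 ×ˢ univ) :=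
    continuousOn_fst.inv₀ fun p hp ↦ ne_of_gt hp.1
  refine ContinuousOn.sub (ContinuousOn.mul (by fun_prop) ?_) (ContinuousOn.mul (by fun_prop) ?_)
  all_goals
    exact hψ.comp_continuousOn' (ContinuousOn.add (by fun_prop) (hinv.smul (by fun_prop)))

section DyadicScales

variable {j : ℕ} {M : ℝ}

theorem abs_setIntegral_Ioc_half_pow_le {G : ℝ → ℝ}
    (hG : ∀ s, 0 < s → s ≤ 1 → (1 / 2) ^ (j + 1) ≤ s → |G s| ≤ M) :
    |∫ s in Ioc ((1 / 2 : ℝ) ^ (j + 1)) ((1 / 2) ^ j), G s| ≤ M * (1 / 2) ^ (j + 1) := by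
  have hle : (1 / 2 : ℝ) ^ (j + 1) ≤ (1 / 2) ^ j :=
    pow_le_pow_of_le_one (by norm_num) (by norm_num) j.le_succ
  calc |∫ s in Ioc ((1 / 2 : ℝ) ^ (j + 1)) ((1 / 2) ^ j), G s|
      ≤ M * volume.real (Ioc ((1 / 2 : ℝ) ^ (j + 1)) ((1 / 2) ^ j)) :=
        norm_setIntegral_le_of_norm_le_const (f := G) measure_Ioc_lt_top fun s hs ↦
          hG s (lt_trans (by positivity) hs.1)
            (hs.2.trans (pow_le_one₀ (by norm_num) (by norm_num))) hs.1.le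
    _ = M * (1 / 2) ^ (j + 1) := by rw [Real.volume_real_Ioc_of_le hle]; ring

theorem inv_pow_le_of_half_pow_le {s : ℝ} (h : (1 / 2 : ℝ) ^ (j + 1) ≤ s) (m : ℕ) :
    (s ^ m)⁻¹ ≤ (2 ^ (j + 1)) ^ m := by
  have h₀ : (0 : ℝ) < (1 / 2) ^ (j + 1) := by positivity
  have hs : s⁻¹ ≤ 2 ^ (j + 1) := by simpa using inv_anti₀ h₀ h
  rw [← inv_pow]
  exact pow_le_pow_left₀ (inv_nonneg.2 (h₀.le.trans h)) hs m

end DyadicScales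

section Measure

variable [FiniteDimensional ℝ E] [MeasureSpace E] [BorelSpace E]
  [(volume : Measure E).IsAddHaarMeasure]

local notation "ω" => volume.real (ball (0 : E) 1)

theorem integrable_prod_Ioc_of_continuousOn {F : E → ℝ → ℝ} {a b R : ℝ} (ha : 0 < a)
    (hF : ContinuousOn (Function.uncurry F) (univ ×ˢ Ioi 0))
    (hR : ∀ y s, 0 < s → R ≤ ‖y‖ → F y s = 0) :
    Integrable (Function.uncurry F) (volume.prod (volume.restrict (Ioc a b))) := by
  have hcompact : IntegrableOn (Function.uncurry F) (closedBall (0 : E) R ×ˢ Icc a b)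
      (volume.prod volume) :=
    (hF.mono fun p hp ↦ ⟨mem_univ _, ha.trans_le hp.2.1⟩).integrableOn_compact
      ((isCompact_closedBall 0 R).prod isCompact_Icc)
  have hstrip : IntegrableOn (Function.uncurry F) ((univ : Set E) ×ˢ Ioc a b)
      (volume.prod volume) := by
    refine hcompact.of_forall_sdiff_eq_zero (MeasurableSet.univ.prod measurableSet_Ioc) ?_
    rintro ⟨y, s⟩ ⟨⟨_, hs⟩, hys⟩
    refine hR y s (ha.trans hs.1) (le_of_not_gt fun hy ↦ hys ⟨?_, Ioc_subset_Icc_self hs⟩)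
    exact mem_closedBall_zero_iff.2 hy.le
  rwa [IntegrableOn, ← Measure.prod_restrict, Measure.restrict_univ] at hstrip

theorem setIntegral_setIntegral_Ioc_comm {F : E → ℝ → ℝ} {a b R : ℝ} (ha : 0 < a)
    (hF : ContinuousOn (Function.uncurry F) (univ ×ˢ Ioi 0))
    (hR : ∀ y s, 0 < s → R ≤ ‖y‖ → F y s = 0) (A : Set E) :
    ∫ y in A, ∫ s in Ioc a b, F y s = ∫ s in Ioc a b, ∫ y in A, F y s :=
  integral_integral_swap ((integrable_prod_Ioc_of_continuousOn ha hF hR).mono_measure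
    (Measure.prod_mono Measure.restrict_le_self le_rfl))

theorem integral_comp_add_inv_smul (ψ : E → ℝ) (x : E) {s : ℝ} (hs : 0 < s) :
    ∫ w, ψ (x + s⁻¹ • w) = s ^ d * ∫ w, ψ w := by
  rw [Measure.integral_comp_inv_smul volume (fun w ↦ ψ (x + w)) s, abs_of_pos (by positivity),
    smul_eq_mul, integral_add_left_eq_self (fun w ↦ ψ w)]

/-- The data of the singular kernel: a Lipschitz cutoff `χ` and a Lipschitz profile `ψ` of
integral zero, both supported in the ball of radius `R`. -/
structure IsKernelData (χ ψ : E → ℝ) (L R : ℝ) : Prop where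
  one_le_radius : 1 ≤ R
  cutoff : IsLipschitzBump χ L R
  profile : IsLipschitzBump ψ L R
  integral_profile : ∫ x, ψ x = 0

omit [NormedSpace ℝ E] [FiniteDimensional ℝ E] [BorelSpace E]
  [(volume : Measure E).IsAddHaarMeasure] in
theorem exists_isKernelData {χ ψ : E → ℝ} {K K' : NNReal} (hχ : LipschitzWith K χ)
    (hχc : HasCompactSupport χ) (hψ : LipschitzWith K' ψ) (hψc : HasCompactSupport ψ)
    (hψ₀ : ∫ x, ψ x = 0) : ∃ L R, IsKernelData χ ψ L R := by
  obtain ⟨L₁, R₁, h₁⟩ := exists_isLipschitzBump_of_lipschitzWith hχ hχc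
  obtain ⟨L₂, R₂, h₂⟩ := exists_isLipschitzBump_of_lipschitzWith hψ hψc
  exact ⟨max L₁ L₂, max 1 (max R₁ R₂), le_max_left _ _,
    h₁.mono (le_max_left _ _) ((le_max_left _ _).trans (le_max_right _ _)),
    h₂.mono (le_max_right _ _) ((le_max_right _ _).trans (le_max_right _ _)), hψ₀⟩


namespace IsKernelData

variable {χ ψ f g : E → ℝ} {L M R s : ℝ} {x y : E}

section Density

omit [FiniteDimensional ℝ E] [BorelSpace E] [(volume : Measure E).IsAddHaarMeasure]

theorem kernelDensity_eq_zero_left (h : IsKernelData χ ψ L R) (hx : R ≤ ‖x‖) :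
    kernelDensity χ ψ x y s = 0 := by
  rw [kernelDensity, h.cutoff.eq_zero_of_le x hx, zero_mul, zero_mul, zero_mul]

theorem kernelDensity_eq_zero_right (h : IsKernelData χ ψ L R) (hy : R ≤ ‖y‖) :
    kernelDensity χ ψ x y s = 0 := by
  rw [kernelDensity, h.cutoff.eq_zero_of_le y hy, mul_zero, zero_mul, zero_mul]

theorem kernelDensity_eq_zero_of_le (h : IsKernelData χ ψ L R) (hs : 0 < s)
    (hxy : 2 * R * s ≤ ‖x - y‖) : kernelDensity χ ψ x y s = 0 := by
  rcases le_or_gt R ‖y‖ with hy | hy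
  · exact h.kernelDensity_eq_zero_right hy
  · rw [kernelDensity, h.profile.apply_add_inv_smul_eq_zero hs hy hxy, mul_zero, zero_mul]

theorem abs_kernelDensity_le (h : IsKernelData χ ψ L R) (x y : E) (hs : 0 < s) :
    |kernelDensity χ ψ x y s| ≤ L ^ 3 * (s ^ (d + 1))⁻¹ := by
  have := h.cutoff.nonneg
  rw [kernelDensity, abs_mul, abs_mul, abs_mul, abs_of_pos (a := (s ^ (d + 1))⁻¹) (by positivity),
    pow_succ L 2, pow_two]
  gcongr
  exacts [h.cutoff.abs_le x, h.cutoff.abs_le y, h.profile.abs_le _]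

theorem abs_kernelDensity_sub_le (h : IsKernelData χ ψ L R) (hs : 0 < s) (hs₁ : s ≤ 1)
    (x y x' y' : E) :
    |kernelDensity χ ψ x y s - kernelDensity χ ψ x' y' s| ≤
      3 * L ^ 3 * s⁻¹ * (s ^ (d + 1))⁻¹ * (‖x - x'‖ + ‖y - y'‖) := by
  have hL := h.cutoff.nonneg
  have hinv : 1 ≤ s⁻¹ := (one_le_inv₀ hs).2 hs₁
  have hx := norm_nonneg (x - x')
  have hy := norm_nonneg (y - y')
  set D := ‖x - x'‖ + ‖y - y'‖
  have hχ {z z' : E} (hz : ‖z - z'‖ ≤ D) : |χ z - χ z'| ≤ L * (s⁻¹ * D) :=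
    (h.cutoff.abs_sub_le z z').trans
      (by gcongr; exact hz.trans (le_mul_of_one_le_left (by positivity) hinv))
  have hψ := (h.profile.abs_sub_le (y + s⁻¹ • (x - y)) (y' + s⁻¹ • (x' - y'))).trans
    (mul_le_mul_of_nonneg_left (norm_dilate_sub_dilate_le hs hs₁ x y x' y') hL)
  calc |kernelDensity χ ψ x y s - kernelDensity χ ψ x' y' s|
      = |χ x * χ y * ψ (y + s⁻¹ • (x - y)) - χ x' * χ y' * ψ (y' + s⁻¹ • (x' - y'))| *
          (s ^ (d + 1))⁻¹ := by
        rw [kernelDensity, kernelDensity, ← sub_mul, abs_mul, abs_of_pos (a := (s ^ (d + 1))⁻¹)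
          (by positivity)]
    _ ≤ L ^ 2 * (L * (s⁻¹ * D) + L * (s⁻¹ * D) + L * (s⁻¹ * D)) * (s ^ (d + 1))⁻¹ := by
        gcongr
        refine (abs_mul_mul_sub_mul_mul_le (h.cutoff.abs_le x') (h.cutoff.abs_le y)
          (h.cutoff.abs_le y') (h.profile.abs_le _)).trans ?_
        gcongr
        exacts [hχ (le_add_of_nonneg_right hy), hχ (le_add_of_nonneg_left hx)]
    _ = 3 * L ^ 3 * s⁻¹ * (s ^ (d + 1))⁻¹ * D := by ring

theorem integrableOn_kernelDensity (h : IsKernelData χ ψ L R) {a b : ℝ} (ha : 0 < a) (x y : E) :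
    IntegrableOn (kernelDensity χ ψ x y) (Ioc a b) := by
  refine IntegrableOn.mono_set (ContinuousOn.integrableOn_compact isCompact_Icc ?_)
    Ioc_subset_Icc_self
  exact (continuousOn_kernelDensity h.cutoff.continuous h.profile.continuous).comp
    (f := fun s : ℝ ↦ ((x, y), s)) (by fun_prop) fun s hs ↦ ⟨mem_univ _, ha.trans_le hs.1⟩

theorem abs_dyadicPiece_le (h : IsKernelData χ ψ L R) (j : ℕ) (x y : E) :
    |dyadicPiece χ ψ j x y| ≤ L ^ 3 * 2 ^ d * (2 ^ j) ^ d := by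
  have hL := h.cutoff.nonneg
  calc |dyadicPiece χ ψ j x y|
      ≤ L ^ 3 * (2 ^ (j + 1)) ^ (d + 1) * (1 / 2) ^ (j + 1) :=
        abs_setIntegral_Ioc_half_pow_le fun s hs _ hsj ↦ (h.abs_kernelDensity_le x y hs).trans
          (by gcongr; exact inv_pow_le_of_half_pow_le hsj _)
    _ = L ^ 3 * (2 * 2 ^ j) ^ d * (2 ^ (j + 1) * (1 / 2) ^ (j + 1)) := by
        rw [pow_succ _ d, pow_succ' 2 j]; ring
    _ = L ^ 3 * 2 ^ d * (2 ^ j) ^ d := by rw [two_pow_mul_half_pow, mul_pow]; ring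

theorem abs_dyadicPiece_sub_le (h : IsKernelData χ ψ L R) (j : ℕ) (x y x' y' : E) :
    |dyadicPiece χ ψ j x y - dyadicPiece χ ψ j x' y'| ≤
      3 * L ^ 3 * 2 ^ (d + 1) * (2 ^ j) ^ (d + 1) * (‖x - x'‖ + ‖y - y'‖) := by
  have hL := h.cutoff.nonneg
  rw [dyadicPiece, dyadicPiece, ← integral_sub (h.integrableOn_kernelDensity (by positivity) _ _)
    (h.integrableOn_kernelDensity (by positivity) _ _)]
  set D := ‖x - x'‖ + ‖y - y'‖
  calc _ ≤ 3 * L ^ 3 * 2 ^ (j + 1) * (2 ^ (j + 1)) ^ (d + 1) * D * (1 / 2) ^ (j + 1) :=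
        abs_setIntegral_Ioc_half_pow_le fun s hs hs₁ hsj ↦
          (h.abs_kernelDensity_sub_le hs hs₁ x y x' y').trans <| by
            gcongr
            exacts [by simpa only [pow_one] using inv_pow_le_of_half_pow_le hsj 1,
              inv_pow_le_of_half_pow_le hsj _]
    _ = 3 * L ^ 3 * (2 * 2 ^ j) ^ (d + 1) * D * (2 ^ (j + 1) * (1 / 2) ^ (j + 1)) := by
        rw [← pow_succ' 2 j]; ring
    _ = 3 * L ^ 3 * 2 ^ (d + 1) * (2 ^ j) ^ (d + 1) * D := by
        rw [two_pow_mul_half_pow, mul_pow]; ring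

theorem dyadicPiece_eq_zero_of_le (h : IsKernelData χ ψ L R) {j : ℕ}
    (hxy : 2 * R * (1 / 2) ^ j ≤ ‖x - y‖) : dyadicPiece χ ψ j x y = 0 := by
  have := h.one_le_radius
  refine setIntegral_eq_zero_of_forall_eq_zero fun s hs ↦
    h.kernelDensity_eq_zero_of_le (lt_trans (by positivity) hs.1) (le_trans ?_ hxy)
  gcongr
  exact hs.2

theorem centeredIntegrand_eq_zero_of_le (h : IsKernelData χ ψ L R) (hg : IsLipschitzBump g M R)
    (hx : ‖x‖ < R) (hs : 0 < s) (hxy : 2 * R * s ≤ ‖x - y‖) :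
    centeredIntegrand ψ g x s y = 0 := by
  rw [centeredIntegrand, h.profile.apply_add_inv_smul_eq_zero hs hx hxy, mul_zero, sub_zero]
  rcases le_or_gt R ‖y‖ with hy | hy
  · rw [hg.eq_zero_of_le y hy, zero_mul]
  · rw [h.profile.apply_add_inv_smul_eq_zero hs hy hxy, mul_zero]

theorem abs_centeredIntegrand_le (h : IsKernelData χ ψ L R) (hg : IsLipschitzBump g M R)
    (hx : ‖x‖ < R) (hs : 0 < s) (y : E) :
    |centeredIntegrand ψ g x s y| ≤ 2 * M * L * (2 * R * s) := by
  have hL := h.cutoff.nonneg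
  have hM := hg.nonneg
  have hR := h.one_le_radius
  rcases le_or_gt (2 * R * s) ‖x - y‖ with hxy | hxy
  · rw [h.centeredIntegrand_eq_zero_of_le hg hx hs hxy, abs_zero]
    positivity
  have hyx : ‖y - x‖ ≤ 2 * R * s := by rw [norm_sub_rev]; exact hxy.le
  have hψ : |ψ (y + s⁻¹ • (x - y)) - ψ (x + s⁻¹ • (x - y))| ≤ L * (2 * R * s) := by
    refine (h.profile.abs_sub_le _ _).trans ?_
    rw [add_sub_add_right_eq_sub]
    gcongr
  calc |centeredIntegrand ψ g x s y|
      = |(g y - g x) * ψ (y + s⁻¹ • (x - y)) +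
          g x * (ψ (y + s⁻¹ • (x - y)) - ψ (x + s⁻¹ • (x - y)))| := by
        rw [centeredIntegrand]; ring_nf
    _ ≤ |g y - g x| * |ψ (y + s⁻¹ • (x - y))| +
          |g x| * |ψ (y + s⁻¹ • (x - y)) - ψ (x + s⁻¹ • (x - y))| := by
        simpa only [abs_mul] using abs_add_le ((g y - g x) * ψ (y + s⁻¹ • (x - y)))
          (g x * (ψ (y + s⁻¹ • (x - y)) - ψ (x + s⁻¹ • (x - y))))
    _ ≤ M * (2 * R * s) * L + M * (L * (2 * R * s)) := by
        gcongr
        exacts [(hg.abs_sub_le y x).trans (by gcongr), h.profile.abs_le _, hg.abs_le x]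
    _ = 2 * M * L * (2 * R * s) := by ring

end Density

section Marginals

theorem integrable_profile (h : IsKernelData χ ψ L R) : Integrable ψ :=
  integrable_of_continuous_of_eq_zero_of_le_norm h.profile.continuous h.profile.eq_zero_of_le

theorem integrable_dilate_profile (h : IsKernelData χ ψ L R) (z : E) (hs : 0 < s) :
    Integrable fun w ↦ ψ (z + s⁻¹ • w) :=
  (h.integrable_profile.comp_add_left z).comp_smul (inv_ne_zero hs.ne')

theorem integral_dilate_profile (h : IsKernelData χ ψ L R) (z : E) (hs : 0 < s) :
    ∫ w, ψ (z + s⁻¹ • w) = 0 := by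
  rw [integral_comp_add_inv_smul ψ z hs, h.integral_profile, mul_zero]

theorem integrable_dilate_profile_sub (h : IsKernelData χ ψ L R) (x : E) (hs : 0 < s) :
    Integrable fun y ↦ ψ (x + s⁻¹ • (x - y)) :=
  (h.integrable_dilate_profile x hs).comp_sub_left x

theorem integral_dilate_profile_sub (h : IsKernelData χ ψ L R) (x : E) (hs : 0 < s) :
    ∫ y, ψ (x + s⁻¹ • (x - y)) = 0 :=
  (integral_sub_left_eq_self (fun w ↦ ψ (x + s⁻¹ • w)) volume x).trans
    (h.integral_dilate_profile x hs)

theorem integrable_centeredIntegrand (h : IsKernelData χ ψ L R) (hg : IsLipschitzBump g M R) (x : E)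
    (hs : 0 < s) : Integrable (centeredIntegrand ψ g x s) := by
  have hgc := hg.continuous
  have hψc := h.profile.continuous
  refine Integrable.sub (integrable_of_continuous_of_eq_zero_of_le_norm (by fun_prop) (R := R)
    fun y hy ↦ ?_) ((h.integrable_dilate_profile_sub x hs).const_mul _)
  rw [hg.eq_zero_of_le y hy, zero_mul]

theorem integral_kernelDensity_mul (h : IsKernelData χ ψ L R)
    (hg : IsLipschitzBump (fun y ↦ χ y * f y) M R) (x : E) (hs : 0 < s) :
    ∫ y, kernelDensity χ ψ x y s * f y =
      χ x * (s ^ (d + 1))⁻¹ * ∫ y, centeredIntegrand ψ (fun y ↦ χ y * f y) x s y := by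
  have hcenter : ∫ y, centeredIntegrand ψ (fun y ↦ χ y * f y) x s y =
      ∫ y, χ y * f y * ψ (y + s⁻¹ • (x - y)) := by
    have hadd := integral_add (h.integrable_centeredIntegrand hg x hs)
      ((h.integrable_dilate_profile_sub x hs).const_mul (χ x * f x))
    rw [integral_const_mul, h.integral_dilate_profile_sub x hs, mul_zero, add_zero] at hadd
    rw [← hadd]
    simp only [centeredIntegrand, sub_add_cancel]
  rw [hcenter, ← integral_const_mul]
  congr 1 with y
  rw [kernelDensity]
  ring

theorem abs_mul_setIntegral_centeredIntegrand_le (h : IsKernelData χ ψ L R)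
    (hg : IsLipschitzBump g M R) (x : E) (hs : 0 < s) {A : Set E} (hA : MeasurableSet A) :
    |χ x * (s ^ (d + 1))⁻¹ * ∫ y in A, centeredIntegrand ψ g x s y| ≤
      2 * M * L ^ 2 * (2 * R) ^ (d + 1) * ω := by
  have hL := h.cutoff.nonneg
  have hM := hg.nonneg
  have hR := h.one_le_radius
  rcases le_or_gt R ‖x‖ with hx | hx
  · rw [h.cutoff.eq_zero_of_le x hx, zero_mul, zero_mul, abs_zero]
    positivity
  have hint : |∫ y in A, centeredIntegrand ψ g x s y| ≤
      2 * M * L * (2 * R * s) * ((2 * R * s) ^ d * ω) := by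
    rw [← integral_indicator hA]
    refine abs_integral_le_of_eq_zero_off_ball (by positivity) x (fun y ↦ ?_) fun y hxy ↦ ?_
    · exact (norm_indicator_le_norm_self (centeredIntegrand ψ g x s) y).trans
        (h.abs_centeredIntegrand_le hg hx hs y)
    · exact indicator_apply_eq_zero.2 fun _ ↦ h.centeredIntegrand_eq_zero_of_le hg hx hs hxy
  calc |χ x * (s ^ (d + 1))⁻¹ * ∫ y in A, centeredIntegrand ψ g x s y|
      ≤ L * (s ^ (d + 1))⁻¹ * (2 * M * L * (2 * R * s) * ((2 * R * s) ^ d * ω)) := by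
        rw [abs_mul, abs_mul, abs_of_pos (a := (s ^ (d + 1))⁻¹) (by positivity)]
        gcongr
        exact h.cutoff.abs_le x
    _ = 2 * M * L ^ 2 * ((s ^ (d + 1))⁻¹ * (2 * R * s * (2 * R * s) ^ d)) * ω := by ring
    _ = 2 * M * L ^ 2 * (2 * R) ^ (d + 1) * ω := by rw [inv_pow_succ_mul_mul_pow hs.ne']

theorem abs_integral_kernelDensity_mul_le (h : IsKernelData χ ψ L R)
    (hg : IsLipschitzBump (fun y ↦ χ y * f y) M R) (x : E) (hs : 0 < s) :
    |∫ y, kernelDensity χ ψ x y s * f y| ≤ 2 * M * L ^ 2 * (2 * R) ^ (d + 1) * ω := by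
  rw [h.integral_kernelDensity_mul hg x hs, ← setIntegral_univ]
  exact h.abs_mul_setIntegral_centeredIntegrand_le hg x hs .univ

theorem integral_kernelDensity_left (h : IsKernelData χ ψ L R) (y : E) (hs : 0 < s) :
    ∫ x, kernelDensity χ ψ x y s =
      χ y * (s ^ (d + 1))⁻¹ * ∫ x, (χ x - χ y) * ψ (y + s⁻¹ • (x - y)) := by
  have hχc := h.cutoff.continuous
  have hψc := h.profile.continuous
  have hzero : ∫ x, ψ (y + s⁻¹ • (x - y)) = 0 :=
    (integral_sub_right_eq_self (μ := volume) (fun w ↦ ψ (y + s⁻¹ • w)) y).trans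
      (h.integral_dilate_profile y hs)
  have hint : Integrable fun x ↦ χ x * ψ (y + s⁻¹ • (x - y)) :=
    integrable_of_continuous_of_eq_zero_of_le_norm (by fun_prop) (R := R) fun x hx ↦ by
      rw [h.cutoff.eq_zero_of_le x hx, zero_mul]
  simp_rw [sub_mul]
  rw [integral_sub hint (((h.integrable_dilate_profile y hs).comp_sub_right y).const_mul _),
    integral_const_mul, hzero, mul_zero, sub_zero, ← integral_const_mul]
  congr 1 with x
  rw [kernelDensity]
  ring

theorem abs_integral_kernelDensity_left_le (h : IsKernelData χ ψ L R) (y : E) (hs : 0 < s) :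
    |∫ x, kernelDensity χ ψ x y s| ≤ L ^ 3 * (2 * R) ^ (d + 1) * ω := by
  have hL := h.cutoff.nonneg
  have hR := h.one_le_radius
  rcases le_or_gt R ‖y‖ with hy | hy
  · simp_rw [h.kernelDensity_eq_zero_right hy, integral_zero, abs_zero]
    positivity
  have hψ {x : E} (hxy : 2 * R * s ≤ ‖x - y‖) : ψ (y + s⁻¹ • (x - y)) = 0 :=
    h.profile.apply_add_inv_smul_eq_zero hs hy hxy
  have hint : |∫ x, (χ x - χ y) * ψ (y + s⁻¹ • (x - y))| ≤
      L * (2 * R * s) * L * ((2 * R * s) ^ d * ω) := by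
    refine abs_integral_le_of_eq_zero_off_ball (by positivity) y (fun x ↦ ?_) fun x hxy ↦ ?_
    · rcases le_or_gt (2 * R * s) ‖x - y‖ with hxy | hxy
      · rw [hψ hxy, mul_zero, abs_zero]
        positivity
      · rw [abs_mul]
        gcongr
        exacts [(h.cutoff.abs_sub_le x y).trans (by gcongr), h.profile.abs_le _]
    · rw [norm_sub_rev] at hxy
      rw [hψ hxy, mul_zero]
  rw [h.integral_kernelDensity_left y hs, abs_mul, abs_mul,
    abs_of_pos (a := (s ^ (d + 1))⁻¹) (by positivity)]
  calc |χ y| * (s ^ (d + 1))⁻¹ * |∫ x, (χ x - χ y) * ψ (y + s⁻¹ • (x - y))|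
      ≤ L * (s ^ (d + 1))⁻¹ * (L * (2 * R * s) * L * ((2 * R * s) ^ d * ω)) := by
        gcongr
        exact h.cutoff.abs_le y
    _ = L ^ 3 * ((s ^ (d + 1))⁻¹ * (2 * R * s * (2 * R * s) ^ d)) * ω := by ring
    _ = L ^ 3 * (2 * R) ^ (d + 1) * ω := by rw [inv_pow_succ_mul_mul_pow hs.ne']

end Marginals

section DyadicPiece

theorem integral_dyadicPiece_mul (h : IsKernelData χ ψ L R) (hf : Continuous f) (j : ℕ) (x : E) :
    ∫ y, dyadicPiece χ ψ j x y * f y =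
      ∫ s in Ioc ((1 / 2 : ℝ) ^ (j + 1)) ((1 / 2) ^ j), ∫ y, kernelDensity χ ψ x y s * f y := by
  simp_rw [dyadicPiece, ← integral_mul_const]
  simpa only [Measure.restrict_univ] using setIntegral_setIntegral_Ioc_comm (by positivity)
    (continuousOn_kernelDensity_mul h.cutoff.continuous h.profile.continuous hf x) (R := R)
    (fun y s _ hy ↦ by rw [h.kernelDensity_eq_zero_right hy, zero_mul]) univ

theorem integral_dyadicPiece_left (h : IsKernelData χ ψ L R) (j : ℕ) (y : E) :
    ∫ x, dyadicPiece χ ψ j x y =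
      ∫ s in Ioc ((1 / 2 : ℝ) ^ (j + 1)) ((1 / 2) ^ j), ∫ x, kernelDensity χ ψ x y s := by
  simp_rw [dyadicPiece]
  simpa only [Measure.restrict_univ] using setIntegral_setIntegral_Ioc_comm (by positivity)
    (continuousOn_kernelDensity_left h.cutoff.continuous h.profile.continuous y) (R := R)
    (fun x s _ hx ↦ h.kernelDensity_eq_zero_left hx) univ

theorem abs_integral_dyadicPiece_right_le (h : IsKernelData χ ψ L R) (j : ℕ) (x : E) :
    |∫ y, dyadicPiece χ ψ j x y| ≤ 2 * L ^ 3 * (2 * R) ^ (d + 1) * ω * (1 / 2) ^ (j + 1) := by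
  have hswap := h.integral_dyadicPiece_mul (continuous_const (y := (1 : ℝ))) j x
  simp only [mul_one] at hswap
  rw [hswap]
  refine abs_setIntegral_Ioc_half_pow_le fun s hs _ _ ↦ ?_
  have := h.abs_integral_kernelDensity_mul_le (f := fun _ ↦ 1) (by simpa using h.cutoff) x hs
  simp only [mul_one] at this
  exact this.trans_eq (by ring)

theorem abs_integral_dyadicPiece_left_le (h : IsKernelData χ ψ L R) (j : ℕ) (y : E) :
    |∫ x, dyadicPiece χ ψ j x y| ≤ L ^ 3 * (2 * R) ^ (d + 1) * ω * (1 / 2) ^ (j + 1) := by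
  rw [h.integral_dyadicPiece_left]
  exact abs_setIntegral_Ioc_half_pow_le fun s hs _ _ ↦ h.abs_integral_kernelDensity_left_le y hs

theorem exists_isDyadicKernelFamily (h : IsKernelData χ ψ L R) :
    ∃ C, IsDyadicKernelFamily (dyadicPiece χ ψ) C R := by
  have hL := h.cutoff.nonneg
  have hR := h.one_le_radius
  set A := 3 * L ^ 3 * 2 ^ (d + 1)
  set B := 2 * L ^ 3 * (2 * R) ^ (d + 1) * ω
  have hA : 0 ≤ A := by positivity
  have hB : 0 ≤ B := by positivity
  have hhalf (j : ℕ) : (1 / 2 : ℝ) ^ (j + 1) ≤ (1 / 2) ^ j :=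
    pow_le_pow_of_le_one (by norm_num) (by norm_num) j.le_succ
  have hmarginal (j : ℕ) : B * (1 / 2) ^ (j + 1) ≤ (A + B) * (1 / 2) ^ j := by
    exact mul_le_mul (le_add_of_nonneg_left hA) (hhalf j) (by positivity) (by positivity)
  refine ⟨A + B, by positivity, fun j ↦ ⟨by positivity, by positivity, hR, fun x y ↦ ?_,
    fun x y x' y' ↦ ?_, fun x y hx ↦ ?_, fun x y hy ↦ ?_⟩, fun j x y ↦ h.dyadicPiece_eq_zero_of_le,
    fun j x ↦ (h.abs_integral_dyadicPiece_right_le j x).trans (hmarginal j), fun j y ↦ ?_⟩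
  · refine (h.abs_dyadicPiece_le j x y).trans ?_
    gcongr
    calc L ^ 3 * 2 ^ d ≤ 3 * L ^ 3 * 2 ^ (d + 1) := by
          gcongr
          exacts [le_mul_of_one_le_left (by positivity) (by norm_num), one_le_two, Nat.le_succ _]
      _ ≤ A + B := le_add_of_nonneg_right hB
  · refine (h.abs_dyadicPiece_sub_le j x y x' y').trans ?_
    gcongr
    exact le_add_of_nonneg_right hB
  · simp only [dyadicPiece, h.kernelDensity_eq_zero_left hx, integral_zero]
  · simp only [dyadicPiece, h.kernelDensity_eq_zero_right hy, integral_zero]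
  · refine (h.abs_integral_dyadicPiece_left_le j y).trans (le_trans ?_ (hmarginal j))
    refine mul_le_mul_of_nonneg_right ?_ (by positivity)
    change _ ≤ 2 * L ^ 3 * (2 * R) ^ (d + 1) * ω
    gcongr
    exact le_mul_of_one_le_left (by positivity) one_le_two

end DyadicPiece

end IsKernelData

end Measure

end ScaleKernel

section PrincipalValue

theorem setIntegral_Ioc_add_setIntegral_Ioc {f : ℝ → ℝ} {a b c : ℝ} (hab : a ≤ b) (hbc : b ≤ c)
    (hf : IntegrableOn f (Ioc a c)) :
    (∫ s in Ioc a b, f s) + ∫ s in Ioc b c, f s = ∫ s in Ioc a c, f s := by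
  rw [← setIntegral_union (Ioc_disjoint_Ioc_of_le le_rfl) measurableSet_Ioc
    (hf.mono_set (Ioc_subset_Ioc_right hbc)) (hf.mono_set (Ioc_subset_Ioc_left hab)),
    Ioc_union_Ioc_eq_Ioc hab hbc]

theorem setIntegral_Ioc_inv_mul_comp_div (G : ℝ → ℝ) {ε : ℝ} (hε : 0 < ε) :
    ∫ s in Ioc (0 : ℝ) 1, s⁻¹ * G (ε / s) = ∫ ρ in Ioi ε, ρ⁻¹ * G ρ := by
  set F : ℝ → ℝ := (Iio (1 : ℝ)).indicator fun s ↦ s⁻¹ * G (ε / s) with hF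
  have hsubst (t : ℝ) (ht : t ∈ Ioi (0 : ℝ)) :
      (|(-1 : ℝ)| * t ^ ((-1 : ℝ) - 1)) • F (t ^ (-1 : ℝ)) =
      (Ioi (1 : ℝ)).indicator (fun t ↦ ε * ((ε * t)⁻¹ * G (ε * t))) t := by
    have ht : 0 < t := ht
    rw [Real.rpow_sub ht, Real.rpow_neg_one, Real.rpow_one, hF]
    by_cases ht₁ : 1 < t
    · rw [indicator_of_mem (show t⁻¹ ∈ Iio (1 : ℝ) from inv_lt_one_of_one_lt₀ ht₁),
        indicator_of_mem (show t ∈ Ioi (1 : ℝ) from ht₁), div_inv_eq_mul, inv_inv, smul_eq_mul,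
        abs_neg, abs_one]
      field_simp
    · have hinv : t⁻¹ ∉ Iio (1 : ℝ) := not_lt.2 ((one_le_inv₀ ht).2 (not_lt.1 ht₁))
      rw [indicator_of_notMem hinv, indicator_of_notMem (show t ∉ Ioi (1 : ℝ) from ht₁), smul_zero]
  calc ∫ s in Ioc (0 : ℝ) 1, s⁻¹ * G (ε / s) = ∫ s in Ioi (0 : ℝ), F s := by
        rw [setIntegral_indicator measurableSet_Iio, Ioi_inter_Iio, integral_Ioc_eq_integral_Ioo]
    _ = ∫ t in Ioi (0 : ℝ), (Ioi (1 : ℝ)).indicator (fun t ↦ ε * ((ε * t)⁻¹ * G (ε * t))) t := by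
        rw [← integral_comp_rpow_Ioi F (by norm_num : (-1 : ℝ) ≠ 0)]
        exact setIntegral_congr_fun measurableSet_Ioi hsubst
    _ = ε * ∫ t in Ioi (1 : ℝ), (ε * t)⁻¹ * G (ε * t) := by
        rw [setIntegral_indicator measurableSet_Ioi, Ioi_inter_Ioi, max_eq_right zero_le_one,
          integral_const_mul]
    _ = ∫ ρ in Ioi ε, ρ⁻¹ * G ρ := by
        rw [integral_comp_mul_left_Ioi (fun ρ ↦ ρ⁻¹ * G ρ) 1 hε, mul_one, smul_eq_mul, ← mul_assoc,
          mul_inv_cancel₀ hε.ne', one_mul]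

theorem abs_inv_mul_le_of_abs_le_pow {k : ℕ} (hk : k ≠ 0) {ρ r A P v : ℝ} (hA : 0 ≤ A) (hv : 0 ≤ v)
    (hρ : 0 < ρ) (hρr : ρ ≤ r) (hP : |P| ≤ A * (ρ ^ k * v)) :
    |ρ⁻¹ * P| ≤ A * (r ^ (k - 1) * v) := by
  rw [abs_mul, abs_of_pos (inv_pos.2 hρ)]
  calc ρ⁻¹ * |P| ≤ ρ⁻¹ * (A * (ρ ^ k * v)) := by gcongr
    _ = A * (ρ ^ (k - 1) * v) := by rw [← pow_sub_one_mul hk]; field_simp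
    _ ≤ A * (r ^ (k - 1) * v) := by gcongr

theorem measurableSet_lt_norm_sub {E : Type*} [NormedAddCommGroup E] [MeasurableSpace E]
    [OpensMeasurableSpace E] (x : E) (ε : ℝ) : MeasurableSet {y : E | ε < ‖x - y‖} :=
  (isOpen_lt continuous_const (by fun_prop)).measurableSet

theorem tendsto_setIntegral_lt_norm_sub {E : Type*} [NormedAddCommGroup E] [MeasurableSpace E]
    [OpensMeasurableSpace E] {μ : Measure E} {F : E → ℝ} {x : E} (hF : Integrable F μ)
    (hx : F x = 0) :
    Tendsto (fun ε ↦ ∫ y in {y | ε < ‖x - y‖}, F y ∂μ) (𝓝[>] (0 : ℝ)) (𝓝 (∫ y, F y ∂μ)) := by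
  simp_rw [← integral_indicator (measurableSet_lt_norm_sub x _)]
  refine tendsto_integral_filter_of_dominated_convergence (fun y ↦ ‖F y‖)
    (.of_forall fun ε ↦ hF.1.indicator (measurableSet_lt_norm_sub x ε))
    (.of_forall fun ε ↦ .of_forall fun y ↦ norm_indicator_le_norm_self F y) hF.norm
    (.of_forall fun y ↦ ?_)
  rcases eq_or_ne x y with rfl | hxy
  · simp only [indicator, hx, ite_self, tendsto_const_nhds]
  · have hpos : 0 < ‖x - y‖ := norm_pos_iff.2 (sub_ne_zero.2 hxy)
    refine tendsto_const_nhds.congr' ?_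
    filter_upwards [(eventually_lt_nhds hpos).filter_mono nhdsWithin_le_nhds] with ε hε
    exact (indicator_of_mem (s := {y | ε < ‖x - y‖}) hε F).symm

variable {E : Type*} [NormedAddCommGroup E] [NormedSpace ℝ E]

local notation "d" => Module.finrank ℝ E

section Definitions

variable [MeasureSpace E]

/-- The singular kernel integrated against `f` first in space and then over the scales. Unlike the
kernel itself, the iterated integral converges absolutely when `f` is Lipschitz. -/
noncomputable def scaleIntegral (χ ψ f : E → ℝ) (x : E) : ℝ :=
  ∫ s in Ioc (0 : ℝ) 1, ∫ y, kernelDensity χ ψ x y s * f y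

/-- The integral of `ψ` over the complement of the closed ball of radius `ρ` about `x`. -/
noncomputable def profileTail (ψ : E → ℝ) (x : E) (ρ : ℝ) : ℝ :=
  ∫ w in {w : E | ρ < ‖w‖}, ψ (x + w)

/-- The coefficient `∫₀^{2R} Ψ(x, ρ) dρ / ρ`, with `Ψ` the tail of `ψ`, by which truncating the
singular integral in space and truncating it in scale differ. For `‖x‖ < R` and `ψ` supported in
the ball of radius `R`, the tail vanishes beyond `2R`. -/
noncomputable def boundaryCoeff (ψ : E → ℝ) (R : ℝ) (x : E) : ℝ :=
  ∫ ρ in Ioc 0 (2 * R), ρ⁻¹ * profileTail ψ x ρ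

/-- The principal value at `x` of the singular integral of `f`: the iterated scale integral,
corrected by the effect of truncating in space instead of in scale. -/
noncomputable def principalValue (χ ψ : E → ℝ) (R : ℝ) (f : E → ℝ) (x : E) : ℝ :=
  scaleIntegral χ ψ f x + χ x * (χ x * boundaryCoeff ψ R x) * f x

end Definitions

variable [FiniteDimensional ℝ E] [MeasureSpace E] [BorelSpace E]
  [(volume : Measure E).IsAddHaarMeasure]

local notation "ω" => volume.real (ball (0 : E) 1)

theorem setIntegral_lt_norm_sub_dilate (ψ : E → ℝ) (x : E) {s : ℝ} (hs : 0 < s) (ε : ℝ) :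
    ∫ y in {y | ε < ‖x - y‖}, ψ (x + s⁻¹ • (x - y)) = s ^ d * profileTail ψ x (ε / s) := by
  have hmeas : MeasurableSet {w : E | ε / s < ‖w‖} := by
    simpa using measurableSet_lt_norm_sub (0 : E) (ε / s)
  set G : E → ℝ := {w : E | ε / s < ‖w‖}.indicator fun w ↦ ψ (x + w)
  have hG (y : E) : {y | ε < ‖x - y‖}.indicator (fun y ↦ ψ (x + s⁻¹ • (x - y))) y =
      G (0 + s⁻¹ • (x - y)) := by
    have hnorm : ε / s < ‖s⁻¹ • (x - y)‖ ↔ ε < ‖x - y‖ := by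
      rw [norm_smul, norm_inv, Real.norm_of_nonneg hs.le, ← div_eq_inv_mul,
        div_lt_div_iff_of_pos_right hs]
    simp only [G, indicator, mem_ofPred_eq, zero_add, hnorm]
  rw [profileTail, ← integral_indicator (measurableSet_lt_norm_sub x ε), ← integral_indicator hmeas,
    integral_congr_ae (.of_forall hG), ← integral_comp_add_inv_smul G 0 hs]
  exact integral_sub_left_eq_self (fun w ↦ G (0 + s⁻¹ • w)) volume x

namespace IsKernelData

variable {χ ψ f : E → ℝ} {L M K R s ε : ℝ} {x : E}

section BoundaryCoeff

theorem profileTail_eq_neg (h : IsKernelData χ ψ L R) (x : E) (ρ : ℝ) :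
    profileTail ψ x ρ = -∫ w in closedBall 0 ρ, ψ (x + w) := by
  have hadd := integral_add_compl (s := closedBall 0 ρ) measurableSet_closedBall
    (h.integrable_profile.comp_add_left x)
  have hcompl : (closedBall (0 : E) ρ)ᶜ = {w : E | ρ < ‖w‖} := by
    ext w
    rw [mem_compl_iff, mem_closedBall_zero_iff, not_le, mem_ofPred_eq]
  rw [integral_add_left_eq_self (μ := volume) (fun w ↦ ψ w) x, h.integral_profile, hcompl] at hadd
  exact eq_neg_of_add_eq_zero_right hadd

theorem abs_profileTail_le (h : IsKernelData χ ψ L R) (x : E) {ρ : ℝ} (hρ : 0 ≤ ρ) :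
    |profileTail ψ x ρ| ≤ L * (ρ ^ d * ω) := by
  rw [h.profileTail_eq_neg, abs_neg, ← Measure.addHaar_real_closedBall volume (0 : E) hρ]
  exact norm_setIntegral_le_of_norm_le_const (f := fun w ↦ ψ (x + w)) measure_closedBall_lt_top
    fun w _ ↦ h.profile.abs_le (x + w)

theorem abs_profileTail_sub_le (h : IsKernelData χ ψ L R) (x x' : E) {ρ : ℝ} (hρ : 0 ≤ ρ) :
    |profileTail ψ x ρ - profileTail ψ x' ρ| ≤ L * ‖x - x'‖ * (ρ ^ d * ω) := by
  rw [h.profileTail_eq_neg, h.profileTail_eq_neg, neg_sub_neg, abs_sub_comm,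
    ← integral_sub (h.integrable_profile.comp_add_left x).integrableOn
      (h.integrable_profile.comp_add_left x').integrableOn,
    ← Measure.addHaar_real_closedBall volume (0 : E) hρ]
  refine norm_setIntegral_le_of_norm_le_const (f := fun w ↦ ψ (x + w) - ψ (x' + w))
    measure_closedBall_lt_top fun w _ ↦ (h.profile.abs_sub_le _ _).trans_eq ?_
  rw [add_sub_add_right_eq_sub]

omit [FiniteDimensional ℝ E] [BorelSpace E] [(volume : Measure E).IsAddHaarMeasure] in
theorem profileTail_eq_zero_of_le (h : IsKernelData χ ψ L R) (hx : ‖x‖ < R) {ρ : ℝ}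
    (hρ : 2 * R ≤ ρ) : profileTail ψ x ρ = 0 :=
  setIntegral_eq_zero_of_forall_eq_zero fun w (hw : ρ < ‖w‖) ↦ by
    simpa using h.profile.apply_add_inv_smul_eq_zero one_pos hx (v := w) (by linarith)

theorem measurable_profileTail (h : IsKernelData χ ψ L R) (x : E) :
    Measurable (profileTail ψ x) := by
  have hψ := h.profile.continuous
  have hmeas : MeasurableSet {p : ℝ × E | p.1 < ‖p.2‖} :=
    (isOpen_lt (by fun_prop) (by fun_prop)).measurableSet
  have hcont : Continuous fun p : ℝ × E ↦ ψ (x + p.2) := by fun_prop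
  convert ((hcont.stronglyMeasurable.indicator hmeas).integral_prod_right'
    (ν := (volume : Measure E))).measurable using 1
  ext ρ
  rw [profileTail, ← integral_indicator (isOpen_lt (by fun_prop) (by fun_prop)).measurableSet]
  rfl

theorem abs_inv_mul_profileTail_le (h : IsKernelData χ ψ L R) (hd : d ≠ 0) (x : E) {ρ : ℝ}
    (hρ : ρ ∈ Ioc 0 (2 * R)) :
    |ρ⁻¹ * profileTail ψ x ρ| ≤ L * ((2 * R) ^ (d - 1) * ω) :=
  abs_inv_mul_le_of_abs_le_pow hd h.profile.nonneg measureReal_nonneg hρ.1 hρ.2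
    (h.abs_profileTail_le x hρ.1.le)

theorem integrableOn_inv_mul_profileTail (h : IsKernelData χ ψ L R) (hd : d ≠ 0) (x : E) :
    IntegrableOn (fun ρ ↦ ρ⁻¹ * profileTail ψ x ρ) (Ioc 0 (2 * R)) :=
  Measure.integrableOn_of_bounded measure_Ioc_lt_top.ne
    (measurable_inv.mul (h.measurable_profileTail x)).aestronglyMeasurable
    (ae_restrict_of_forall_mem measurableSet_Ioc fun _ hρ ↦ h.abs_inv_mul_profileTail_le hd x hρ)

theorem abs_boundaryCoeff_le (h : IsKernelData χ ψ L R) (hd : d ≠ 0) (x : E) :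
    |boundaryCoeff ψ R x| ≤ L * ((2 * R) ^ (d - 1) * ω) * (2 * R) := by
  have hbound := norm_setIntegral_le_of_norm_le_const (μ := volume) (s := Ioc 0 (2 * R))
    (f := fun ρ ↦ ρ⁻¹ * profileTail ψ x ρ) measure_Ioc_lt_top
    fun _ hρ ↦ h.abs_inv_mul_profileTail_le hd x hρ
  rwa [Real.volume_real_Ioc_of_le (by linarith [h.one_le_radius]), sub_zero] at hbound

theorem abs_boundaryCoeff_sub_le (h : IsKernelData χ ψ L R) (hd : d ≠ 0) (x x' : E) :
    |boundaryCoeff ψ R x - boundaryCoeff ψ R x'| ≤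
      L * ((2 * R) ^ (d - 1) * ω) * (2 * R) * ‖x - x'‖ := by
  rw [boundaryCoeff, boundaryCoeff, ← integral_sub (h.integrableOn_inv_mul_profileTail hd x)
    (h.integrableOn_inv_mul_profileTail hd x')]
  have hbound := norm_setIntegral_le_of_norm_le_const (μ := volume)
    (f := fun ρ ↦ ρ⁻¹ * profileTail ψ x ρ - ρ⁻¹ * profileTail ψ x' ρ)
    (C := L * ‖x - x'‖ * ((2 * R) ^ (d - 1) * ω)) (s := Ioc 0 (2 * R)) measure_Ioc_lt_top
    fun ρ hρ ↦ by
      rw [← mul_sub]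
      exact abs_inv_mul_le_of_abs_le_pow hd (mul_nonneg h.profile.nonneg (norm_nonneg _))
        measureReal_nonneg hρ.1 hρ.2 (h.abs_profileTail_sub_le x x' hρ.1.le)
  rw [Real.volume_real_Ioc_of_le (by linarith [h.one_le_radius]), sub_zero] at hbound
  exact hbound.trans_eq (by ring)

theorem exists_isLipschitzBump_boundaryCoeff (h : IsKernelData χ ψ L R) (hd : d ≠ 0) :
    ∃ C, IsLipschitzBump (fun x ↦ χ x * (χ x * boundaryCoeff ψ R x)) C R := by
  have hL := h.profile.nonneg
  have hR := h.one_le_radius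
  have hmul := h.cutoff.mul (h.abs_boundaryCoeff_le hd) (by positivity)
    (h.abs_boundaryCoeff_sub_le hd)
  exact ⟨_, h.cutoff.mul hmul.abs_le hmul.nonneg hmul.abs_sub_le⟩

theorem tendsto_setIntegral_inv_mul_profileTail_div (h : IsKernelData χ ψ L R) (hd : d ≠ 0)
    (hx : ‖x‖ < R) :
    Tendsto (fun ε ↦ ∫ s in Ioc (0 : ℝ) 1, s⁻¹ * profileTail ψ x (ε / s)) (𝓝[>] 0)
      (𝓝 (boundaryCoeff ψ R x)) := by
  have hR : 0 < 2 * R := by linarith [h.one_le_radius]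
  have hprimitive : ContinuousWithinAt (fun ε ↦ ∫ ρ in ε..2 * R, ρ⁻¹ * profileTail ψ x ρ)
      (Ioc 0 (2 * R)) 0 := by
    refine (intervalIntegral.continuousOn_primitive_interval_left ?_ 0 left_mem_uIcc).mono
      (uIcc_of_le hR.le ▸ Ioc_subset_Icc_self)
    rw [uIcc_of_le hR.le, integrableOn_Icc_iff_integrableOn_Ioc]
    exact h.integrableOn_inv_mul_profileTail hd x
  rw [ContinuousWithinAt, nhdsWithin_Ioc_eq_nhdsGT hR, intervalIntegral.integral_of_le hR.le]
    at hprimitive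
  refine hprimitive.congr' ?_
  filter_upwards [Ioo_mem_nhdsGT hR] with ε hε
  rw [setIntegral_Ioc_inv_mul_comp_div _ hε.1, intervalIntegral.integral_of_le hε.2.le]
  refine (setIntegral_eq_of_subset_of_forall_sdiff_eq_zero measurableSet_Ioi Ioc_subset_Ioi_self
    fun ρ hρ ↦ ?_).symm
  rw [h.profileTail_eq_zero_of_le hx (le_of_not_ge fun hρR ↦ hρ.2 ⟨hρ.1, hρR⟩), mul_zero]

theorem integrableOn_inv_mul_profileTail_div (h : IsKernelData χ ψ L R) (hx : ‖x‖ < R)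
    (hε : 0 < ε) : IntegrableOn (fun s ↦ s⁻¹ * profileTail ψ x (ε / s)) (Ioc 0 1) := by
  have hR := h.one_le_radius
  have hL := h.profile.nonneg
  refine Measure.integrableOn_of_bounded (M := 2 * R / ε * (L * ((2 * R) ^ d * ω)))
    measure_Ioc_lt_top.ne
    (measurable_inv.mul ((h.measurable_profileTail x).comp (by fun_prop))).aestronglyMeasurable
    (ae_restrict_of_forall_mem measurableSet_Ioc fun s hs ↦ ?_)
  have hs₀ := hs.1
  rcases le_or_gt (2 * R) (ε / s) with hsε | hsε
  · rw [h.profileTail_eq_zero_of_le hx hsε, mul_zero, norm_zero]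
    positivity
  · rw [norm_mul, norm_inv, Real.norm_of_nonneg hs₀.le]
    gcongr
    · rw [le_div_iff₀ hε, ← div_eq_inv_mul]
      exact hsε.le
    · exact (h.abs_profileTail_le x (by positivity)).trans (by gcongr)

end BoundaryCoeff

section ScaleIntegral

theorem integrableOn_integral_kernelDensity_mul (h : IsKernelData χ ψ L R) (hf : Continuous f)
    (hg : IsLipschitzBump (fun y ↦ χ y * f y) M R) (x : E) :
    IntegrableOn (fun s ↦ ∫ y, kernelDensity χ ψ x y s * f y) (Ioc 0 1) := by
  have hcont : ContinuousOn (fun s ↦ ∫ y, kernelDensity χ ψ x y s * f y) (Ioi 0) := by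
    refine continuousOn_integral_of_compact_support (f := fun s y ↦ kernelDensity χ ψ x y s * f y)
      (isCompact_closedBall (0 : E) R) ?_ fun s y _ hy ↦ ?_
    · exact (continuousOn_kernelDensity_mul h.cutoff.continuous h.profile.continuous hf x).comp
        (f := fun p : ℝ × E ↦ (p.2, p.1)) (by fun_prop) fun p hp ↦ ⟨mem_univ _, hp.1⟩
    · rw [mem_closedBall_zero_iff, not_le] at hy
      rw [h.kernelDensity_eq_zero_right hy.le, zero_mul]
  exact Integrable.of_bound
    ((hcont.mono Ioc_subset_Ioi_self).aestronglyMeasurable measurableSet_Ioc) _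
    (ae_restrict_of_forall_mem measurableSet_Ioc fun s hs ↦
      h.abs_integral_kernelDensity_mul_le hg x hs.1)

theorem sum_range_integral_dyadicPiece_mul (h : IsKernelData χ ψ L R) (hf : Continuous f)
    (hg : IsLipschitzBump (fun y ↦ χ y * f y) M R) (x : E) (N : ℕ) :
    ∑ j ∈ Finset.range N, ∫ y, dyadicPiece χ ψ j x y * f y =
      ∫ s in Ioc ((1 / 2 : ℝ) ^ N) 1, ∫ y, kernelDensity χ ψ x y s * f y := by
  induction N with
  | zero => simp only [Finset.range_zero, Finset.sum_empty, pow_zero, Ioc_self, setIntegral_empty]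
  | succ N ih =>
    rw [Finset.sum_range_succ, ih, h.integral_dyadicPiece_mul hf, add_comm]
    exact setIntegral_Ioc_add_setIntegral_Ioc
      (pow_le_pow_of_le_one (by norm_num) (by norm_num) N.le_succ)
      (pow_le_one₀ (by norm_num) (by norm_num))
      ((h.integrableOn_integral_kernelDensity_mul hf hg x).mono_set
        (Ioc_subset_Ioc_left (by positivity)))

theorem abs_scaleIntegral_sub_sum_le (h : IsKernelData χ ψ L R) (hf : Continuous f)
    (hg : IsLipschitzBump (fun y ↦ χ y * f y) M R) (x : E) (N : ℕ) :
    |scaleIntegral χ ψ f x - ∑ j ∈ Finset.range N, ∫ y, dyadicPiece χ ψ j x y * f y| ≤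
      2 * M * L ^ 2 * (2 * R) ^ (d + 1) * ω * (1 / 2) ^ N := by
  have hN₀ : (0 : ℝ) ≤ (1 / 2) ^ N := by positivity
  have hN₁ : (1 / 2 : ℝ) ^ N ≤ 1 := pow_le_one₀ (by norm_num) (by norm_num)
  rw [h.sum_range_integral_dyadicPiece_mul hf hg, scaleIntegral,
    ← setIntegral_Ioc_add_setIntegral_Ioc hN₀ hN₁
      (h.integrableOn_integral_kernelDensity_mul hf hg x), add_sub_cancel_right]
  have hbound := norm_setIntegral_le_of_norm_le_const (μ := volume)
    (f := fun s ↦ ∫ y, kernelDensity χ ψ x y s * f y) (s := Ioc 0 ((1 / 2 : ℝ) ^ N))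
    measure_Ioc_lt_top fun s hs ↦ h.abs_integral_kernelDensity_mul_le hg x hs.1
  rwa [Real.volume_real_Ioc_of_le hN₀, sub_zero] at hbound

end ScaleIntegral

section Truncation

theorem setIntegral_lt_norm_sub_kernelDensity_mul (h : IsKernelData χ ψ L R)
    (hg : IsLipschitzBump (fun y ↦ χ y * f y) M R) (x : E) (hs : 0 < s) (ε : ℝ) :
    ∫ y in {y | ε < ‖x - y‖}, kernelDensity χ ψ x y s * f y =
      χ x * (s ^ (d + 1))⁻¹ *
          (∫ y in {y | ε < ‖x - y‖}, centeredIntegrand ψ (fun y ↦ χ y * f y) x s y) +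
        χ x * (χ x * f x) * (s⁻¹ * profileTail ψ x (ε / s)) := by
  have hinv : s⁻¹ = (s ^ (d + 1))⁻¹ * s ^ d := by
    rw [pow_succ]
    field_simp
  have hfactor (a b c e : ℝ) :
      χ x * c * a + χ x * e * (c * b) = χ x * c * (a + e * b) := by ring
  rw [hinv, mul_assoc _ (s ^ d), ← setIntegral_lt_norm_sub_dilate ψ x hs, hfactor,
    ← integral_const_mul, ← integral_add (h.integrable_centeredIntegrand hg x hs).integrableOn
      ((h.integrable_dilate_profile_sub x hs).const_mul _).integrableOn, ← integral_const_mul]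
  congr 1 with y
  rw [centeredIntegrand, kernelDensity]
  ring

theorem setIntegral_lt_norm_sub_kernel_mul (h : IsKernelData χ ψ L R) {H : E → E → ℝ}
    (hH : ∀ x y, x ≠ y → H x y = ∫ s in Ioo (0 : ℝ) 1, kernelDensity χ ψ x y s)
    (hf : Continuous f) (x : E) (hε : 0 < ε) :
    ∫ y in {y | ε < ‖x - y‖}, H x y * f y =
      ∫ s in Ioc (0 : ℝ) 1, ∫ y in {y | ε < ‖x - y‖}, kernelDensity χ ψ x y s * f y := by
  have hR := h.one_le_radius
  set a := ε / (2 * R) with ha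
  have ha₀ : 0 < a := by positivity
  have hsmall {y : E} (hy : ε < ‖x - y‖) {s : ℝ} (hs : s ∈ Ioc 0 1 \ Ioc a 1) :
      kernelDensity χ ψ x y s = 0 := by
    have hsa : s ≤ a := le_of_not_gt fun hsa ↦ hs.2 ⟨hsa, hs.1.2⟩
    rw [ha, le_div_iff₀ (by positivity)] at hsa
    exact h.kernelDensity_eq_zero_of_le hs.1.1 (by linarith)
  have hkernel (y : E) (hy : y ∈ {y | ε < ‖x - y‖}) :
      H x y * f y = ∫ s in Ioc a 1, kernelDensity χ ψ x y s * f y := by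
    have hxy : x ≠ y := sub_ne_zero.1 (norm_pos_iff.1 (hε.trans hy))
    rw [hH x y hxy, integral_mul_const, ← integral_Ioc_eq_integral_Ioo,
      setIntegral_eq_of_subset_of_forall_sdiff_eq_zero measurableSet_Ioc
        (Ioc_subset_Ioc_left ha₀.le) fun s hs ↦ hsmall hy hs]
  rw [setIntegral_congr_fun (measurableSet_lt_norm_sub x ε) hkernel,
    setIntegral_setIntegral_Ioc_comm ha₀
      (continuousOn_kernelDensity_mul h.cutoff.continuous h.profile.continuous hf x) (R := R)
      fun y s _ hy ↦ by rw [h.kernelDensity_eq_zero_right hy, zero_mul]]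
  refine (setIntegral_eq_of_subset_of_forall_sdiff_eq_zero measurableSet_Ioc
    (Ioc_subset_Ioc_left ha₀.le) fun s hs ↦ ?_).symm
  exact setIntegral_eq_zero_of_forall_eq_zero fun y hy ↦ by rw [hsmall hy hs, zero_mul]

theorem integrableOn_mul_setIntegral_centeredIntegrand (h : IsKernelData χ ψ L R) {g : E → ℝ}
    (hg : IsLipschitzBump g M R) (x : E) {A : Set E} (hA : MeasurableSet A) :
    IntegrableOn (fun s ↦ χ x * (s ^ (d + 1))⁻¹ * ∫ y in A, centeredIntegrand ψ g x s y)
      (Ioc 0 1) := by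
  refine Integrable.of_bound (AEStronglyMeasurable.mul ?_ ?_) _
    (ae_restrict_of_forall_mem measurableSet_Ioc fun s hs ↦
      h.abs_mul_setIntegral_centeredIntegrand_le hg x hs.1 hA)
  · exact (by fun_prop : Measurable fun s : ℝ ↦ χ x * (s ^ (d + 1))⁻¹).aestronglyMeasurable
  · have hmeas : AEStronglyMeasurable (Function.uncurry (centeredIntegrand ψ g x))
        ((volume.restrict (Ioc 0 1)).prod (volume.restrict A)) := by
      rw [Measure.prod_restrict]
      exact ((continuousOn_centeredIntegrand h.profile.continuous hg.continuous x).mono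
        (prod_mono Ioc_subset_Ioi_self (subset_univ _))).aestronglyMeasurable
          (measurableSet_Ioc.prod hA)
    exact hmeas.integral_prod_right'

theorem tendsto_setIntegral_mul_centeredIntegrand (h : IsKernelData χ ψ L R)
    (hg : IsLipschitzBump (fun y ↦ χ y * f y) M R) (x : E) :
    Tendsto (fun ε ↦ ∫ s in Ioc (0 : ℝ) 1, χ x * (s ^ (d + 1))⁻¹ *
        ∫ y in {y | ε < ‖x - y‖}, centeredIntegrand ψ (fun y ↦ χ y * f y) x s y)
      (𝓝[>] 0) (𝓝 (scaleIntegral χ ψ f x)) := by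
  refine tendsto_integral_filter_of_dominated_convergence
    (fun _ ↦ 2 * M * L ^ 2 * (2 * R) ^ (d + 1) * ω)
    (.of_forall fun ε ↦ (h.integrableOn_mul_setIntegral_centeredIntegrand hg x
      (measurableSet_lt_norm_sub x ε)).1) (.of_forall fun ε ↦ ?_) (integrable_const _) ?_
  · exact ae_restrict_of_forall_mem measurableSet_Ioc fun s hs ↦
      h.abs_mul_setIntegral_centeredIntegrand_le hg x hs.1 (measurableSet_lt_norm_sub x ε)
  · refine ae_restrict_of_forall_mem measurableSet_Ioc fun s hs ↦ ?_
    rw [h.integral_kernelDensity_mul hg x hs.1]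
    exact (tendsto_setIntegral_lt_norm_sub (h.integrable_centeredIntegrand hg x hs.1)
      (centeredIntegrand_self _ _ _ _)).const_mul _

-- Subtracting `g(x) ψ(x + (x - y) / s)` makes the spatial integral absolutely convergent uniformly
-- in the scale; the subtracted term no longer integrates to zero over `{ε < ‖x - y‖}`, and what it
-- leaves behind is the boundary coefficient.
omit [FiniteDimensional ℝ E] [BorelSpace E] [(volume : Measure E).IsAddHaarMeasure] in
theorem principalValue_eq_zero (h : IsKernelData χ ψ L R) (hx : R ≤ ‖x‖) :
    principalValue χ ψ R f x = 0 := by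
  simp only [principalValue, scaleIntegral, h.kernelDensity_eq_zero_left hx,
    h.cutoff.eq_zero_of_le x hx, zero_mul, integral_zero, add_zero]

theorem tendsto_setIntegral_kernel_mul (h : IsKernelData χ ψ L R) (hd : d ≠ 0) {H : E → E → ℝ}
    (hH : ∀ x y, x ≠ y → H x y = ∫ s in Ioo (0 : ℝ) 1, kernelDensity χ ψ x y s)
    (hf : Continuous f) (hg : IsLipschitzBump (fun y ↦ χ y * f y) M R) (x : E) :
    Tendsto (fun ε ↦ ∫ y in {y | ε < ‖x - y‖}, H x y * f y) (𝓝[>] (0 : ℝ))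
      (𝓝 (principalValue χ ψ R f x)) := by
  have htrunc : ∀ᶠ ε in 𝓝[>] (0 : ℝ),
      (∫ s in Ioc (0 : ℝ) 1, ∫ y in {y | ε < ‖x - y‖}, kernelDensity χ ψ x y s * f y) =
        ∫ y in {y | ε < ‖x - y‖}, H x y * f y := by
    filter_upwards [self_mem_nhdsWithin] with ε hε
    exact (h.setIntegral_lt_norm_sub_kernel_mul hH hf x hε).symm
  refine Tendsto.congr' htrunc ?_
  rcases le_or_gt R ‖x‖ with hx | hx
  · simp only [h.principalValue_eq_zero hx, h.kernelDensity_eq_zero_left hx,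
      zero_mul, integral_zero, tendsto_const_nhds]
  have hboundary := (h.tendsto_setIntegral_inv_mul_profileTail_div hd hx).const_mul
    (χ x * (χ x * f x))
  rw [principalValue, show χ x * (χ x * boundaryCoeff ψ R x) * f x =
    χ x * (χ x * f x) * boundaryCoeff ψ R x by ring]
  refine ((h.tendsto_setIntegral_mul_centeredIntegrand hg x).add hboundary).congr' ?_
  filter_upwards [self_mem_nhdsWithin] with ε hε
  rw [← integral_const_mul, ← integral_add (h.integrableOn_mul_setIntegral_centeredIntegrand hg x
    (measurableSet_lt_norm_sub x ε)) ((h.integrableOn_inv_mul_profileTail_div hx hε).const_mul _)]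
  exact setIntegral_congr_fun measurableSet_Ioc fun s hs ↦
    (h.setIntegral_lt_norm_sub_kernelDensity_mul hg x hs.1 ε).symm

end Truncation

end IsKernelData

end PrincipalValue

section DyadicSums

theorem sum_range_two_pow_le (J : ℕ) : ∑ j ∈ Finset.range (J + 1), (2 : ℝ) ^ j ≤ 2 * 2 ^ J := by
  rw [geom_sum_eq (by norm_num), pow_succ]
  linarith

theorem sum_range_mul_half_pow_le (N : ℕ) :
    ∑ j ∈ Finset.range N, (j : ℝ) * (1 / 2) ^ j ≤ 2 := by
  have hsum : ∑ j ∈ Finset.range N, (j : ℝ) * (1 / 2) ^ j = 2 - (2 * N + 2) * (1 / 2) ^ N := by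
    induction N with
    | zero => norm_num
    | succ N ih => rw [Finset.sum_range_succ, pow_succ, ih]; push_cast; ring
  rw [hsum]
  exact sub_le_self _ (by positivity)

theorem sum_Ico_half_pow_le (J N : ℕ) :
    ∑ j ∈ Finset.Ico (J + 1) N, (1 / 2 : ℝ) ^ j ≤ (1 / 2) ^ J := by
  refine (geom_sum_Ico_le_of_lt_one (by norm_num) (by norm_num)).trans_eq ?_
  rw [pow_succ]
  ring

theorem mul_half_pow_le_one (J : ℕ) : (J : ℝ) * (1 / 2) ^ J ≤ 1 := by
  have : (J : ℝ) ≤ 2 ^ J := mod_cast Nat.lt_two_pow_self.le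
  calc (J : ℝ) * (1 / 2) ^ J ≤ 2 ^ J * (1 / 2) ^ J := by gcongr
    _ = 1 := two_pow_mul_half_pow J

end DyadicSums

section SetIntegrals

variable {X : Type*} [MetricSpace X] [ProperSpace X] [MeasurableSpace X] [BorelSpace X]
  {μ : Measure X} [IsFiniteMeasureOnCompacts μ] {F : X → ℝ}

theorem setIntegral_le_setIntegral_ball {s : Set X} (hs : MeasurableSet s) (hF : Continuous F)
    (hF₀ : ∀ y, 0 ≤ F y) {c : X} {r : ℝ} (hFs : ∀ y ∈ s, y ∉ ball c r → F y = 0) :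
    ∫ y in s, F y ∂μ ≤ ∫ y in ball c r, F y ∂μ := by
  rw [setIntegral_eq_of_subset_of_forall_sdiff_eq_zero (s := s ∩ ball c r) hs inter_subset_left
    fun y hy ↦ hFs y hy.1 fun hyc ↦ hy.2 ⟨hy.1, hyc⟩]
  exact setIntegral_mono_set (integrableOn_of_continuous_of_isBounded hF isBounded_ball)
    (.of_forall hF₀) inter_subset_right.eventuallyLE

theorem setIntegral_abs_le_inv_mul_setIntegral_sq_add {s : Set X} (hs : Bornology.IsBounded s)
    (hF : Continuous F) {a : ℝ} (ha : 0 < a) :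
    ∫ y in s, |F y| ∂μ ≤ a⁻¹ * (∫ y in s, F y ^ 2 ∂μ) + a * μ.real s := by
  have hint {g : X → ℝ} (hg : Continuous g) : IntegrableOn g s μ :=
    integrableOn_of_continuous_of_isBounded hg hs
  calc ∫ y in s, |F y| ∂μ ≤ ∫ y in s, (a⁻¹ * F y ^ 2 + a) ∂μ := by
        refine setIntegral_mono (hint (by fun_prop)) (hint (by fun_prop)) fun y ↦ ?_
        have hsq : a⁻¹ * (|F y| - a) ^ 2 = a⁻¹ * F y ^ 2 - 2 * |F y| + a := by
          rw [sub_sq, sq_abs]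
          field_simp
        have : 0 ≤ a⁻¹ * (|F y| - a) ^ 2 := by positivity
        have := abs_nonneg (F y)
        dsimp only
        linarith
    _ = a⁻¹ * (∫ y in s, F y ^ 2 ∂μ) + a * μ.real s := by
        rw [integral_add (hint (by fun_prop)) (hint (by fun_prop)), integral_const_mul,
          setIntegral_const, smul_eq_mul, mul_comm (μ.real s)]

end SetIntegrals

section BumpTruncation

variable {E : Type*} [NormedAddCommGroup E] [NormedSpace ℝ E] [FiniteDimensional ℝ E]

theorem exists_abs_sub_mul_contDiffBump_le {x₀ : E} (η : ContDiffBump x₀) {f : E → ℝ}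
    (hf : ∃ B, ∀ y, |f y| ≤ B) (m : ℝ) : ∃ B, ∀ y, |(f y - m) * η y| ≤ B := by
  obtain ⟨B, hB⟩ := hf
  refine ⟨B + |m|, fun y ↦ ?_⟩
  rw [abs_mul, abs_of_nonneg η.nonneg]
  refine (mul_le_of_le_one_right (abs_nonneg _) η.le_one).trans ((abs_sub _ _).trans ?_)
  gcongr
  exact hB y

variable [MeasurableSpace E] [BorelSpace E] {μ : Measure E} [IsFiniteMeasureOnCompacts μ]

theorem setIntegral_mul_contDiffBump_sq_le {x₀ : E} (η : ContDiffBump x₀) {s : Set E}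
    (hs : MeasurableSet s) {g : E → ℝ} (hg : Continuous g) :
    ∫ y in s, (g y * η y) ^ 2 ∂μ ≤ ∫ y in ball x₀ η.rOut, g y ^ 2 ∂μ := by
  have hη := η.continuous
  refine (setIntegral_le_setIntegral_ball hs (by fun_prop) (fun y ↦ sq_nonneg _)
    fun y _ hy ↦ ?_).trans (setIntegral_mono
      (integrableOn_of_continuous_of_isBounded (by fun_prop) isBounded_ball)
      (integrableOn_of_continuous_of_isBounded (by fun_prop) isBounded_ball) fun y ↦ ?_)
  · rw [η.zero_of_le_dist (not_lt.1 hy), mul_zero, zero_pow two_ne_zero]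
  · rw [mul_pow]
    exact mul_le_of_le_one_right (sq_nonneg _) (pow_le_one₀ η.nonneg η.le_one)

end BumpTruncation

section LocalBMO

variable {E : Type*} [NormedAddCommGroup E] [NormedSpace ℝ E] [MeasureSpace E]

local notation "d" => Module.finrank ℝ E
local notation "ω" => volume.real (ball (0 : E) 1)
local notation "κ" => (1 + 2 ^ Module.finrank ℝ E) / volume.real (ball (0 : E) 1)

/-- The bounded uniformly continuous function `f` has local `BMO` norm at most a constant times `a`:
its mean oscillation is controlled by `a` on all balls, its mean by `a` on all balls of radius
greater than `1`. Strict positivity of `a` lets it serve as a weight in the inequality between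
arithmetic and geometric means. -/
structure HasLocalBMOBound (f : E → ℝ) (a : ℝ) : Prop where
  pos : 0 < a
  uniformContinuous : UniformContinuous f
  bounded : ∃ M, ∀ x, |f x| ≤ M
  meanOscillationLE : MeanOscillationLE f a
  setIntegral_abs_le : ∀ x r, 1 < r → ∫ y in ball x r, |f y| ≤ a * r ^ d

/-- The `m j` are approximate means of `f` on the balls of radius `P * (1 / 2) ^ j` about `x₀`,
starting from the value `0` at the largest ball. -/
structure IsDyadicMeans (f : E → ℝ) (x₀ : E) (P a : ℝ) (m : ℕ → ℝ) : Prop where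
  radius_pos : 0 < P
  zero : m 0 = 0
  setIntegral_abs_sub_le : ∀ j,
    ∫ y in ball x₀ (P * (1 / 2) ^ j), |f y - m j| ≤ a * (P * (1 / 2) ^ j) ^ d

theorem HasLocalBMOBound.exists_isDyadicMeans {f : E → ℝ} {a : ℝ} (hf : HasLocalBMOBound f a)
    (x₀ : E) {P : ℝ} (hP : 1 < P) : ∃ m, IsDyadicMeans f x₀ P a m := by
  have hP₀ : 0 < P := one_pos.trans hP
  choose m hm using fun j : ℕ ↦
    hf.meanOscillationLE x₀ (P * (1 / 2) ^ (j + 1)) (by positivity)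
  refine ⟨fun j ↦ Nat.casesOn j 0 m, hP₀, rfl, fun j ↦ ?_⟩
  cases j with
  | zero => simpa using hf.setIntegral_abs_le x₀ P hP
  | succ j => exact hm j

namespace IsDyadicMeans

variable {f : E → ℝ} {x₀ : E} {P a : ℝ} {m : ℕ → ℝ}

theorem nonneg (h : IsDyadicMeans f x₀ P a m) : 0 ≤ a := by
  have := h.radius_pos
  have hle := (integral_nonneg fun _ ↦ abs_nonneg _).trans (h.setIntegral_abs_sub_le 0)
  exact nonneg_of_mul_nonneg_left hle (by positivity)

variable [FiniteDimensional ℝ E] [BorelSpace E] [(volume : Measure E).IsAddHaarMeasure]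

theorem abs_sub_le (h : IsDyadicMeans f x₀ P a m) (hf : Continuous f) (j : ℕ) :
    |m (j + 1) - m j| ≤ a * κ := by
  have hP := h.radius_pos
  have hω : 0 < ω := measureReal_unitBall_pos
  have hint {g : E → ℝ} (hg : Continuous g) (r : ℝ) : IntegrableOn g (ball x₀ r) :=
    integrableOn_of_continuous_of_isBounded hg isBounded_ball
  set r := P * (1 / 2) ^ (j + 1) with hr
  have hr₀ : 0 < r := by positivity
  have hr₂ : P * (1 / 2) ^ j = 2 * r := by rw [hr, pow_succ]; ring
  have hlarge : ∫ y in ball x₀ r, |f y - m j| ≤ a * (2 * r) ^ d := by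
    rw [← hr₂]
    exact (setIntegral_mono_set (hint (by fun_prop) _) (.of_forall fun _ ↦ abs_nonneg _)
      (ball_subset_ball (by linarith)).eventuallyLE).trans (h.setIntegral_abs_sub_le j)
  have hconst : |m (j + 1) - m j| * (r ^ d * ω) ≤ a * (2 * r) ^ d + a * r ^ d :=
    calc |m (j + 1) - m j| * (r ^ d * ω) = ∫ _ in ball x₀ r, |m (j + 1) - m j| := by
          rw [setIntegral_const, measureReal_ball_eq_pow_mul x₀ hr₀, smul_eq_mul, mul_comm]
      _ ≤ ∫ y in ball x₀ r, (|f y - m j| + |f y - m (j + 1)|) := by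
          refine setIntegral_mono (hint (by fun_prop) _) (hint (by fun_prop) _) fun y ↦ ?_
          simpa only [sub_sub_sub_cancel_left] using abs_sub (f y - m j) (f y - m (j + 1))
      _ ≤ a * (2 * r) ^ d + a * r ^ d := by
          rw [integral_add (hint (by fun_prop) _) (hint (by fun_prop) _)]
          exact add_le_add hlarge (h.setIntegral_abs_sub_le (j + 1))
  rw [← mul_div_assoc, le_div_iff₀ hω]
  refine le_of_mul_le_mul_right (hconst.trans_eq' ?_ |>.trans_eq ?_) (pow_pos hr₀ d)
  · ring
  · rw [mul_pow]; ring

theorem abs_le (h : IsDyadicMeans f x₀ P a m) (hf : Continuous f) (j : ℕ) :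
    |m j| ≤ j * (a * κ) := by
  induction j with
  | zero => rw [h.zero, abs_zero, Nat.cast_zero, zero_mul]
  | succ j ih =>
    have := h.abs_sub_le hf j
    have := abs_sub_abs_le_abs_sub (m (j + 1)) (m j)
    push_cast
    linarith

theorem abs_mul_half_pow_le (h : IsDyadicMeans f x₀ P a m) (hf : Continuous f) (j : ℕ) :
    |m j| * (1 / 2) ^ j ≤ a * κ := by
  have := h.nonneg
  calc |m j| * (1 / 2) ^ j ≤ j * (a * κ) * (1 / 2) ^ j := by gcongr; exact h.abs_le hf j
    _ = a * κ * (j * (1 / 2) ^ j) := by ring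
    _ ≤ a * κ := mul_le_of_le_one_right (by positivity) (mul_half_pow_le_one j)

end IsDyadicMeans

theorem HasLocalBMOBound.exists_setIntegral_ball_sq_le [FiniteDimensional ℝ E] [BorelSpace E]
    [(volume : Measure E).IsAddHaarMeasure] :
    ∃ T, 0 ≤ T ∧ ∀ (f : E → ℝ) (a : ℝ), HasLocalBMOBound f a → ∀ (x : E) (r : ℝ), 1 < r →
      ∫ y in ball x r, f y ^ 2 ≤ T * a ^ 2 * r ^ d := by
  obtain ⟨T, hT₀, hT⟩ := MeanOscillationLE.exists_setIntegral_ball_sub_sq_le (E := E)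
  refine ⟨T, hT₀, fun f a hf x r hr ↦ ?_⟩
  obtain ⟨M, hM⟩ := hf.bounded
  simpa only [sub_zero] using hT f M a hf.uniformContinuous hM hf.pos hf.meanOscillationLE x r 0
    (one_pos.trans hr) (by simpa only [sub_zero] using hf.setIntegral_abs_le x r hr)

end LocalBMO

section PartialSums

variable {E : Type*} [NormedAddCommGroup E] [NormedSpace ℝ E] [MeasureSpace E]

local notation "d" => Module.finrank ℝ E
local notation "ω" => volume.real (ball (0 : E) 1)
local notation "κ" => (1 + 2 ^ Module.finrank ℝ E) / volume.real (ball (0 : E) 1)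

namespace IsLipschitzKernel

variable [FiniteDimensional ℝ E] [BorelSpace E] [(volume : Measure E).IsAddHaarMeasure]
  {k : E → E → ℝ} {b l R : ℝ} {f : E → ℝ}

theorem integrable_right (h : IsLipschitzKernel k b l R) (x : E) : Integrable (k x) := by
  simpa only [mul_one] using h.integrable_mul x (f := fun _ ↦ 1) continuous_const

theorem integral_mul_eq_add (h : IsLipschitzKernel k b l R) (x : E) (hf : Continuous f) (m : ℝ) :
    ∫ y, k x y * f y = (∫ y, k x y * (f y - m)) + m * ∫ y, k x y := by
  rw [← integral_const_mul, ← integral_add (h.integrable_mul x (by fun_prop))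
    ((h.integrable_right x).const_mul m)]
  congr with y
  ring

theorem abs_integral_mul_sub_le_setIntegral_abs (h : IsLipschitzKernel k b l R) {x x' x₀ : E}
    {r : ℝ} (hf : Continuous f) (hx : ∀ y ∉ ball x₀ r, k x y = 0)
    (hx' : ∀ y ∉ ball x₀ r, k x' y = 0) :
    |(∫ y, k x y * f y) - ∫ y, k x' y * f y| ≤ l * ‖x - x'‖ * ∫ y in ball x₀ r, |f y| := by
  have hint : IntegrableOn (fun y ↦ |f y|) (ball x₀ r) :=
    integrableOn_of_continuous_of_isBounded hf.abs isBounded_ball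
  rw [← integral_sub (h.integrable_mul x hf) (h.integrable_mul x' hf), ← integral_const_mul,
    ← setIntegral_eq_integral_of_forall_compl_eq_zero (s := ball x₀ r)
      fun y hy ↦ by rw [hx y hy, hx' y hy, sub_self],
    ← Real.norm_eq_abs]
  refine norm_integral_le_of_norm_le (hint.const_mul _) (.of_forall fun y ↦ ?_)
  rw [← sub_mul, norm_mul, Real.norm_eq_abs]
  refine mul_le_mul_of_nonneg_right ?_ (norm_nonneg _)
  simpa only [sub_self, norm_zero, add_zero] using h.abs_sub_le x y x' y

end IsLipschitzKernel

namespace IsDyadicKernelFamily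

variable {K : ℕ → E → E → ℝ} {C R : ℝ} {f b : E → ℝ} {x₀ x : E} {a : ℝ}

theorem radius_pos (h : IsDyadicKernelFamily K C R) : 0 < R := one_pos.trans_le h.one_le_radius

theorem eq_zero_of_notMem_ball (h : IsDyadicKernelFamily K C R) {j J : ℕ} (hj : J ≤ j)
    (hx : ‖x - x₀‖ ≤ (1 / 2) ^ J) {y : E} (hy : (2 * R + 1) * (1 / 2) ^ J ≤ ‖y - x₀‖) :
    K j x y = 0 := by
  have := h.radius_pos
  have hpow : (1 / 2 : ℝ) ^ j ≤ (1 / 2) ^ J :=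
    pow_le_pow_of_le_one (by norm_num) (by norm_num) hj
  have hR : 2 * R * (1 / 2) ^ j ≤ 2 * R * (1 / 2) ^ J := by gcongr
  have := norm_sub_le_norm_sub_add_norm_sub y x x₀
  rw [norm_sub_rev y x] at this
  exact h.eq_zero_of_le j x y (by linarith)

theorem abs_sum_Ico_integral_le (h : IsDyadicKernelFamily K C R) (x : E) (J N : ℕ) :
    |∑ j ∈ Finset.Ico (J + 1) N, ∫ z, K j x z| ≤ C * (1 / 2) ^ J := by
  have := h.nonneg
  calc _ ≤ ∑ j ∈ Finset.Ico (J + 1) N, C * (1 / 2) ^ j :=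
        (Finset.abs_sum_le_sum_abs _ _).trans
          (Finset.sum_le_sum fun j _ ↦ h.abs_integral_right_le j x)
    _ ≤ C * (1 / 2) ^ J := by rw [← Finset.mul_sum]; gcongr; exact sum_Ico_half_pow_le J N

variable [FiniteDimensional ℝ E] [BorelSpace E] [(volume : Measure E).IsAddHaarMeasure]

theorem abs_integral_mul_sub_le (h : IsDyadicKernelFamily K C R) (hf : Continuous f) {m : ℝ}
    {j : ℕ} (hx : ‖x - x₀‖ ≤ (1 / 2) ^ j)
    (hm : ∫ y in ball x₀ ((4 * R + 2) * (1 / 2) ^ j), |f y - m| ≤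
      a * ((4 * R + 2) * (1 / 2) ^ j) ^ d) :
    |(∫ y, K j x y * f y) - ∫ y, K j x₀ y * f y| ≤
      C * (4 * R + 2) ^ d * a * (2 ^ j * ‖x - x₀‖) + |m| * (2 * C * (1 / 2) ^ j) := by
  have hC := h.nonneg
  have hR := h.radius_pos
  have hsupp {z : E} (hz : ‖z - x₀‖ ≤ (1 / 2) ^ j) (y : E)
      (hy : y ∉ ball x₀ ((4 * R + 2) * (1 / 2) ^ j)) : K j z y = 0 := by
    rw [mem_ball_iff_norm, not_lt] at hy
    refine h.eq_zero_of_notMem_ball le_rfl hz (le_trans ?_ hy)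
    gcongr <;> linarith
  have hosc : |(∫ y, K j x y * (f y - m)) - ∫ y, K j x₀ y * (f y - m)| ≤
      C * (4 * R + 2) ^ d * a * (2 ^ j * ‖x - x₀‖) :=
    calc _ ≤ C * (2 ^ j) ^ (d + 1) * ‖x - x₀‖ * (a * ((4 * R + 2) * (1 / 2) ^ j) ^ d) := by
          refine ((h.isLipschitzKernel j).abs_integral_mul_sub_le_setIntegral_abs (by fun_prop)
            (hsupp hx) (hsupp ?_)).trans (by gcongr)
          rw [sub_self, norm_zero]
          positivity
      _ = C * (4 * R + 2) ^ d * a * (2 ^ j * ‖x - x₀‖) * (2 ^ j * (1 / 2) ^ j) ^ d := by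
          rw [mul_pow, mul_pow]; ring
      _ = _ := by rw [two_pow_mul_half_pow, one_pow, mul_one]
  have hmass : |m * ((∫ y, K j x y) - ∫ y, K j x₀ y)| ≤ |m| * (2 * C * (1 / 2) ^ j) := by
    rw [abs_mul]
    gcongr
    refine (abs_sub _ _).trans ?_
    linarith [h.abs_integral_right_le j x, h.abs_integral_right_le j x₀]
  rw [(h.isLipschitzKernel j).integral_mul_eq_add x hf m,
    (h.isLipschitzKernel j).integral_mul_eq_add x₀ hf m, add_sub_add_comm, ← mul_sub]
  exact (abs_add_le _ _).trans (add_le_add hosc hmass)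

theorem abs_sum_range_sub_le (h : IsDyadicKernelFamily K C R) (hf : Continuous f) {m : ℕ → ℝ}
    (hm : IsDyadicMeans f x₀ (4 * R + 2) a m) {J : ℕ} (hx : ‖x - x₀‖ ≤ (1 / 2) ^ J) :
    |(∑ j ∈ Finset.range (J + 1), ∫ y, K j x y * f y) -
        ∑ j ∈ Finset.range (J + 1), ∫ y, K j x₀ y * f y| ≤
      C * (2 * (4 * R + 2) ^ d + 4 * κ) * a := by
  have hC := h.nonneg
  have hR := h.radius_pos
  have ha := hm.nonneg
  have hterm (j : ℕ) (hj : j ∈ Finset.range (J + 1)) :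
      |(∫ y, K j x y * f y) - ∫ y, K j x₀ y * f y| ≤
        C * (4 * R + 2) ^ d * a * (1 / 2) ^ J * 2 ^ j + a * κ * (2 * C) * (j * (1 / 2) ^ j) := by
    have hpow : (1 / 2 : ℝ) ^ J ≤ (1 / 2) ^ j :=
      pow_le_pow_of_le_one (by norm_num) (by norm_num) (Finset.mem_range_succ_iff.1 hj)
    calc _ ≤ C * (4 * R + 2) ^ d * a * (2 ^ j * ‖x - x₀‖) + |m j| * (2 * C * (1 / 2) ^ j) :=
          h.abs_integral_mul_sub_le hf (hx.trans hpow) (hm.setIntegral_abs_sub_le j)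
      _ ≤ C * (4 * R + 2) ^ d * a * (2 ^ j * (1 / 2) ^ J) +
            j * (a * κ) * (2 * C * (1 / 2) ^ j) := by gcongr; exact hm.abs_le hf j
      _ = _ := by ring
  rw [← Finset.sum_sub_distrib]
  calc _ ≤ ∑ j ∈ Finset.range (J + 1), (C * (4 * R + 2) ^ d * a * (1 / 2) ^ J * 2 ^ j +
          a * κ * (2 * C) * (j * (1 / 2) ^ j)) :=
        (Finset.abs_sum_le_sum_abs _ _).trans (Finset.sum_le_sum hterm)
    _ ≤ C * (4 * R + 2) ^ d * a * (1 / 2) ^ J * (2 * 2 ^ J) + a * κ * (2 * C) * 2 := by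
        rw [Finset.sum_add_distrib, ← Finset.mul_sum, ← Finset.mul_sum]
        gcongr
        exacts [sum_range_two_pow_le J, sum_range_mul_half_pow_le (J + 1)]
    _ = C * (4 * R + 2) ^ d * a * 2 * (2 ^ J * (1 / 2) ^ J) + a * κ * (2 * C) * 2 := by ring
    _ = _ := by rw [two_pow_mul_half_pow]; ring

theorem integral_mul_eq_add_of_contDiffBump (h : IsDyadicKernelFamily K C R) (hf : Continuous f)
    {j J : ℕ} (hj : J ≤ j) (hx : ‖x - x₀‖ ≤ (1 / 2) ^ J) {η : ContDiffBump x₀}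
    (hη : η.rIn = (2 * R + 1) * (1 / 2) ^ J) (m : ℝ) :
    ∫ y, K j x y * f y = (∫ y, K j x y * ((f y - m) * η y)) + m * ∫ y, K j x y := by
  rw [(h.isLipschitzKernel j).integral_mul_eq_add x hf m]
  congr with y
  by_cases hy : y ∈ closedBall x₀ η.rIn
  · rw [η.one_of_mem_closedBall hy, mul_one]
  · rw [mem_closedBall_iff_norm, not_le, hη] at hy
    rw [h.eq_zero_of_notMem_ball hj hx hy.le, zero_mul, zero_mul]

/-- The part of the partial sum at scales finer than `J` is a truncated near part plus `m J` times
the sum of the small total masses of the kernels. -/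
theorem abs_sum_add_mul_sub_le (h : IsDyadicKernelFamily K C R) (hf : Continuous f) {B : ℝ}
    (hb : IsLipschitzBump b B R) {m : ℕ → ℝ} (hm : IsDyadicMeans f x₀ (4 * R + 2) a m) {J N : ℕ}
    (hN : J < N) {η : ContDiffBump x₀} (hη : η.rIn = (2 * R + 1) * (1 / 2) ^ J)
    (hx : ‖x - x₀‖ ≤ (1 / 2) ^ J) :
    |(∑ j ∈ Finset.range N, ∫ z, K j x z * f z) + b x * f x -
        ((∑ j ∈ Finset.range (J + 1), ∫ z, K j x₀ z * f z) + b x₀ * m J)| ≤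
      (C * (2 * (4 * R + 2) ^ d + 4 * κ) + C * κ + B * κ) * a +
        |∑ j ∈ Finset.Ico (J + 1) N, ∫ z, K j x z * ((f z - m J) * η z)| + B * |f x - m J| := by
  have hB := hb.nonneg
  have hC := h.nonneg
  have hm' := hm.abs_mul_half_pow_le hf J
  have hfine : ∑ j ∈ Finset.Ico (J + 1) N, ∫ z, K j x z * f z =
      (∑ j ∈ Finset.Ico (J + 1) N, ∫ z, K j x z * ((f z - m J) * η z)) +
        m J * ∑ j ∈ Finset.Ico (J + 1) N, ∫ z, K j x z := by
    rw [Finset.mul_sum, ← Finset.sum_add_distrib]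
    refine Finset.sum_congr rfl fun j hj ↦ h.integral_mul_eq_add_of_contDiffBump hf ?_ hx hη (m J)
    exact (Nat.le_succ J).trans (Finset.mem_Ico.1 hj).1
  have hmass : |m J * ∑ j ∈ Finset.Ico (J + 1) N, ∫ z, K j x z| ≤ C * κ * a :=
    calc _ ≤ |m J| * (C * (1 / 2) ^ J) := by
          rw [abs_mul]; gcongr; exact h.abs_sum_Ico_integral_le x J N
      _ = C * (|m J| * (1 / 2) ^ J) := by ring
      _ ≤ C * (a * κ) := by gcongr
      _ = C * κ * a := by ring
  have hmul : |b x * (f x - m J)| ≤ B * |f x - m J| := by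
    rw [abs_mul]; gcongr; exact hb.abs_le x
  have hcoeff : |(b x - b x₀) * m J| ≤ B * κ * a :=
    calc _ ≤ B * (1 / 2) ^ J * |m J| := by
          rw [abs_mul]
          gcongr
          exact (hb.abs_sub_le x x₀).trans (by gcongr)
      _ = B * (|m J| * (1 / 2) ^ J) := by ring
      _ ≤ B * (a * κ) := by gcongr
      _ = B * κ * a := by ring
  have hcoarse := h.abs_sum_range_sub_le hf hm hx
  rw [← Finset.sum_range_add_sum_Ico _ (Nat.succ_le_of_lt hN), hfine]
  simp only [abs_le] at hmass hmul hcoeff hcoarse ⊢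
  have := neg_abs_le (∑ j ∈ Finset.Ico (J + 1) N, ∫ z, K j x z * ((f z - m J) * η z))
  have := le_abs_self (∑ j ∈ Finset.Ico (J + 1) N, ∫ z, K j x z * ((f z - m J) * η z))
  constructor <;> linarith

theorem continuous_sum (h : IsDyadicKernelFamily K C R) (S : Finset ℕ) (hf : Continuous f)
    (hfb : ∃ M, ∀ y, |f y| ≤ M) : Continuous fun x ↦ ∑ j ∈ S, ∫ y, K j x y * f y :=
  hfb.elim fun _ hM ↦ continuous_finsetSum _ fun j _ ↦
    (h.isLipschitzKernel j).continuous_integral_mul hf hM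

theorem exists_setIntegral_abs_sum_le (h : IsDyadicKernelFamily K C R) :
    ∃ M, 0 ≤ M ∧ ∀ (S : Finset ℕ) (g : E → ℝ), Continuous g → (∃ B, ∀ y, |g y| ≤ B) →
      ∀ (T a : ℝ) (x : E) (r : ℝ), 0 < a → 0 < r → ∫ y in ball 0 R, g y ^ 2 ≤ T * a ^ 2 * r ^ d →
        ∫ y in ball x r, |∑ j ∈ S, ∫ z, K j y z * g z| ≤ (M * T + ω) * a * r ^ d := by
  obtain ⟨M, hM₀, hM⟩ := h.exists_setIntegral_sum_sq_le
  refine ⟨M, hM₀, fun S g hg ⟨B, hB⟩ T a x r ha hr hT ↦ ?_⟩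
  set G : E → ℝ := fun y ↦ ∑ j ∈ S, ∫ z, K j y z * g z
  have hG : Continuous G := h.continuous_sum S hg ⟨B, hB⟩
  have hsq : ∫ y in ball x r, G y ^ 2 ≤ M * (T * a ^ 2 * r ^ d) :=
    calc _ ≤ ∫ y in ball 0 R, G y ^ 2 := by
          refine setIntegral_le_setIntegral_ball measurableSet_ball (by fun_prop)
            (fun y ↦ sq_nonneg _) fun y _ hy ↦ pow_eq_zero_iff two_ne_zero |>.2 ?_
          rw [mem_ball_zero_iff, not_lt] at hy
          refine Finset.sum_eq_zero fun j _ ↦ ?_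
          simp only [(h.isLipschitzKernel j).eq_zero_left y _ hy, zero_mul, integral_zero]
      _ ≤ M * ∫ y in ball 0 R, g y ^ 2 := hM S (.ofNormedAddCommGroup g hg B hB)
      _ ≤ _ := by gcongr
  calc _ ≤ a⁻¹ * (∫ y in ball x r, G y ^ 2) + a * volume.real (ball x r) :=
        setIntegral_abs_le_inv_mul_setIntegral_sq_add isBounded_ball hG ha
    _ ≤ a⁻¹ * (M * (T * a ^ 2 * r ^ d)) + a * (r ^ d * ω) := by
        rw [measureReal_ball_eq_pow_mul x hr]
        gcongr
    _ = (M * T + ω) * a * r ^ d := by field_simp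

/-- John–Nirenberg turns the mean oscillation of `f` into the `L²` bound that almost orthogonality
needs. -/
theorem exists_setIntegral_abs_sum_contDiffBump_le (h : IsDyadicKernelFamily K C R) (A : ℝ) :
    ∃ Q, 0 ≤ Q ∧ ∀ (S : Finset ℕ) (f : E → ℝ) (a : ℝ), HasLocalBMOBound f a →
      ∀ (x₀ : E) (η : ContDiffBump x₀) (m : ℝ),
        ∫ y in ball x₀ η.rOut, |f y - m| ≤ a * η.rOut ^ d →
        ∀ r, 0 < r → η.rOut ≤ A * r →
          ∫ y in ball x₀ r, |∑ j ∈ S, ∫ z, K j y z * ((f z - m) * η z)| ≤ Q * a * r ^ d := by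
  obtain ⟨M, hM₀, hM⟩ := h.exists_setIntegral_abs_sum_le
  obtain ⟨T, hT₀, hT⟩ := MeanOscillationLE.exists_setIntegral_ball_sub_sq_le (E := E)
  refine ⟨M * (T * |A| ^ d) + ω, by positivity,
    fun S f a hf x₀ η m hm r hr hA ↦ hM S _ ?_ ?_ _ a x₀ r hf.pos hr ?_⟩
  · have := hf.uniformContinuous.continuous
    have := η.continuous
    fun_prop
  · exact exists_abs_sub_mul_contDiffBump_le η hf.bounded m
  · obtain ⟨B, hB⟩ := hf.bounded
    have hη := η.rOut_pos
    have hcont := hf.uniformContinuous.continuous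
    calc ∫ y in ball 0 R, ((f y - m) * η y) ^ 2 ≤ ∫ y in ball x₀ η.rOut, (f y - m) ^ 2 :=
          setIntegral_mul_contDiffBump_sq_le η measurableSet_ball (by fun_prop)
      _ ≤ T * a ^ 2 * η.rOut ^ d :=
          hT f B a hf.uniformContinuous hB hf.pos hf.meanOscillationLE x₀ _ m hη hm
      _ ≤ T * a ^ 2 * (|A| * r) ^ d := by
          gcongr
          exact hA.trans (by gcongr; exact le_abs_self A)
      _ = T * |A| ^ d * a ^ 2 * r ^ d := by rw [mul_pow]; ring

theorem setIntegral_ball_abs_sum_add_mul_sub_le (h : IsDyadicKernelFamily K C R)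
    (hf : Continuous f) (hfb : ∃ M, ∀ y, |f y| ≤ M) {B : ℝ} (hb : IsLipschitzBump b B R)
    {m : ℕ → ℝ} (hm : IsDyadicMeans f x₀ (4 * R + 2) a m) {J N : ℕ} (hN : J < N)
    {η : ContDiffBump x₀} (hη : η.rIn = (2 * R + 1) * (1 / 2) ^ J) {r : ℝ} (hr : 0 < r)
    (hrJ : r ≤ (1 / 2) ^ J) :
    ∫ y in ball x₀ r, |(∑ j ∈ Finset.range N, ∫ z, K j y z * f z) + b y * f y -
        ((∑ j ∈ Finset.range (J + 1), ∫ z, K j x₀ z * f z) + b x₀ * m J)| ≤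
      (C * (2 * (4 * R + 2) ^ d + 4 * κ) + C * κ + B * κ) * a * (r ^ d * ω) +
        (∫ y in ball x₀ r, |∑ j ∈ Finset.Ico (J + 1) N, ∫ z, K j y z * ((f z - m J) * η z)|) +
        B * ∫ y in ball x₀ r, |f y - m J| := by
  set A := C * (2 * (4 * R + 2) ^ d + 4 * κ) + C * κ + B * κ
  set G : E → ℝ := fun y ↦ ∑ j ∈ Finset.Ico (J + 1) N, ∫ z, K j y z * ((f z - m J) * η z)
  have hG : Continuous G := by
    have := η.continuous
    exact h.continuous_sum _ (by fun_prop) (exists_abs_sub_mul_contDiffBump_le η hfb (m J))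
  have hint {g : E → ℝ} (hg : Continuous g) : IntegrableOn g (ball x₀ r) :=
    integrableOn_of_continuous_of_isBounded hg isBounded_ball
  calc _ ≤ ∫ y in ball x₀ r, (A * a + |G y| + B * |f y - m J|) := by
        refine integral_mono_of_nonneg (.of_forall fun _ ↦ abs_nonneg _) (hint (by fun_prop))
          ((ae_restrict_mem measurableSet_ball).mono fun y hy ↦ ?_)
        exact h.abs_sum_add_mul_sub_le hf hb hm hN hη ((mem_ball_iff_norm.1 hy).le.trans hrJ)
    _ = _ := by
        rw [integral_add (hint (by fun_prop)) (hint (by fun_prop)),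
          integral_add (hint (by fun_prop)) (hint (by fun_prop)), setIntegral_const, smul_eq_mul,
          measureReal_ball_eq_pow_mul x₀ hr, integral_const_mul, mul_comm (r ^ d * ω)]

/-- On a ball of radius `r ≤ 1` the comparison constant is the coarse part of the sum, frozen at the
centre, plus the value of `b` there times the mean of `f` at scale `r`. -/
theorem exists_setIntegral_ball_abs_sub_le (h : IsDyadicKernelFamily K C R) {B : ℝ}
    (hb : IsLipschitzBump b B R) :
    ∃ Q, 0 ≤ Q ∧ ∀ (f : E → ℝ) (a : ℝ), HasLocalBMOBound f a →
      ∀ (x : E) (r : ℝ), 0 < r → r ≤ 1 → ∃ J c, ∀ N, J < N →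
        ∫ y in ball x r, |(∑ j ∈ Finset.range N, ∫ z, K j y z * f z) + b y * f y - c| ≤
          Q * a * r ^ d := by
  have hC := h.nonneg
  have hR := h.radius_pos
  have hB := hb.nonneg
  obtain ⟨Q, hQ₀, hQ⟩ := h.exists_setIntegral_abs_sum_contDiffBump_le (2 * (4 * R + 2))
  refine ⟨(C * (2 * (4 * R + 2) ^ d + 4 * κ) + C * κ + B * κ) * ω + Q +
    B * (2 * (4 * R + 2)) ^ d, by positivity, fun f a hf x₀ r hr hr₁ ↦ ?_⟩
  have ha := hf.pos
  have hcont := hf.uniformContinuous.continuous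
  obtain ⟨J, hJr, hrJ⟩ := exists_nat_pow_near_of_lt_one hr hr₁ one_half_pos one_half_lt_one
  have hJ : 0 < (1 / 2 : ℝ) ^ J := by positivity
  rw [pow_succ] at hJr
  obtain ⟨m, hm⟩ := hf.exists_isDyadicMeans x₀ (P := 4 * R + 2) (by linarith)
  let η : ContDiffBump x₀ := ⟨(2 * R + 1) * (1 / 2) ^ J, (4 * R + 2) * (1 / 2) ^ J,
    by positivity, by gcongr <;> linarith⟩
  have hη₀ := η.rOut_pos
  have hη : η.rOut ≤ 2 * (4 * R + 2) * r := by
    change (4 * R + 2) * (1 / 2) ^ J ≤ 2 * (4 * R + 2) * r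
    nlinarith
  have hrη : r ≤ η.rOut := by
    change r ≤ (4 * R + 2) * (1 / 2) ^ J
    nlinarith
  have hmJ : ∫ y in ball x₀ η.rOut, |f y - m J| ≤ a * η.rOut ^ d := hm.setIntegral_abs_sub_le J
  have hosc : ∫ y in ball x₀ r, |f y - m J| ≤ a * (2 * (4 * R + 2) * r) ^ d :=
    calc _ ≤ ∫ y in ball x₀ η.rOut, |f y - m J| :=
          setIntegral_mono_set (integrableOn_of_continuous_of_isBounded (by fun_prop)
            isBounded_ball) (.of_forall fun _ ↦ abs_nonneg _) (ball_subset_ball hrη).eventuallyLE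
      _ ≤ _ := hmJ.trans (by gcongr)
  refine ⟨J, _, fun N hN ↦ (h.setIntegral_ball_abs_sum_add_mul_sub_le hcont hf.bounded hb hm hN
    (η := η) rfl hr hrJ).trans ((add_le_add_three le_rfl (hQ _ f a hf x₀ η (m J) hmJ r hr hη)
      (mul_le_mul_of_nonneg_left hosc hB)).trans_eq ?_)⟩
  rw [mul_pow _ r]
  ring

theorem exists_setIntegral_ball_abs_le (h : IsDyadicKernelFamily K C R) {B : ℝ}
    (hb : IsLipschitzBump b B R) :
    ∃ Q, 0 ≤ Q ∧ ∀ (f : E → ℝ) (a : ℝ), HasLocalBMOBound f a → ∀ N,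
      ∫ y in ball 0 R, |(∑ j ∈ Finset.range N, ∫ z, K j y z * f z) + b y * f y| ≤ Q * a := by
  have hR := h.radius_pos
  have hR₂ : 1 < 2 * R := by linarith [h.one_le_radius]
  have hB := hb.nonneg
  obtain ⟨M, hM₀, hM⟩ := h.exists_setIntegral_abs_sum_le
  obtain ⟨T, hT₀, hT⟩ := HasLocalBMOBound.exists_setIntegral_ball_sq_le (E := E)
  refine ⟨(M * (T * 2 ^ d) + ω) * R ^ d + B * (2 * R) ^ d, by positivity, fun f a hf N ↦ ?_⟩
  have hcont := hf.uniformContinuous.continuous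
  have hbf : Continuous fun y ↦ b y * f y := hb.continuous.mul hcont
  have hG := h.continuous_sum (.range N) hcont hf.bounded
  have hint {g : E → ℝ} (hg : Continuous g) (r : ℝ) : IntegrableOn g (ball 0 r) :=
    integrableOn_of_continuous_of_isBounded hg isBounded_ball
  have hmono {g : E → ℝ} (hg : Continuous g) (hg₀ : ∀ y, 0 ≤ g y) :
      ∫ y in ball 0 R, g y ≤ ∫ y in ball 0 (2 * R), g y :=
    setIntegral_mono_set (hint hg _) (.of_forall hg₀)
      (ball_subset_ball (by linarith)).eventuallyLE
  have hsq : ∫ y in ball 0 R, f y ^ 2 ≤ T * 2 ^ d * a ^ 2 * R ^ d :=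
    calc _ ≤ T * a ^ 2 * (2 * R) ^ d :=
          (hmono (by fun_prop) fun _ ↦ sq_nonneg _).trans (hT f a hf 0 (2 * R) hR₂)
      _ = _ := by rw [mul_pow]; ring
  have hmul : ∫ y in ball 0 R, |b y * f y| ≤ B * (a * (2 * R) ^ d) :=
    calc _ ≤ ∫ y in ball 0 R, B * |f y| := by
          refine setIntegral_mono (hint hbf.abs _) (hint (by fun_prop) _) fun y ↦ ?_
          rw [abs_mul]
          exact mul_le_mul_of_nonneg_right (hb.abs_le y) (abs_nonneg _)
      _ ≤ _ := by
          rw [integral_const_mul]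
          gcongr
          exact (hmono hcont.abs fun _ ↦ abs_nonneg _).trans (hf.setIntegral_abs_le 0 _ hR₂)
  calc _ ≤ ∫ y in ball 0 R, (|∑ j ∈ Finset.range N, ∫ z, K j y z * f z| + |b y * f y|) :=
        setIntegral_mono (hint (hG.add hbf).abs _) (hint (hG.abs.add hbf.abs) _)
          fun _ ↦ abs_add_le _ _
    _ ≤ (M * (T * 2 ^ d) + ω) * a * R ^ d + B * (a * (2 * R) ^ d) := by
        rw [integral_add (hint hG.abs _) (hint hbf.abs _)]
        exact add_le_add (hM _ f hcont hf.bounded _ a 0 R hf.pos hR hsq) hmul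
    _ = _ := by ring

end IsDyadicKernelFamily

end PartialSums

section Approximation

theorem tendsto_const_mul_half_pow (C : ℝ) :
    Tendsto (fun N : ℕ ↦ C * (1 / 2 : ℝ) ^ N) atTop (𝓝 0) := by
  simpa only [mul_zero] using
    (tendsto_pow_atTop_nhds_zero_of_lt_one (by norm_num) (by norm_num)).const_mul C

theorem exists_gt_const_mul_half_pow_le (C : ℝ) {ε : ℝ} (hε : 0 < ε) (J : ℕ) :
    ∃ N, J < N ∧ C * (1 / 2 : ℝ) ^ N ≤ ε :=
  ((eventually_gt_atTop J).and
    ((tendsto_const_mul_half_pow C).eventually_le_const hε)).exists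

theorem setIntegral_abs_sub_le_add {X : Type*} [MetricSpace X] [ProperSpace X]
    [MeasurableSpace X] [BorelSpace X] {μ : Measure X} [IsFiniteMeasureOnCompacts μ] {s : Set X}
    (hs : Bornology.IsBounded s) {F G : X → ℝ} (hF : Continuous F) (hG : Continuous G) {ε : ℝ}
    (h : ∀ y, |F y - G y| ≤ ε) (c : ℝ) :
    ∫ y in s, |F y - c| ∂μ ≤ (∫ y in s, |G y - c| ∂μ) + ε * μ.real s := by
  have hint {g : X → ℝ} (hg : Continuous g) : IntegrableOn g s μ :=
    integrableOn_of_continuous_of_isBounded hg hs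
  calc ∫ y in s, |F y - c| ∂μ ≤ ∫ y in s, (|G y - c| + ε) ∂μ :=
        setIntegral_mono (hint (by fun_prop)) (hint (by fun_prop)) fun y ↦ by
          linarith [abs_sub_le (F y) (G y) c, h y]
    _ = (∫ y in s, |G y - c| ∂μ) + ε * μ.real s := by
        rw [integral_add (hint (by fun_prop)) (hint (by fun_prop)), setIntegral_const,
          smul_eq_mul, mul_comm ε]

end Approximation

section OperatorBound

variable {E : Type*} [NormedAddCommGroup E] [NormedSpace ℝ E] [FiniteDimensional ℝ E]
  [MeasureSpace E] [BorelSpace E] [(volume : Measure E).IsAddHaarMeasure]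

local notation "d" => Module.finrank ℝ E
local notation "ω" => volume.real (ball (0 : E) 1)

namespace IsKernelData

variable {χ ψ f : E → ℝ} {L M R : ℝ}

theorem continuous_scaleIntegral (h : IsKernelData χ ψ L R) (hf : Continuous f)
    (hfb : ∃ A, ∀ y, |f y| ≤ A) (hg : IsLipschitzBump (fun y ↦ χ y * f y) M R) :
    Continuous (scaleIntegral χ ψ f) := by
  obtain ⟨C, hK⟩ := h.exists_isDyadicKernelFamily
  have hunif : TendstoUniformly
      (fun N x ↦ ∑ j ∈ Finset.range N, ∫ y, dyadicPiece χ ψ j x y * f y)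
      (scaleIntegral χ ψ f) atTop := by
    refine Metric.tendstoUniformly_iff.2 fun ε hε ↦ ?_
    filter_upwards [(tendsto_const_mul_half_pow _).eventually_lt_const hε] with N hN x
    rw [Real.dist_eq]
    exact (h.abs_scaleIntegral_sub_sum_le hf hg x N).trans_lt hN
  exact hunif.continuous (.of_forall fun N ↦ hK.continuous_sum _ hf hfb)

theorem continuous_principalValue (h : IsKernelData χ ψ L R) (hd : d ≠ 0) (hf : Continuous f)
    (hfb : ∃ A, ∀ y, |f y| ≤ A) (hg : IsLipschitzBump (fun y ↦ χ y * f y) M R) :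
    Continuous (principalValue χ ψ R f) := by
  obtain ⟨_, hb⟩ := h.exists_isLipschitzBump_boundaryCoeff hd
  exact (h.continuous_scaleIntegral hf hfb hg).add (hb.continuous.mul hf)

omit [BorelSpace E] [(volume : Measure E).IsAddHaarMeasure] in
theorem hasCompactSupport_principalValue (h : IsKernelData χ ψ L R) :
    HasCompactSupport (principalValue χ ψ R f) :=
  .intro (isCompact_closedBall 0 R) fun _ hx ↦ h.principalValue_eq_zero <| by
    rw [mem_closedBall_zero_iff, not_le] at hx
    exact hx.le

theorem exists_gt_setIntegral_ball_abs_principalValue_sub_le (h : IsKernelData χ ψ L R)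
    (hd : d ≠ 0) (hf : Continuous f) (hfb : ∃ A, ∀ y, |f y| ≤ A)
    (hg : IsLipschitzBump (fun y ↦ χ y * f y) M R) (x : E) {r ε : ℝ} (hr : 0 < r) (hε : 0 < ε)
    (c : ℝ) (J : ℕ) :
    ∃ N, J < N ∧ ∫ y in ball x r, |principalValue χ ψ R f y - c| ≤
      (∫ y in ball x r, |(∑ j ∈ Finset.range N, ∫ z, dyadicPiece χ ψ j y z * f z) +
        χ y * (χ y * boundaryCoeff ψ R y) * f y - c|) + ε * r ^ d := by
  have hω : 0 < ω := measureReal_unitBall_pos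
  obtain ⟨_, hK⟩ := h.exists_isDyadicKernelFamily
  obtain ⟨_, hb⟩ := h.exists_isLipschitzBump_boundaryCoeff hd
  obtain ⟨N, hJN, hN⟩ := exists_gt_const_mul_half_pow_le
    (2 * M * L ^ 2 * (2 * R) ^ (d + 1) * ω) (div_pos hε hω) J
  have hcont : Continuous fun y ↦ (∑ j ∈ Finset.range N, ∫ z, dyadicPiece χ ψ j y z * f z) +
      χ y * (χ y * boundaryCoeff ψ R y) * f y :=
    (hK.continuous_sum (Finset.range N) hf hfb).add (hb.continuous.mul hf)
  have hdist (y : E) : |principalValue χ ψ R f y -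
      ((∑ j ∈ Finset.range N, ∫ z, dyadicPiece χ ψ j y z * f z) +
        χ y * (χ y * boundaryCoeff ψ R y) * f y)| ≤ ε / ω := by
    rw [principalValue, add_sub_add_right_eq_sub]
    exact (h.abs_scaleIntegral_sub_sum_le hf hg y N).trans hN
  have hvol : ε / ω * volume.real (ball x r) = ε * r ^ d := by
    rw [measureReal_ball_eq_pow_mul x hr]
    field_simp
  exact ⟨N, hJN, hvol ▸ setIntegral_abs_sub_le_add isBounded_ball
    (h.continuous_principalValue hd hf hfb hg) hcont hdist c⟩

theorem exists_setIntegral_ball_abs_principalValue_sub_le (h : IsKernelData χ ψ L R)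
    (hd : d ≠ 0) :
    ∃ Q, 0 ≤ Q ∧ ∀ (f : E → ℝ) (M a : ℝ), IsLipschitzBump (fun y ↦ χ y * f y) M R →
      HasLocalBMOBound f a → ∀ x r, 0 < r → r ≤ 1 →
        ∃ c, ∫ y in ball x r, |principalValue χ ψ R f y - c| ≤ Q * a * r ^ d := by
  obtain ⟨_, hK⟩ := h.exists_isDyadicKernelFamily
  obtain ⟨_, hb⟩ := h.exists_isLipschitzBump_boundaryCoeff hd
  obtain ⟨Q, hQ₀, hQ⟩ := hK.exists_setIntegral_ball_abs_sub_le hb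
  refine ⟨Q + 1, by positivity, fun f M a hg hfa x r hr hr₁ ↦ ?_⟩
  obtain ⟨J, c, hJ⟩ := hQ f a hfa x r hr hr₁
  obtain ⟨N, hJN, hN⟩ := h.exists_gt_setIntegral_ball_abs_principalValue_sub_le hd
    hfa.uniformContinuous.continuous hfa.bounded hg x hr hfa.pos c J
  exact ⟨c, by linarith [hJ N hJN]⟩

theorem exists_setIntegral_ball_abs_principalValue_le (h : IsKernelData χ ψ L R) (hd : d ≠ 0) :
    ∃ Q, 0 ≤ Q ∧ ∀ (f : E → ℝ) (M a : ℝ), IsLipschitzBump (fun y ↦ χ y * f y) M R →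
      HasLocalBMOBound f a → ∀ x r, ∫ y in ball x r, |principalValue χ ψ R f y| ≤ Q * a := by
  have hR : 0 < R := one_pos.trans_le h.one_le_radius
  obtain ⟨_, hK⟩ := h.exists_isDyadicKernelFamily
  obtain ⟨_, hb⟩ := h.exists_isLipschitzBump_boundaryCoeff hd
  obtain ⟨Q, hQ₀, hQ⟩ := hK.exists_setIntegral_ball_abs_le hb
  refine ⟨Q + R ^ d, by positivity, fun f M a hg hfa x r ↦ ?_⟩
  have hf := hfa.uniformContinuous.continuous
  obtain ⟨N, -, hN⟩ := h.exists_gt_setIntegral_ball_abs_principalValue_sub_le hd hf hfa.bounded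
    hg 0 hR hfa.pos 0 0
  simp only [sub_zero] at hN
  calc ∫ y in ball x r, |principalValue χ ψ R f y|
      ≤ ∫ y in ball 0 R, |principalValue χ ψ R f y| :=
        setIntegral_le_setIntegral_ball measurableSet_ball
          (h.continuous_principalValue hd hf hfa.bounded hg).abs (fun _ ↦ abs_nonneg _)
          fun y _ hy ↦ by
            rw [h.principalValue_eq_zero (by simpa only [mem_ball_zero_iff, not_lt] using hy),
              abs_zero]
    _ ≤ (Q + R ^ d) * a := by linarith [hQ f a hfa N]

theorem exists_hasLocalBMOBound_principalValue (h : IsKernelData χ ψ L R) (hd : d ≠ 0) :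
    ∃ Q, 0 < Q ∧ ∀ (f : E → ℝ) (M a : ℝ), IsLipschitzBump (fun y ↦ χ y * f y) M R →
      HasLocalBMOBound f a → HasLocalBMOBound (principalValue χ ψ R f) (Q * a) := by
  obtain ⟨Q₁, hQ₁₀, hQ₁⟩ := h.exists_setIntegral_ball_abs_principalValue_sub_le hd
  obtain ⟨Q₂, hQ₂₀, hQ₂⟩ := h.exists_setIntegral_ball_abs_principalValue_le hd
  refine ⟨Q₁ + Q₂ + 1, by positivity, fun f M a hg hfa ↦ ?_⟩
  have ha := hfa.pos
  have hcont := h.continuous_principalValue hd hfa.uniformContinuous.continuous hfa.bounded hg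
  have hsupp := h.hasCompactSupport_principalValue (f := f)
  have hlarge (x : E) (r : ℝ) (hr : 1 < r) :
      ∫ y in ball x r, |principalValue χ ψ R f y| ≤ (Q₁ + Q₂ + 1) * a * r ^ d :=
    calc _ ≤ Q₂ * a := hQ₂ f M a hg hfa x r
      _ ≤ (Q₁ + Q₂ + 1) * a := by gcongr; linarith
      _ ≤ (Q₁ + Q₂ + 1) * a * r ^ d :=
        le_mul_of_one_le_right (by positivity) (one_le_pow₀ hr.le)
  refine ⟨by positivity, hsupp.uniformContinuous_of_continuous hcont,
    hcont.bounded_above_of_compact_support hsupp, fun x r hr ↦ ?_, hlarge⟩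
  rcases le_or_gt r 1 with hr₁ | hr₁
  · obtain ⟨c, hc⟩ := hQ₁ f M a hg hfa x r hr hr₁
    refine ⟨c, hc.trans ?_⟩
    gcongr
    linarith
  · exact ⟨0, by simpa only [sub_zero] using hlarge x r hr₁⟩

end IsKernelData

end OperatorBound

section BMONorm

variable {n : ℕ} {f : EuclideanSpace ℝ (Fin n) → ℝ} {a : ℝ}

local notation "ω" => volume.real (ball (0 : EuclideanSpace ℝ (Fin n)) 1)

theorem setAverage_ball_eq_div (F : EuclideanSpace ℝ (Fin n) → ℝ) (x : EuclideanSpace ℝ (Fin n))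
    {r : ℝ} (hr : 0 < r) : ⨍ y in ball x r, F y = (∫ y in ball x r, F y) / (r ^ n * ω) := by
  rw [setAverage_eq, measureReal_ball_eq_pow_mul x hr, finrank_euclideanSpace_fin, smul_eq_mul,
    inv_mul_eq_div]

theorem setAverage_ball_le_iff {F : EuclideanSpace ℝ (Fin n) → ℝ} {x : EuclideanSpace ℝ (Fin n)}
    {r : ℝ} (hr : 0 < r) :
    ⨍ y in ball x r, F y ≤ a ↔ ∫ y in ball x r, F y ≤ a * ω * r ^ n := by
  have hω : 0 < ω := measureReal_unitBall_pos
  rw [setAverage_ball_eq_div F x hr, div_le_iff₀ (by positivity), mul_comm (r ^ n), mul_assoc]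

theorem setAverage_ball_abs_le {F : EuclideanSpace ℝ (Fin n) → ℝ} (hF : Continuous F) {M : ℝ}
    (hM : ∀ y, |F y| ≤ M) (x : EuclideanSpace ℝ (Fin n)) {r : ℝ} (hr : 0 < r) :
    ⨍ y in ball x r, |F y| ≤ M := by
  rw [setAverage_ball_le_iff hr]
  calc ∫ y in ball x r, |F y| ≤ ∫ _ in ball x r, M :=
        setIntegral_mono (integrableOn_of_continuous_of_isBounded hF.abs isBounded_ball)
          (integrableOn_of_continuous_of_isBounded continuous_const isBounded_ball) hM
    _ = M * ω * r ^ n := by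
        rw [setIntegral_const, measureReal_ball_eq_pow_mul x hr, finrank_euclideanSpace_fin,
          smul_eq_mul]
        ring

theorem setAverage_ball_abs_sub_setAverage_le (hf : Continuous f) {M : ℝ}
    (hM : ∀ y, |f y| ≤ M) (x : EuclideanSpace ℝ (Fin n)) {r : ℝ} (hr : 0 < r) :
    ⨍ y in ball x r, |f y - ⨍ z in ball x r, f z| ≤ 2 * M := by
  rw [setAverage_ball_le_iff hr]
  calc ∫ y in ball x r, |f y - ⨍ z in ball x r, f z|
      ≤ 2 * ∫ y in ball x r, |f y - 0| :=
        setIntegral_abs_sub_setAverage_le measure_ball_lt_top.ne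
          (integrableOn_of_continuous_of_isBounded hf isBounded_ball) 0
    _ ≤ 2 * (M * ω * r ^ n) := by
        simp only [sub_zero]
        gcongr
        exact (setAverage_ball_le_iff hr).1 (setAverage_ball_abs_le hf hM x hr)
    _ = 2 * M * ω * r ^ n := by ring

theorem setAverage_nonneg {α : Type*} [MeasurableSpace α] {μ : Measure α} {F : α → ℝ}
    (hF : ∀ y, 0 ≤ F y) (s : Set α) : 0 ≤ ⨍ y in s, F y ∂μ := by
  rw [setAverage_eq]
  exact smul_nonneg (by positivity) (integral_nonneg hF)

theorem bmoNorm_nonneg (f : EuclideanSpace ℝ (Fin n) → ℝ) : 0 ≤ bmoNorm n f :=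
  add_nonneg (Real.iSup_nonneg fun _ ↦ setAverage_nonneg (fun _ ↦ abs_nonneg _) _)
    (Real.iSup_nonneg fun _ ↦ setAverage_nonneg (fun _ ↦ abs_nonneg _) _)

theorem setAverage_abs_sub_setAverage_le_bmoNorm (hf : Continuous f)
    (hfb : ∃ M, ∀ y, |f y| ≤ M) (x : EuclideanSpace ℝ (Fin n)) {r : ℝ} (hr : 0 < r)
    (hr₁ : r ≤ 1) : ⨍ y in ball x r, |f y - ⨍ z in ball x r, f z| ≤ bmoNorm n f := by
  obtain ⟨M, hM⟩ := hfb
  refine le_add_of_le_of_nonneg (le_ciSup (f := fun p : {p : EuclideanSpace ℝ (Fin n) × ℝ //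
    0 < p.2 ∧ p.2 ≤ 1} ↦ ⨍ y in ball p.1.1 p.1.2, |f y - ⨍ z in ball p.1.1 p.1.2, f z|) ?_
    ⟨(x, r), hr, hr₁⟩) (Real.iSup_nonneg fun _ ↦ setAverage_nonneg (fun _ ↦ abs_nonneg _) _)
  exact ⟨2 * M, forall_mem_range.2 fun p ↦
    setAverage_ball_abs_sub_setAverage_le hf hM p.1.1 p.2.1⟩

theorem setAverage_abs_le_bmoNorm (hf : Continuous f) (hfb : ∃ M, ∀ y, |f y| ≤ M)
    (x : EuclideanSpace ℝ (Fin n)) {r : ℝ} (hr : 1 < r) :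
    ⨍ y in ball x r, |f y| ≤ bmoNorm n f := by
  obtain ⟨M, hM⟩ := hfb
  refine le_add_of_nonneg_of_le (Real.iSup_nonneg fun _ ↦
    setAverage_nonneg (fun _ ↦ abs_nonneg _) _) (le_ciSup (f := fun p :
      {p : EuclideanSpace ℝ (Fin n) × ℝ // 1 < p.2} ↦ ⨍ y in ball p.1.1 p.1.2, |f y|) ?_
    ⟨(x, r), hr⟩)
  exact ⟨M, forall_mem_range.2 fun p ↦
    setAverage_ball_abs_le hf hM p.1.1 (one_pos.trans p.2)⟩

theorem bmoNorm_le_add {A B : ℝ}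
    (hA : ∀ x r, 0 < r → r ≤ 1 → ⨍ y in ball x r, |f y - ⨍ z in ball x r, f z| ≤ A)
    (hB : ∀ x r, 1 < r → ⨍ y in ball x r, |f y| ≤ B) : bmoNorm n f ≤ A + B := by
  have : Nonempty {p : EuclideanSpace ℝ (Fin n) × ℝ // 0 < p.2 ∧ p.2 ≤ 1} :=
    ⟨(0, 1), one_pos, le_rfl⟩
  have : Nonempty {p : EuclideanSpace ℝ (Fin n) × ℝ // 1 < p.2} := ⟨(0, 2), one_lt_two⟩
  exact add_le_add (ciSup_le fun p ↦ hA _ _ p.2.1 p.2.2) (ciSup_le fun p ↦ hB _ _ p.2)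

theorem hasLocalBMOBound_of_bmoNorm_mul_le (hf : UniformContinuous f)
    (hfb : ∃ M, ∀ y, |f y| ≤ M) (ha : 0 < a) (h : bmoNorm n f * ω ≤ a) :
    HasLocalBMOBound f a := by
  have hlarge (x : EuclideanSpace ℝ (Fin n)) (r : ℝ) (hr : 1 < r) :
      ∫ y in ball x r, |f y| ≤ a * r ^ n :=
    ((setAverage_ball_le_iff (one_pos.trans hr)).1
      (setAverage_abs_le_bmoNorm hf.continuous hfb x hr)).trans (by gcongr)
  refine ⟨ha, hf, hfb, fun x r hr ↦ ?_, by simpa only [finrank_euclideanSpace_fin] using hlarge⟩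
  rw [finrank_euclideanSpace_fin]
  rcases le_or_gt r 1 with hr₁ | hr₁
  · exact ⟨_, ((setAverage_ball_le_iff hr).1
      (setAverage_abs_sub_setAverage_le_bmoNorm hf.continuous hfb x hr hr₁)).trans (by gcongr)⟩
  · exact ⟨0, by simpa only [sub_zero] using hlarge x r hr₁⟩

theorem HasLocalBMOBound.bmoNorm_le (h : HasLocalBMOBound f (a * ω)) : bmoNorm n f ≤ 3 * a := by
  have hsmall (x : EuclideanSpace ℝ (Fin n)) (r : ℝ) (hr : 0 < r) (_ : r ≤ 1) :
      ⨍ y in ball x r, |f y - ⨍ z in ball x r, f z| ≤ 2 * a := by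
    obtain ⟨m, hm⟩ := h.meanOscillationLE x r hr
    rw [finrank_euclideanSpace_fin] at hm
    rw [setAverage_ball_le_iff hr]
    linarith [setIntegral_abs_sub_setAverage_le measure_ball_lt_top.ne
      (integrableOn_of_continuous_of_isBounded h.uniformContinuous.continuous
        (isBounded_ball (x := x) (r := r)) (μ := volume)) m]
  refine (bmoNorm_le_add hsmall fun x r hr ↦ ?_).trans_eq (by ring : 2 * a + a = 3 * a)
  rw [setAverage_ball_le_iff (one_pos.trans hr)]
  simpa only [finrank_euclideanSpace_fin] using h.setIntegral_abs_le x r hr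

theorem bmoNorm_le_of_hasLocalBMOBound {g : EuclideanSpace ℝ (Fin n) → ℝ} {Q : ℝ} (hQ : 0 < Q)
    (hf : UniformContinuous f) (hfb : ∃ M, ∀ y, |f y| ≤ M)
    (h : ∀ a, HasLocalBMOBound f a → HasLocalBMOBound g (Q * a)) :
    bmoNorm n g ≤ 3 * Q * bmoNorm n f := by
  have hω : 0 < ω := measureReal_unitBall_pos
  have hnorm := bmoNorm_nonneg f
  refine le_of_forall_pos_le_add fun δ hδ ↦ ?_
  have hfa : HasLocalBMOBound f ((bmoNorm n f + δ / (3 * Q)) * ω) :=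
    hasLocalBMOBound_of_bmoNorm_mul_le hf hfb (by positivity)
      (by gcongr; exact le_add_of_nonneg_right (by positivity))
  have hga := h _ hfa
  rw [← mul_assoc] at hga
  refine hga.bmoNorm_le.trans_eq ?_
  field_simp

end BMONorm

theorem singular_integral_bounded_on_bmo_general {n : ℕ} (hn : n ≠ 0)
    {χ ψ : EuclideanSpace ℝ (Fin n) → ℝ} {Kχ Kψ : NNReal}
    (hχ : LipschitzWith Kχ χ) (hχc : HasCompactSupport χ)
    (hψ : LipschitzWith Kψ ψ) (hψc : HasCompactSupport ψ) (hψ₀ : ∫ x, ψ x = 0)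
    {H : EuclideanSpace ℝ (Fin n) → EuclideanSpace ℝ (Fin n) → ℝ}
    (hH : ∀ x y, x ≠ y → H x y =
      ∫ s in Ioo (0 : ℝ) 1, χ x * χ y * ψ (y + s⁻¹ • (x - y)) * (s ^ (n + 1))⁻¹) :
    ∃ C : ℝ, ∀ f : EuclideanSpace ℝ (Fin n) → ℝ, (∃ M : ℝ, ∀ x, |f x| ≤ M) →
      (∃ K : ℝ, ∀ x y, |f x - f y| ≤ K * ‖x - y‖) →
      ∃ Tf : EuclideanSpace ℝ (Fin n) → ℝ,
        (∀ x, Tendsto (fun ε : ℝ ↦ ∫ y in {y | ε < ‖x - y‖}, H x y * f y) (𝓝[>] 0)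
          (𝓝 (Tf x))) ∧
        bmoNorm n Tf ≤ C * bmoNorm n f := by
  obtain ⟨L, R, h⟩ := exists_isKernelData hχ hχc hψ hψc hψ₀
  have hd : Module.finrank ℝ (EuclideanSpace ℝ (Fin n)) ≠ 0 := by
    rwa [finrank_euclideanSpace_fin]
  obtain ⟨Q, hQ₀, hQ⟩ := h.exists_hasLocalBMOBound_principalValue hd
  refine ⟨3 * Q, fun f ⟨M, hM⟩ ⟨K, hK⟩ ↦ ?_⟩
  have hf : LipschitzWith K.toNNReal f := .of_dist_le' fun x y ↦ by
    rw [Real.dist_eq, dist_eq_norm]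
    exact hK x y
  have hg := h.cutoff.mul hM K.toNNReal.2 fun x y ↦ by
    rw [← Real.dist_eq, ← dist_eq_norm]
    exact hf.dist_le_mul x y
  refine ⟨principalValue χ ψ R f, h.tendsto_setIntegral_kernel_mul hd (fun x y hxy ↦ ?_)
    hf.continuous hg, bmoNorm_le_of_hasLocalBMOBound hQ₀ hf.uniformContinuous ⟨M, hM⟩
    fun a ↦ hQ f _ a hg⟩
  simp only [hH x y hxy, kernelDensity, finrank_euclideanSpace_fin]

/-- The singular integral operator with kernel
`H(x,y) = ∫₀¹ χ(x) χ(y) ψ(y + (x−y)/s) s^{−(n+1)} ds` is well defined as a principal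
value on bounded Lipschitz functions and is bounded in the `bmo` norm. -/
theorem singular_integral_bounded_on_bmo
    (n : ℕ) (hn : 2 ≤ n)
    (Ω B : Set (EuclideanSpace ℝ (Fin n)))
    (hΩo : IsOpen Ω) (hΩb : Bornology.IsBounded Ω)
    (hBball : ∃ c r, 0 < r ∧ B = Metric.ball c r)
    (hBΩ : B ⊆ Ω)
    (hstar : ∀ x ∈ Ω, ∀ y ∈ B, segment ℝ x y ⊆ Ω)
    (Bt : Set (EuclideanSpace ℝ (Fin n)))
    (hBt : ∃ c r, 0 < r ∧ Bt = Metric.ball c r)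
    (hΩBt : closure Ω ⊆ Bt)
    (χ : EuclideanSpace ℝ (Fin n) → ℝ)
    (hχ : ContDiff ℝ (⊤ : ℕ∞) χ) (hχc : HasCompactSupport χ)
    (hχsupp : tsupport χ ⊆ Bt) (hχ1 : ∀ x ∈ Ω, χ x = 1)
    (ψ : EuclideanSpace ℝ (Fin n) → ℝ)
    (hψ : ContDiff ℝ (⊤ : ℕ∞) ψ) (hψc : HasCompactSupport ψ)
    (hψsupp : tsupport ψ ⊆ B) (hψint : ∫ x, ψ x = 0)
    (H : EuclideanSpace ℝ (Fin n) → EuclideanSpace ℝ (Fin n) → ℝ)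
    (hH : ∀ x y, x ≠ y → H x y =
      ∫ s in Set.Ioo (0:ℝ) 1, χ x * χ y * ψ (y + s⁻¹ • (x - y)) * (s ^ (n + 1))⁻¹) :
    ∃ C : ℝ,
      ∀ f : EuclideanSpace ℝ (Fin n) → ℝ,
        (∃ M : ℝ, ∀ x, |f x| ≤ M) →
        (∃ K : ℝ, ∀ x y, |f x - f y| ≤ K * ‖x - y‖) →
        ∃ Tf : EuclideanSpace ℝ (Fin n) → ℝ,
          (∀ x : EuclideanSpace ℝ (Fin n),
            Tendsto (fun ε : ℝ =>
                ∫ y in {y : EuclideanSpace ℝ (Fin n) | ε < ‖x - y‖}, H x y * f y)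
              (𝓝[>] (0:ℝ)) (𝓝 (Tf x))) ∧
          bmoNorm n Tf ≤ C * bmoNorm n f := by
  obtain ⟨_, hχL⟩ := ContDiff.lipschitzWith_of_hasCompactSupport hχc hχ (by simp)
  obtain ⟨_, hψL⟩ := ContDiff.lipschitzWith_of_hasCompactSupport hψc hψ (by simp)
  exact singular_integral_bounded_on_bmo_general (by omega) hχL hχc hψL hψc hψint hH
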